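/- arXiv:1203.6495 — 4 statements merged into one kernel-verified Lean document; each statement's English description precedes it below -/
import Mathlib

section
/- Let U be a finite-dimensional complex vector space and q a nondegenerate symmetric bilinear form on U, with induced isomorphism q̃ : U → U* and dual form q∨ on U* defined by q∨(f,g) = q(q̃⁻¹f, q̃⁻¹g). Then for every subspace S ⊆ U, the corank of the restriction of q to S equals the corank of the restriction of q∨ to the annihilator Ann S = {f ∈ U* : f(s) = 0 for all s ∈ S}. -/
open Module

/-- The radical of the restriction of a bilinear form `B` to a subspace `S`:
`{x ∈ S | ∀ y ∈ S, B x y = 0}`.  The corank of `B|_S` is the dimension of this space. -/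
noncomputable def restrictedRadical {U : Type*} [AddCommGroup U] [Module ℂ U]
    (B : LinearMap.BilinForm ℂ U) (S : Submodule ℂ U) : Submodule ℂ U :=
  S ⊓ ⨅ y ∈ S, LinearMap.ker (B.flip y)

/-!
Let `B∨` be the form on the dual with `B∨ (B x) (B y) = B x y`. Since `B` is onto the dual,
`B∨ f (B y) = f y` for every functional `f`, so `B y` is right orthogonal to `Ann S` exactly when
`y` lies in the double annihilator of `S`, that is, in `S`. Hence the right radical of `B∨` on
`Ann S` is `Ann S ⊓ B(S)`, the image under `B` of the left radical `S ⊓ B⁻¹(Ann S)` of `B` on `S`.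
The left and right radicals of a form on a finite-dimensional space have the same dimension.
-/

section Radical

variable {R M : Type*} [CommSemiring R] [AddCommMonoid M] [Module R M]

theorem map_subtype_ker_restrict (B : LinearMap.BilinForm R M) (S : Submodule R M) :
    (LinearMap.ker (B.restrict S)).map S.subtype = S ⊓ S.dualAnnihilator.comap B := by
  ext x
  simp [LinearMap.ext_iff, Submodule.mem_dualAnnihilator, and_comm]

theorem map_subtype_ker_flip_restrict (B : LinearMap.BilinForm R M) (S : Submodule R M) :
    (LinearMap.ker (B.restrict S).flip).map S.subtype =
      S ⊓ S.dualAnnihilator.comap B.flip :=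
  map_subtype_ker_restrict B.flip S

theorem flip_comp_eq_dual_eval {B : LinearMap.BilinForm R M}
    {Bdual : LinearMap.BilinForm R (Dual R M)} (hB : Function.Surjective B)
    (hBdual : ∀ x y : M, Bdual (B x) (B y) = B x y) :
    Bdual.flip ∘ₗ B = Dual.eval R M := by
  ext y f
  obtain ⟨x, rfl⟩ := hB f
  exact hBdual x y

end Radical

theorem restrictedRadical_eq_map_subtype_ker {U : Type*} [AddCommGroup U] [Module ℂ U]
    (B : LinearMap.BilinForm ℂ U) (S : Submodule ℂ U) :
    restrictedRadical B S = (LinearMap.ker (B.restrict S)).map S.subtype := by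
  ext x
  simp [restrictedRadical, LinearMap.ext_iff, and_comm]

theorem finrank_restrictedRadical {U : Type*} [AddCommGroup U] [Module ℂ U]
    (B : LinearMap.BilinForm ℂ U) (S : Submodule ℂ U) :
    finrank ℂ (restrictedRadical B S) = finrank ℂ (LinearMap.ker (B.restrict S)) := by
  rw [restrictedRadical_eq_map_subtype_ker, Submodule.finrank_map_subtype_eq]

section Field

variable {K V : Type*} [Field K] [AddCommGroup V] [Module K V]

theorem comap_flip_dualAnnihilator_dualAnnihilator {B : LinearMap.BilinForm K V}
    {Bdual : LinearMap.BilinForm K (Dual K V)} (hB : Function.Surjective B)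
    (hBdual : ∀ x y : V, Bdual (B x) (B y) = B x y) (S : Submodule K V) :
    S.dualAnnihilator.dualAnnihilator.comap Bdual.flip = S.map B := by
  have hcomap : (S.dualAnnihilator.dualAnnihilator.comap Bdual.flip).comap B = S := by
    rw [← Submodule.comap_comp, flip_comp_eq_dual_eval hB hBdual,
      Subspace.comap_dualAnnihilator_dualAnnihilator]
  rw [← Submodule.map_comap_eq_of_surjective hB (Submodule.comap _ _), hcomap]

theorem map_left_radical_eq_right_radical_dualAnnihilator {B : LinearMap.BilinForm K V}
    {Bdual : LinearMap.BilinForm K (Dual K V)} (hB : Function.Surjective B)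
    (hBdual : ∀ x y : V, Bdual (B x) (B y) = B x y) (S : Submodule K V) :
    ((LinearMap.ker (B.restrict S)).map S.subtype).map B =
      (LinearMap.ker (Bdual.restrict S.dualAnnihilator).flip).map S.dualAnnihilator.subtype := by
  rw [map_subtype_ker_restrict, map_subtype_ker_flip_restrict,
    comap_flip_dualAnnihilator_dualAnnihilator hB hBdual,
    inf_comm S.dualAnnihilator, Submodule.map_inf_eq_map_inf_comap]

variable [FiniteDimensional K V]

theorem finrank_ker_flip (B : LinearMap.BilinForm K V) :
    finrank K (LinearMap.ker B.flip) = finrank K (LinearMap.ker B) := by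
  have hflip := Subspace.finrank_add_finrank_dualCoannihilator_eq (LinearMap.range B)
  rw [LinearMap.dualCoannihilator_range_eq_ker_flip] at hflip
  exact Nat.add_left_cancel (hflip.trans B.finrank_range_add_finrank_ker.symm)

theorem stmt_0_general {B : LinearMap.BilinForm K V} (hnd : B.Nondegenerate)
    {Bdual : LinearMap.BilinForm K (Dual K V)}
    (hBdual : ∀ x y : V, Bdual (B x) (B y) = B x y) (S : Submodule K V) :
    finrank K (LinearMap.ker (B.restrict S)) =
      finrank K (LinearMap.ker (Bdual.restrict S.dualAnnihilator)) := by
  have hinj : Function.Injective B := LinearMap.ker_eq_bot.mp hnd.ker_eq_bot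
  have hsurj : Function.Surjective B := (B.toDual hnd).surjective
  calc finrank K (LinearMap.ker (B.restrict S))
    _ = finrank K (((LinearMap.ker (B.restrict S)).map S.subtype).map B) := by
      rw [← (Submodule.equivMapOfInjective B hinj _).finrank_eq, Submodule.finrank_map_subtype_eq]
    _ = finrank K (LinearMap.ker (Bdual.restrict S.dualAnnihilator).flip) := by
      rw [map_left_radical_eq_right_radical_dualAnnihilator hsurj hBdual,
        Submodule.finrank_map_subtype_eq]
    _ = finrank K (LinearMap.ker (Bdual.restrict S.dualAnnihilator)) :=
      finrank_ker_flip (V := S.dualAnnihilator) _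

end Field

/-- Let `U` be a finite-dimensional complex vector space, `B` a nondegenerate
symmetric bilinear form on `U` and `B∨` the dual form on `U*`, characterized by
`B∨(q̃ x, q̃ y) = B(x,y)` where `q̃ : U → U*` is the isomorphism induced by `B`.  Then for every
subspace `S ⊆ U` the corank of `B|_S` equals the corank of `B∨` restricted to the annihilator
of `S`. -/
theorem stmt_0 {U : Type*} [AddCommGroup U] [Module ℂ U] [FiniteDimensional ℂ U]
    (B : LinearMap.BilinForm ℂ U) (hsymm : B.IsSymm) (hnd : B.Nondegenerate)
    (Bdual : LinearMap.BilinForm ℂ (Module.Dual ℂ U))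
    (hBdual : ∀ x y : U, Bdual (B x) (B y) = B x y)
    (S : Submodule ℂ U) :
    finrank ℂ (restrictedRadical B S) =
      finrank ℂ (restrictedRadical Bdual (Submodule.dualAnnihilator S)) := by
  rw [finrank_restrictedRadical, finrank_restrictedRadical]
  exact stmt_0_general hnd hBdual S
end

section
/- Let M* be a symmetric d×d complex matrix whose kernel is the line ℂe spanned by a nonzero vector e ∈ ℂ^d, and let q̄* be the nondegenerate symmetric form induced by M* on ℂ^d/ℂe. Let L be a complex vector subspace of the space of symmetric d×d matrices such that eᵀMe = 0 for every M ∈ L. Define Φ₂ : L → ℂ by letting Φ₂(M) be the coefficient of t² in det(M* + tM); then Φ₂ is a quadratic form on L. Let T = {x ∈ ℂ^d : eᵀMx = 0 for all M ∈ L} (note e ∈ T). Then the rank of the quadratic form Φ₂ equals (d − dim T) − corank(q̄* restricted to T/ℂe). -/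
/-!
For `M ∈ L` the functional `x ↦ eᵀMx` kills `e`, so it is `q̄*(g M, ·)` for a unique
`g M ∈ ℂ^d/ℂe`, and `g` is linear. Since `T/ℂe` is the orthogonal complement of `G = range g`,
everything follows from the identity `Φ₂(M) = -c · q̄*(g M, g M)` with `c ≠ 0`: the rank of `Φ₂` is
then `dim G - dim (G ∩ G^⊥)`, where `dim G = d - dim T`, and `G ∩ G^⊥` is also the radical of `q̄*`
on `G^⊥`.

For the identity, let `y` lift `g M`, that is, `M* y = M e`. Then `(M* + tM)(e - ty) = -t² M y`, so
`det(M* + tM) (e - ty) = -t² adj(M* + tM) M y`. Hence `t²` divides the determinant, and dividing by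
it and setting `t = 0` gives `Φ₂(M) e = -adj(M*) M y`. Finally `adj(M*) = c · e eᵀ` with `c ≠ 0`
because `M*` is symmetric with kernel the line `ℂe`.
-/

open Polynomial Matrix Module

/-- The polynomial `det(M* + t·M)` in the variable `t`. -/
noncomputable def detPoly {d : ℕ} (Mstar M : Matrix (Fin d) (Fin d) ℂ) : ℂ[X] :=
  (Mstar.map (C : ℂ → ℂ[X]) + (X : ℂ[X]) • M.map (C : ℂ → ℂ[X])).det

/-- The linear functional `x ↦ eᵀ M x` on `ℂ^d`. -/
noncomputable def dotMulLin {d : ℕ} (e : Fin d → ℂ) (M : Matrix (Fin d) (Fin d) ℂ) :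
    (Fin d → ℂ) →ₗ[ℂ] ℂ where
  toFun x := e ⬝ᵥ M.mulVec x
  map_add' x y := by simp [Matrix.mulVec_add, dotProduct_add]
  map_smul' c x := by simp [Matrix.mulVec_smul, dotProduct_smul]

section BilinForm

variable {R V U W : Type*} [CommRing R] [AddCommGroup V] [Module R V] [AddCommGroup U] [Module R U]
  [AddCommGroup W] [Module R W] {B : LinearMap.BilinForm R U}

theorem ker_comp_self_eq_comap_orthogonal_range (hB : B.IsRefl) (g : V →ₗ[R] U) :
    LinearMap.ker (B.comp g g) = (B.orthogonal (LinearMap.range g)).comap g := by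
  ext v
  simp [LinearMap.ext_iff, LinearMap.BilinForm.mem_orthogonal_iff, hB.eq_iff (x := g v)]

theorem map_dualCoannihilator_eq_orthogonal_range {f : V →ₗ[R] U} (hf : Function.Surjective f)
    {φ : W →ₗ[R] Dual R V} {g : W →ₗ[R] U} (hg : ∀ w x, B (g w) (f x) = φ w x) :
    (LinearMap.range φ).dualCoannihilator.map f = B.orthogonal (LinearMap.range g) := by
  have hcomap : (LinearMap.range φ).dualCoannihilator =
      (B.orthogonal (LinearMap.range g)).comap f := by
    ext x
    simp [LinearMap.ext_iff, LinearMap.BilinForm.mem_orthogonal_iff, hg]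
  rw [hcomap, Submodule.map_comap_eq_of_surjective hf]

theorem restrictedRadical_eq_inf_orthogonal {U : Type*} [AddCommGroup U] [Module ℂ U]
    {B : LinearMap.BilinForm ℂ U} (hB : B.IsRefl) (N : Submodule ℂ U) :
    restrictedRadical B N = N ⊓ B.orthogonal N := by
  ext x
  simp [restrictedRadical, LinearMap.BilinForm.mem_orthogonal_iff, hB.eq_iff (x := x)]

end BilinForm

section Finrank

variable {K V U W : Type*} [Field K] [AddCommGroup V] [Module K V] [AddCommGroup U] [Module K U]
  [AddCommGroup W] [Module K W]

theorem finrank_map_add_finrank_ker_of_le [FiniteDimensional K V] (f : V →ₗ[K] U)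
    {p : Submodule K V} (h : LinearMap.ker f ≤ p) :
    finrank K (p.map f) + finrank K (LinearMap.ker f) = finrank K p := by
  have := LinearMap.finrank_range_add_finrank_ker (f.domRestrict p)
  rwa [LinearMap.range_domRestrict, LinearMap.ker_domRestrict,
    (Submodule.comapSubtypeEquivOfLe h).finrank_eq] at this

theorem finrank_quotient_sub_finrank_map_mkQ [FiniteDimensional K V] {S T : Submodule K V}
    (h : S ≤ T) :
    finrank K (V ⧸ S) - finrank K (T.map S.mkQ) = finrank K V - finrank K T := by
  have hT := finrank_map_add_finrank_ker_of_le S.mkQ (p := T) (by rwa [Submodule.ker_mkQ])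
  have hV := S.finrank_quotient_add_finrank
  rw [Submodule.ker_mkQ] at hT
  omega

theorem finrank_range_comp_self_add_finrank_inf_orthogonal [FiniteDimensional K V]
    {B : LinearMap.BilinForm K U} (hB : B.IsRefl) (g : V →ₗ[K] U) :
    finrank K (LinearMap.range (B.comp g g)) +
        finrank K ↥(LinearMap.range g ⊓ B.orthogonal (LinearMap.range g)) =
      finrank K (LinearMap.range g) := by
  have hF := LinearMap.finrank_range_add_finrank_ker (B.comp g g)
  have hg := LinearMap.finrank_range_add_finrank_ker g
  have hmap := finrank_map_add_finrank_ker_of_le g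
    (LinearMap.ker_le_comap (p := B.orthogonal (LinearMap.range g)) g)
  rw [Submodule.map_comap_eq, ← ker_comp_self_eq_comap_orthogonal_range hB] at hmap
  omega

theorem finrank_range_comp_self_eq_sub_restrictedRadical {V U : Type*} [AddCommGroup V]
    [Module ℂ V] [FiniteDimensional ℂ V] [AddCommGroup U] [Module ℂ U] [FiniteDimensional ℂ U]
    {B : LinearMap.BilinForm ℂ U} (hBnd : B.Nondegenerate) (hB : B.IsRefl) (g : V →ₗ[ℂ] U) :
    finrank ℂ (LinearMap.range (B.comp g g)) =
      (finrank ℂ U - finrank ℂ (B.orthogonal (LinearMap.range g))) -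
        finrank ℂ (restrictedRadical B (B.orthogonal (LinearMap.range g))) := by
  have hrank := finrank_range_comp_self_add_finrank_inf_orthogonal hB g
  have hle := (LinearMap.range g).finrank_le
  rw [restrictedRadical_eq_inf_orthogonal hB, LinearMap.BilinForm.orthogonal_orthogonal hBnd hB,
    inf_comm, LinearMap.BilinForm.finrank_orthogonal hBnd]
  omega

theorem exists_linearMap_apply_mkQ_eq [FiniteDimensional K V] {S : Submodule K V}
    {B : LinearMap.BilinForm K (V ⧸ S)} (hB : B.Nondegenerate) {φ : W →ₗ[K] Dual K V}
    (hφ : S ≤ (LinearMap.range φ).dualCoannihilator) :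
    ∃ g : W →ₗ[K] V ⧸ S, ∀ w x, B (g w) (S.mkQ x) = φ w x := by
  have hmem : ∀ w, φ w ∈ S.dualAnnihilator := fun w =>
    (Submodule.mem_dualAnnihilator _).2 fun x hx =>
      (Submodule.mem_dualCoannihilator x).1 (hφ hx) _ (LinearMap.mem_range_self φ w)
  exact ⟨(B.toDual hB).symm.toLinearMap ∘ₗ S.dualQuotEquivDualAnnihilator.symm.toLinearMap ∘ₗ
      φ.codRestrict _ hmem,
    fun _ _ => LinearMap.BilinForm.apply_toDual_symm_apply (hB := hB) _ _⟩

end Finrank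

section Adjugate

variable {n R : Type*} [Fintype n] [CommRing R] {A : Matrix n n R} {e f : n → R}

theorem dotProduct_mulVec_comm (hA : A.IsSymm) (x y : n → R) : x ⬝ᵥ A *ᵥ y = y ⬝ᵥ A *ᵥ x := by
  simpa only [hA.eq] using dotProduct_transpose_mulVec A x y

theorem mulVec_eq_mulVec_of_forall_dotProduct {M : Matrix n n R} (hA : A.IsSymm) (hM : M.IsSymm)
    {x y : n → R} (h : ∀ z, x ⬝ᵥ A *ᵥ z = y ⬝ᵥ M *ᵥ z) : A *ᵥ x = M *ᵥ y :=
  dotProduct_eq _ _ fun z => by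
    rw [dotProduct_comm, dotProduct_mulVec_comm hA, h, dotProduct_mulVec_comm hM, dotProduct_comm]

theorem mulVec_eq_zero_of_ker_eq_span (hker : LinearMap.ker A.mulVecLin = Submodule.span R {e}) :
    A *ᵥ e = 0 :=
  LinearMap.mem_ker.1 (hker ▸ Submodule.mem_span_singleton_self e)

variable [IsDomain R]

theorem exists_eq_smul_vecMulVec_of_mul_eq_zero (he : e ≠ 0)
    (hker : LinearMap.ker A.mulVecLin = Submodule.span R {e})
    (hker' : LinearMap.ker A.vecMulLinear = Submodule.span R {f})
    {N : Matrix n n R} (hAN : A * N = 0) (hNA : N * A = 0) :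
    ∃ c : R, N = c • vecMulVec e f := by
  have hcol : ∀ k, ∃ a : R, a • e = N.col k := fun k => by
    rw [← Submodule.mem_span_singleton, ← hker]
    ext i
    exact congrFun (congrFun hAN i) k
  choose a ha using hcol
  have hN : N = vecMulVec e a := by
    ext i k
    rw [vecMulVec_apply, mul_comm]
    exact (congrFun (ha k) i).symm
  have haA : a ᵥ* A = 0 := by
    rw [hN, vecMulVec_mul, vecMulVec_eq_zero] at hNA
    exact hNA.resolve_left he
  obtain ⟨c, rfl⟩ : ∃ c : R, c • f = a := by
    rw [← Submodule.mem_span_singleton, ← hker']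
    exact haA
  exact ⟨c, by rw [hN, vecMulVec_smul]⟩

variable [DecidableEq n]

theorem adjugate_apply_ne_zero_of_ker_eq_span
    (hker : LinearMap.ker A.mulVecLin = Submodule.span R {e}) (hf : f ᵥ* A = 0) {i j : n}
    (hej : e j ≠ 0) (hfi : f i ≠ 0) : A.adjugate j i ≠ 0 := by
  rw [adjugate_apply]
  refine fun hdet => ?_
  obtain ⟨x, hx, hx0⟩ := exists_mulVec_eq_zero_iff.2 hdet
  rw [updateRow_mulVec, single_one_dotProduct] at hx0
  have hxj : x j = 0 := by simpa using congrFun hx0 i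
  have hoff : ∀ k ≠ i, (A *ᵥ x) k = 0 := fun k hk => by simpa [hk] using congrFun hx0 k
  have hAxi : f i * (A *ᵥ x) i = 0 := calc
    f i * (A *ᵥ x) i = f ⬝ᵥ A *ᵥ x := by
      rw [dotProduct, Fintype.sum_eq_single i fun k hk => by rw [hoff k hk, mul_zero]]
    _ = 0 := by rw [dotProduct_mulVec, hf, zero_dotProduct]
  have hAx : A *ᵥ x = 0 := funext fun k => by
    obtain rfl | hk := eq_or_ne k i
    exacts [(mul_eq_zero.1 hAxi).resolve_left hfi, hoff k hk]
  obtain ⟨b, rfl⟩ : ∃ b : R, b • e = x := by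
    rw [← Submodule.mem_span_singleton, ← hker]
    exact hAx
  have hb : b = 0 := (mul_eq_zero.1 hxj).resolve_right hej
  exact hx (by rw [hb, zero_smul])

theorem exists_adjugate_eq_smul_vecMulVec (he : e ≠ 0) (hf : f ≠ 0)
    (hker : LinearMap.ker A.mulVecLin = Submodule.span R {e})
    (hker' : LinearMap.ker A.vecMulLinear = Submodule.span R {f}) :
    ∃ c : R, c ≠ 0 ∧ A.adjugate = c • vecMulVec e f := by
  have hdet : A.det = 0 :=
    exists_mulVec_eq_zero_iff.1 ⟨e, he, mulVec_eq_zero_of_ker_eq_span hker⟩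
  obtain ⟨c, hc⟩ := exists_eq_smul_vecMulVec_of_mul_eq_zero he hker hker'
    (by rw [mul_adjugate, hdet, zero_smul] : A * A.adjugate = 0)
    (by rw [adjugate_mul, hdet, zero_smul])
  refine ⟨c, ?_, hc⟩
  rintro rfl
  obtain ⟨j, hj⟩ := Function.ne_iff.1 he
  obtain ⟨i, hi⟩ := Function.ne_iff.1 hf
  have hfA : f ᵥ* A = 0 := LinearMap.mem_ker.1 (hker' ▸ Submodule.mem_span_singleton_self f)
  exact adjugate_apply_ne_zero_of_ker_eq_span hker hfA hj hi (by rw [hc, zero_smul]; rfl)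

end Adjugate

section Pencil

variable {n R : Type*} [CommRing R]

/-- The matrix pencil `A + tM`, with polynomial entries in the variable `t`; its determinant is
`detPoly`. -/
noncomputable def pencil (A M : Matrix n n R) : Matrix n n R[X] :=
  A.map C + (X : R[X]) • M.map C

theorem mapMatrix_constantCoeff_pencil [Fintype n] [DecidableEq n] (A M : Matrix n n R) :
    constantCoeff.mapMatrix (pencil A M) = A := by
  ext i j
  simp [pencil]

variable [Fintype n] {A M : Matrix n n R} {e y : n → R}

theorem map_C_mulVec (A : Matrix n n R) (x : n → R) : A.map C *ᵥ (C ∘ x) = C ∘ (A *ᵥ x) :=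
  funext fun i => (C.map_mulVec A x i).symm

theorem pencil_mulVec_sub (hAe : A *ᵥ e = 0) (hy : A *ᵥ y = M *ᵥ e) :
    pencil A M *ᵥ (C ∘ e - (X : R[X]) • (C ∘ y)) = -(X ^ 2 : R[X]) • (C ∘ (M *ᵥ y)) := by
  simp only [pencil, add_mulVec, mulVec_sub, mulVec_smul, smul_mulVec, map_C_mulVec, hAe, hy]
  ext1 i
  simp only [Pi.add_apply, Pi.sub_apply, Pi.smul_apply, Pi.zero_apply, Function.comp_apply,
    smul_eq_mul, map_zero]
  ring

variable [DecidableEq n]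

theorem det_pencil_smul_sub (hAe : A *ᵥ e = 0) (hy : A *ᵥ y = M *ᵥ e) :
    (pencil A M).det • (C ∘ e - (X : R[X]) • (C ∘ y)) =
      -(X ^ 2 : R[X]) • ((pencil A M).adjugate *ᵥ (C ∘ (M *ᵥ y))) := by
  rw [← mulVec_smul, ← pencil_mulVec_sub hAe hy, mulVec_mulVec, adjugate_mul, smul_mulVec,
    one_mulVec]

variable [IsDomain R]

theorem X_sq_dvd_det_pencil (he : e ≠ 0) (hAe : A *ᵥ e = 0) (hy : A *ᵥ y = M *ᵥ e) :
    X ^ 2 ∣ (pencil A M).det := by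
  obtain ⟨j, hj⟩ := Function.ne_iff.1 he
  have hX : ¬ X ∣ (C ∘ e - (X : R[X]) • (C ∘ y)) j := by
    simpa [X_dvd_iff] using hj
  refine prime_X.pow_dvd_of_dvd_mul_right 2 hX ?_
  have h := congrFun (det_pencil_smul_sub hAe hy) j
  rw [Pi.smul_apply, Pi.smul_apply, smul_eq_mul, smul_eq_mul, neg_mul] at h
  exact h ▸ (dvd_mul_right _ _).neg_right

theorem coeff_two_det_pencil_smul (he : e ≠ 0) (hAe : A *ᵥ e = 0) (hy : A *ᵥ y = M *ᵥ e) :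
    (pencil A M).det.coeff 2 • e = -(A.adjugate *ᵥ M *ᵥ y) := by
  obtain ⟨q, hq⟩ := X_sq_dvd_det_pencil he hAe hy
  have hcancel : q • (C ∘ e - (X : R[X]) • (C ∘ y)) =
      -((pencil A M).adjugate *ᵥ (C ∘ (M *ᵥ y))) := by
    refine smul_right_injective _ (pow_ne_zero 2 (X_ne_zero (R := R))) ?_
    simpa only [smul_smul, ← hq, smul_neg, neg_smul] using det_pencil_smul_sub hAe hy
  have hadj : (pencil A M).adjugate.map constantCoeff = A.adjugate := by
    rw [← RingHom.mapMatrix_apply, RingHom.map_adjugate, mapMatrix_constantCoeff_pencil]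
  have hcoeff : (pencil A M).det.coeff 2 = constantCoeff q := by
    simp [hq, coeff_X_pow_mul']
  ext i
  have hi := congrArg constantCoeff (congrFun hcancel i)
  rw [Pi.neg_apply, map_neg, RingHom.map_mulVec, hadj] at hi
  simpa [hcoeff, Function.comp_def] using hi

theorem coeff_two_det_pencil {f : n → R} {c : R} (he : e ≠ 0) (hAe : A *ᵥ e = 0)
    (hadj : A.adjugate = c • vecMulVec e f) (hy : A *ᵥ y = M *ᵥ e) :
    (pencil A M).det.coeff 2 = -c * (f ⬝ᵥ M *ᵥ y) := by
  refine smul_left_injective R he ?_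
  simp only [coeff_two_det_pencil_smul he hAe hy, hadj, smul_mulVec, vecMulVec_mulVec,
    op_smul_eq_smul, smul_smul, neg_mul, neg_smul]

theorem exists_coeff_two_det_pencil_eq (hA : A.IsSymm) (he : e ≠ 0)
    (hker : LinearMap.ker A.mulVecLin = Submodule.span R {e}) :
    ∃ c : R, c ≠ 0 ∧ ∀ (M : Matrix n n R) (y : n → R), M.IsSymm → A *ᵥ y = M *ᵥ e →
      (pencil A M).det.coeff 2 = c * (y ⬝ᵥ A *ᵥ y) := by
  have hker' : LinearMap.ker A.vecMulLinear = Submodule.span R {e} := by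
    rwa [← mulVecLin_transpose, hA.eq]
  obtain ⟨c, hc0, hc⟩ := exists_adjugate_eq_smul_vecMulVec he he hker hker'
  refine ⟨-c, neg_ne_zero.2 hc0, fun M y hM hy => ?_⟩
  rw [coeff_two_det_pencil he (mulVec_eq_zero_of_ker_eq_span hker) hc hy,
    dotProduct_mulVec_comm hM, hy]

end Pencil

section DotMulDual

variable {d : ℕ}

/-- The linear map sending a matrix `M` to the functional `x ↦ eᵀMx`, a bundled form of
`dotMulLin e`. -/
noncomputable def dotMulDual (e : Fin d → ℂ) :
    Matrix (Fin d) (Fin d) ℂ →ₗ[ℂ] Dual ℂ (Fin d → ℂ) where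
  toFun := dotMulLin e
  map_add' M N := LinearMap.ext fun x => by simp [dotMulLin, add_mulVec]
  map_smul' c M := LinearMap.ext fun x => by simp [dotMulLin, smul_mulVec]

theorem iInf_ker_dotMulLin (e : Fin d → ℂ) (L : Submodule ℂ (Matrix (Fin d) (Fin d) ℂ)) :
    ⨅ M ∈ L, LinearMap.ker (dotMulLin e M) =
      (LinearMap.range ((dotMulDual e).domRestrict L)).dualCoannihilator := by
  ext x
  simp [dotMulDual, Submodule.mem_dualCoannihilator]

end DotMulDual

/-- `M*` a symmetric `d×d` complex matrix with kernel the line `ℂe` (`e ≠ 0`),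
`q̄*` the induced nondegenerate symmetric form on `ℂ^d/ℂe`, `L` a linear space of symmetric
matrices with `eᵀMe = 0` for `M ∈ L`, and `Φ₂` the quadratic form on `L` sending `M` to the
coefficient of `t²` in `det(M* + tM)`, with (symmetric) associated bilinear form `Φ₂bil`.
Let `T = {x : eᵀMx = 0 ∀ M ∈ L}`.  Then
`rank Φ₂ = (d − dim T) − corank(q̄*|_{T/ℂe})`. -/
theorem stmt_3 (d : ℕ) (Mstar : Matrix (Fin d) (Fin d) ℂ) (hsymm : Mstar.IsSymm)
    (e : Fin d → ℂ) (he : e ≠ 0)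
    (hker : LinearMap.ker Mstar.mulVecLin = Submodule.span ℂ {e})
    (Qbar : LinearMap.BilinForm ℂ ((Fin d → ℂ) ⧸ Submodule.span ℂ {e}))
    (hQbar : ∀ x y : Fin d → ℂ,
      Qbar ((Submodule.span ℂ {e}).mkQ x) ((Submodule.span ℂ {e}).mkQ y) =
        x ⬝ᵥ Mstar.mulVec y)
    (hQnd : Qbar.Nondegenerate)
    (L : Submodule ℂ (Matrix (Fin d) (Fin d) ℂ))
    (hLsymm : ∀ M ∈ L, M.IsSymm)
    (hLe : ∀ M ∈ L, e ⬝ᵥ M.mulVec e = 0)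
    (Φ₂bil : LinearMap.BilinForm ℂ ↥L) (hΦsymm : Φ₂bil.IsSymm)
    (hΦdiag : ∀ M : ↥L, Φ₂bil M M = (detPoly Mstar (M : Matrix (Fin d) (Fin d) ℂ)).coeff 2) :
    finrank ℂ (LinearMap.range Φ₂bil) =
      (d - finrank ℂ ↥(⨅ M ∈ L, LinearMap.ker (dotMulLin e M))) -
        finrank ℂ (restrictedRadical Qbar
          ((⨅ M ∈ L, LinearMap.ker (dotMulLin e M)).map (Submodule.span ℂ {e}).mkQ)) := by
  have hQsymm : Qbar.IsSymm := ⟨(Submodule.mkQ_surjective _).forall₂.2 fun x y => by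
    rw [hQbar, hQbar, dotProduct_mulVec_comm hsymm]⟩
  rw [iInf_ker_dotMulLin]
  set φ := (dotMulDual e).domRestrict L
  have hST : Submodule.span ℂ {e} ≤ (LinearMap.range φ).dualCoannihilator := by
    rw [← iInf_ker_dotMulLin, Submodule.span_singleton_le_iff_mem]
    simpa [dotMulLin] using hLe
  obtain ⟨g, hg⟩ := exists_linearMap_apply_mkQ_eq hQnd hST
  obtain ⟨c, hc0, hc⟩ := exists_coeff_two_det_pencil_eq hsymm he hker
  have hdiag (M : L) : Φ₂bil M M = c * Qbar (g M) (g M) := by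
    obtain ⟨y, hy⟩ := Submodule.mkQ_surjective _ (g M)
    have hlift : Mstar *ᵥ y = M.1 *ᵥ e :=
      mulVec_eq_mulVec_of_forall_dotProduct hsymm (hLsymm M M.2) fun z => by
        rw [← hQbar, hy, hg]; rfl
    rw [hΦdiag, ← hy, hQbar]
    exact hc M y (hLsymm M M.2) hlift
  have hcomp_symm : (Qbar.comp g g).IsSymm := ⟨fun M N => hQsymm.eq (g M) (g N)⟩
  have hΦ : Φ₂bil = c • Qbar.comp g g :=
    LinearMap.BilinForm.ext_of_isSymm hΦsymm (hcomp_symm.smul c) hdiag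
  rw [hΦ, LinearMap.range_smul _ _ hc0,
    finrank_range_comp_self_eq_sub_restrictedRadical hQnd hQsymm.isRefl,
    ← map_dualCoannihilator_eq_orthogonal_range (Submodule.mkQ_surjective _) hg,
    finrank_quotient_sub_finrank_map_mkQ hST, finrank_fin_fun]
end

section
/- Let Λ = U ⊕ U ⊕ E8(−1) ⊕ E8(−1) ⊕ ⟨−2⟩ ⊕ ⟨−2⟩, let e₁ and e₂ be the generators of the two ⟨−2⟩ summands, and let e₃ = (1,−1) in the first U summand (so e₁² = e₂² = e₃² = −2 and (e₁+e₂)² = −4). Then every root v ∈ Λ with v² < 0 lies in the Õ(Λ)-orbit of exactly one of e₁, e₂, e₃, e₁+e₂; in particular the set of roots of negative square is the disjoint union of these four Õ(Λ)-orbits. -/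
/-!
The proof rests on Eichler's criterion: in a quadratic module over a Euclidean domain that splits
off two hyperbolic planes, with standard isotropic bases `e, f` and `e', f'`, the orbit of `v` under
the stable orthogonal group is determined by `Q v`, by the ideal `(v, M)`, and by the class of `v`
modulo `(v, M) • M`. Eichler transvections act on the pair `((e, v), (e', v))` by elementary
matrices, so the Euclidean algorithm moves `v` until `(e, v)` generates `(v, M)`; two vectors with
the same invariants in this position differ by a single transvection along `e`.

The discriminant group of `Λ` is killed by `2`, so `(v, Λ)` contains `2` for a primitive `v`. If `v`
is moreover a root, then `v² / 2` divides `(v, Λ)`, so `v²` is `-2` or `-4` when it is negative.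
For `(v, Λ) = ℤ` this forces `v² = -2`, the invariants of `e₃`. For `(v, Λ) = 2ℤ` the coordinates of
`v` on the unimodular part are even, the parities of the two others single out one of `e₁`, `e₂`,
`e₁ + e₂`, and `v² / 2` modulo `4` depends only on these parities.
-/

open Matrix

/-- Index type for the lattice `Λ = U ⊕ U ⊕ E8(−1) ⊕ E8(−1) ⊕ ⟨−2⟩ ⊕ ⟨−2⟩`. -/
abbrev I22 := (Fin 2 ⊕ Fin 2) ⊕ ((Fin 8 ⊕ Fin 8) ⊕ (Fin 1 ⊕ Fin 1))

/-- Gram matrix of the hyperbolic plane `U`. -/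
def UMat : Matrix (Fin 2) (Fin 2) ℤ := !![0, 1; 1, 0]

/-- The negative of the `E8` Cartan matrix (Bourbaki numbering), i.e. the Gram matrix of
`E8(−1)`. -/
def E8neg : Matrix (Fin 8) (Fin 8) ℤ :=
  -!![2, 0, -1, 0, 0, 0, 0, 0;
      0, 2, 0, -1, 0, 0, 0, 0;
      -1, 0, 2, -1, 0, 0, 0, 0;
      0, -1, -1, 2, -1, 0, 0, 0;
      0, 0, 0, -1, 2, -1, 0, 0;
      0, 0, 0, 0, -1, 2, -1, 0;
      0, 0, 0, 0, 0, -1, 2, -1;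
      0, 0, 0, 0, 0, 0, -1, 2]

/-- Gram matrix of `Λ = U ⊕ U ⊕ E8(−1) ⊕ E8(−1) ⊕ ⟨−2⟩ ⊕ ⟨−2⟩`. -/
def gramL : Matrix I22 I22 ℤ :=
  Matrix.fromBlocks (Matrix.fromBlocks UMat 0 0 UMat) 0 0
    (Matrix.fromBlocks (Matrix.fromBlocks E8neg 0 0 E8neg) 0 0
      (Matrix.fromBlocks !![-2] 0 0 !![-2]))

/-- The bilinear form of `Λ`. -/
def bilL (x y : I22 → ℤ) : ℤ := x ⬝ᵥ gramL.mulVec y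

/-- Generator of the first `⟨−2⟩` summand. -/
def e1 : I22 → ℤ := fun i => if i = Sum.inr (Sum.inr (Sum.inl 0)) then 1 else 0

/-- Generator of the second `⟨−2⟩` summand. -/
def e2 : I22 → ℤ := fun i => if i = Sum.inr (Sum.inr (Sum.inr 0)) then 1 else 0

/-- The vector `(1,−1)` in the first hyperbolic summand. -/
def e3 : I22 → ℤ := fun i =>
  if i = Sum.inl (Sum.inl 0) then 1 else if i = Sum.inl (Sum.inl 1) then -1 else 0

/-- A rational vector is integral if all its coordinates are integers. -/
def IsIntegralVec (x : I22 → ℚ) : Prop := ∀ i, ∃ n : ℤ, x i = n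

/-- Membership in the dual lattice `Λ^∨ ⊆ Λ ⊗ ℚ`. -/
def InDual (x : I22 → ℚ) : Prop := IsIntegralVec ((gramL.map (Int.cast : ℤ → ℚ)).mulVec x)

/-- `P` is (the matrix of) an isometry of `Λ`. -/
def IsIsometry (P : Matrix I22 I22 ℤ) : Prop :=
  IsUnit P.det ∧ P.transpose * gramL * P = gramL

/-- `P` belongs to the stable orthogonal group `Õ(Λ)`: it is an isometry inducing the
identity on the discriminant group `Λ^∨/Λ`. -/
def InStableO (P : Matrix I22 I22 ℤ) : Prop :=
  IsIsometry P ∧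
    ∀ x : I22 → ℚ, InDual x → IsIntegralVec ((P.map (Int.cast : ℤ → ℚ)).mulVec x - x)

/-- `v` is primitive. -/
def IsPrimitive (v : I22 → ℤ) : Prop := ∀ (n : ℤ) (w : I22 → ℤ), v = n • w → IsUnit n

/-- `v` is a root of `Λ`: it is primitive with `v² = −2d ≠ 0`, and the reflection
`x ↦ x + ((x,v)/d)·v` maps `Λ` into `Λ`. -/
def IsRoot (v : I22 → ℤ) : Prop :=
  IsPrimitive v ∧ ∃ d : ℤ, d ≠ 0 ∧ bilL v v = -2 * d ∧
    ∀ x : I22 → ℤ, ∀ i, d ∣ bilL x v * v i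

/-- The four reference roots `e₁, e₂, e₃, e₁+e₂`. -/
def refRoot : Fin 4 → (I22 → ℤ) := ![e1, e2, e3, e1 + e2]

section OrthogonalGroup

variable {R M : Type*} [CommRing R] [AddCommGroup M] [Module R M]

open QuadraticMap MulAction

theorem mem_orbit_trans {G α : Type*} [Monoid G] [MulAction G α] {a b c : α} (hab : a ∈ orbit G b)
    (hbc : b ∈ orbit G c) : a ∈ orbit G c := by
  obtain ⟨g, rfl⟩ := hab
  exact mem_orbit_of_mem_orbit g hbc

/-- The divisibility `(v, M)` of a vector `v` of a quadratic module: the ideal of all values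
`polar Q v x`. -/
def divisibilityIdeal (Q : QuadraticForm R M) (v : M) : Ideal R :=
  LinearMap.range (Q.polarBilin v)

variable {Q : QuadraticForm R M} {v w : M}

theorem polar_mem_divisibilityIdeal (Q : QuadraticForm R M) (v x : M) :
    polar Q v x ∈ divisibilityIdeal Q v :=
  ⟨x, rfl⟩

theorem divisibilityIdeal_le_iff {I : Ideal R} :
    divisibilityIdeal Q v ≤ I ↔ ∀ x, polar Q v x ∈ I :=
  LinearMap.range_le_iff_comap.trans <| by simp [Submodule.eq_top_iff']

theorem polar_map_of_isometry {g : M ≃ₗ[R] M} (hg : ∀ x, Q (g x) = Q x) (x y : M) :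
    polar Q (g x) (g y) = polar Q x y := by
  simp only [polar, ← map_add, hg]

theorem divisibilityIdeal_map_of_isometry {g : M ≃ₗ[R] M} (hg : ∀ x, Q (g x) = Q x) (v : M) :
    divisibilityIdeal Q (g v) = divisibilityIdeal Q v := by
  refine le_antisymm (divisibilityIdeal_le_iff.2 fun x => ?_)
    (divisibilityIdeal_le_iff.2 fun x => ?_)
  · rw [← g.apply_symm_apply x, polar_map_of_isometry hg]
    exact polar_mem_divisibilityIdeal Q v _
  · rw [← polar_map_of_isometry hg]
    exact polar_mem_divisibilityIdeal Q (g v) _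

theorem mem_span_singleton_smul_top {m : R} {x : M} :
    x ∈ Ideal.span {m} • (⊤ : Submodule R M) ↔ ∃ y, x = m • y := by
  rw [Submodule.ideal_span_singleton_smul, Submodule.mem_smul_pointwise_iff_exists]
  simp [eq_comm]

theorem mem_span_singleton_smul_top_pi {ι : Type*} {m : R} {v : ι → R} :
    v ∈ Ideal.span {m} • (⊤ : Submodule R (ι → R)) ↔ ∀ i, m ∣ v i := by
  rw [mem_span_singleton_smul_top]
  refine ⟨fun ⟨y, hy⟩ i => ⟨y i, congrFun hy i⟩, fun h => ?_⟩
  choose y hy using h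
  exact ⟨y, funext hy⟩

/-- The quadratic form induced on the discriminant group is well defined. -/
theorem sq_dvd_sub_of_congr {m : R} (hv : divisibilityIdeal Q v ≤ Ideal.span {m})
    (h : w - v ∈ Ideal.span {m} • (⊤ : Submodule R M)) : m ^ 2 ∣ Q w - Q v := by
  obtain ⟨y, hy⟩ := mem_span_singleton_smul_top.1 h
  obtain ⟨c, hc⟩ := Ideal.mem_span_singleton.1 (divisibilityIdeal_le_iff.1 hv y)
  refine ⟨Q y + c, ?_⟩
  rw [eq_add_of_sub_eq' hy, QuadraticMap.map_add Q, QuadraticMap.map_smul, polar_smul_right, hc]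
  simp only [smul_eq_mul]
  ring

/-- The stable orthogonal group of a quadratic module, described without the dual lattice. Over a
principal ideal domain, the elements of the dual of a nondegenerate lattice are the `v / m` with
`divisibilityIdeal Q v ≤ (m)`, and `g` fixes the class of `v / m` in the discriminant group if and
only if `g v - v` is divisible by `m`. -/
def stableOrthogonalGroup (Q : QuadraticForm R M) : Subgroup (M ≃ₗ[R] M) where
  carrier := {g | (∀ x, Q (g x) = Q x) ∧ ∀ x, g x - x ∈ divisibilityIdeal Q x • (⊤ : Submodule R M)}
  one_mem' := by simp
  mul_mem' {g h} hg hh := by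
    refine ⟨fun x => (hg.1 (h x)).trans (hh.1 x), fun x => ?_⟩
    have hgh := hg.2 (h x)
    rw [divisibilityIdeal_map_of_isometry hh.1] at hgh
    simpa using add_mem hgh (hh.2 x)
  inv_mem' {g} hg := by
    have hinv : ∀ x, g (g⁻¹ x) = x := g.apply_symm_apply
    refine ⟨fun x => by rw [← hg.1, hinv], fun x => ?_⟩
    have hx := hg.2 (g⁻¹ x)
    rw [← divisibilityIdeal_map_of_isometry hg.1, hinv] at hx
    simpa using neg_mem hx

theorem invariants_of_mem_orbit (h : w ∈ orbit (stableOrthogonalGroup Q) v) :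
    Q w = Q v ∧ divisibilityIdeal Q w = divisibilityIdeal Q v ∧
      w - v ∈ divisibilityIdeal Q v • (⊤ : Submodule R M) := by
  obtain ⟨⟨g, hg⟩, rfl⟩ := h
  exact ⟨hg.1 v, divisibilityIdeal_map_of_isometry hg.1 v, hg.2 v⟩

end OrthogonalGroup

section EichlerTransvection

variable {R M : Type*} [CommRing R] [AddCommGroup M] [Module R M]

open QuadraticMap MulAction

/-- The linear map underlying the Eichler transvection along `e` with parameter `a`. -/
def eichlerMap (Q : QuadraticForm R M) (e a : M) : M →ₗ[R] M :=
  LinearMap.id + (Q.polarBilin e).smulRight a - (Q.polarBilin a).smulRight e -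
    (Q a • Q.polarBilin e).smulRight e

variable {Q : QuadraticForm R M} {e a b : M}

theorem eichlerMap_apply (Q : QuadraticForm R M) (e a x : M) :
    eichlerMap Q e a x = x + polar Q e x • a - polar Q a x • e - (Q a * polar Q e x) • e :=
  rfl

theorem eichlerMap_zero (Q : QuadraticForm R M) (e : M) : eichlerMap Q e 0 = LinearMap.id := by
  ext x
  simp [eichlerMap_apply]

theorem eichlerMap_comp_eichlerMap (he : Q e = 0) (ha : polar Q e a = 0) (hb : polar Q e b = 0) :
    eichlerMap Q e a ∘ₗ eichlerMap Q e b = eichlerMap Q e (a + b) := by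
  ext x
  have hee : polar Q e e = 0 := by rw [polar_self, he, smul_zero]
  simp only [LinearMap.comp_apply, eichlerMap_apply, polar_add_right, polar_sub_right,
    polar_smul_right, polar_add_left, QuadraticMap.map_add Q, hee, hb, polar_comm Q a e, ha,
    smul_eq_mul]
  module

/-- The Eichler transvection along the isotropic vector `e` with parameter `a ⊥ e`. -/
def eichlerTransvection (he : Q e = 0) (ha : polar Q e a = 0) : M ≃ₗ[R] M :=
  have ha' : polar Q e (-a) = 0 := by rw [polar_neg_right, ha, neg_zero]
  .ofLinearMap (eichlerMap Q e a) (eichlerMap Q e (-a))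
    (by rw [eichlerMap_comp_eichlerMap he ha ha', add_neg_cancel, eichlerMap_zero])
    (by rw [eichlerMap_comp_eichlerMap he ha' ha, neg_add_cancel, eichlerMap_zero])

theorem map_eichlerMap (he : Q e = 0) (ha : polar Q e a = 0) (x : M) :
    Q (eichlerMap Q e a x) = Q x := by
  have hae : polar Q a e = 0 := by rw [polar_comm, ha]
  simp only [eichlerMap_apply, sub_eq_add_neg, QuadraticMap.map_add Q, QuadraticMap.map_neg,
    QuadraticMap.map_smul, polar_add_left, polar_neg_right, polar_neg_left, polar_smul_left,
    polar_smul_right, polar_self, he, hae, polar_comm Q x, smul_eq_mul, smul_zero]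
  ring

theorem eichlerMap_sub_mem (Q : QuadraticForm R M) (e a x : M) :
    eichlerMap Q e a x - x ∈ divisibilityIdeal Q x • (⊤ : Submodule R M) := by
  have hmem (y z : M) : polar Q y x • z ∈ divisibilityIdeal Q x • (⊤ : Submodule R M) :=
    Submodule.smul_mem_smul (polar_comm Q x y ▸ polar_mem_divisibilityIdeal Q x y) trivial
  have key := sub_mem (sub_mem (hmem e a) (hmem a e)) (Submodule.smul_mem _ (Q a) (hmem e e))
  convert key using 1
  rw [eichlerMap_apply]
  module

theorem eichlerTransvection_mem (he : Q e = 0) (ha : polar Q e a = 0) :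
    eichlerTransvection he ha ∈ stableOrthogonalGroup Q :=
  ⟨map_eichlerMap he ha, eichlerMap_sub_mem Q e a⟩

theorem eichlerMap_mem_orbit (he : Q e = 0) (ha : polar Q e a = 0) (v : M) :
    eichlerMap Q e a v ∈ orbit (stableOrthogonalGroup Q) v :=
  ⟨⟨_, eichlerTransvection_mem he ha⟩, rfl⟩

theorem polar_eichlerMap (Q : QuadraticForm R M) (e a x y : M) :
    polar Q y (eichlerMap Q e a x) = polar Q y x + polar Q e x * polar Q y a -
      polar Q a x * polar Q y e - Q a * polar Q e x * polar Q y e := by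
  simp only [eichlerMap_apply, polar_sub_right, polar_add_right, polar_smul_right, smul_eq_mul]

end EichlerTransvection

section EichlerCriterion

variable {R M : Type*} [AddCommGroup M]

open QuadraticMap MulAction

/-- The pairs `(e, f)` and `(e', f')` are standard bases of two orthogonal hyperbolic planes in the
quadratic module `(M, Q)`. -/
structure IsHyperbolicQuadruple [CommRing R] [Module R M] (Q : QuadraticForm R M)
    (e f e' f' : M) : Prop where
  map_e : Q e = 0
  map_f : Q f = 0
  map_e' : Q e' = 0
  map_f' : Q f' = 0
  polar_e_f : polar Q e f = 1
  polar_e'_f' : polar Q e' f' = 1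
  polar_e_e' : polar Q e e' = 0
  polar_e_f' : polar Q e f' = 0
  polar_f_e' : polar Q f e' = 0
  polar_f_f' : polar Q f f' = 0

section CommRing

variable [CommRing R] [Module R M] {Q : QuadraticForm R M} {e f e' f' : M}

theorem IsHyperbolicQuadruple.swap (h : IsHyperbolicQuadruple Q e f e' f') :
    IsHyperbolicQuadruple Q e f f' e' where
  __ := h
  map_e' := h.map_f'
  map_f' := h.map_e'
  polar_e'_f' := by rw [polar_comm, h.polar_e'_f']
  polar_e_e' := h.polar_e_f'
  polar_e_f' := h.polar_e_e'
  polar_f_e' := h.polar_f_f'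
  polar_f_f' := h.polar_f_e'

/-- On the pair `(polar Q e v, polar Q e' v)` the transvections along `e` and `f` act by elementary
matrices. -/
theorem exists_mem_orbit_polar_shift (h : IsHyperbolicQuadruple Q e f e' f') (v : M) (c : R) :
    ∃ w ∈ orbit (stableOrthogonalGroup Q) v,
      polar Q e w = polar Q e' v + c * polar Q e v ∧
      polar Q e' w = polar Q e' v + (c - 1) * polar Q e v := by
  have ha : polar Q e ((c - 1) • f') = 0 := by rw [polar_smul_right, h.polar_e_f', smul_zero]
  have hb : polar Q f (-e') = 0 := by rw [polar_neg_right, h.polar_f_e', neg_zero]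
  refine ⟨eichlerMap Q f (-e') (eichlerMap Q e ((c - 1) • f') v),
    mem_orbit_trans (eichlerMap_mem_orbit h.map_f hb _) (eichlerMap_mem_orbit h.map_e ha v), ?_, ?_⟩
  all_goals
    simp only [polar_eichlerMap, polar_neg_left, polar_neg_right, polar_smul_left,
      polar_smul_right, polar_self, QuadraticMap.map_neg, QuadraticMap.map_smul, smul_eq_mul,
      h.map_e, h.map_e', h.map_f', h.polar_e_f, h.polar_e'_f', h.polar_e_e', h.polar_e_f',
      polar_comm Q e' e, polar_comm Q e' f, h.polar_f_e', h.polar_f_f']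
    ring

theorem exists_mem_orbit_polar_minimal [WfDvdMonoid R] (Q : QuadraticForm R M) (e v : M) :
    ∃ w ∈ orbit (stableOrthogonalGroup Q) v, ∀ u ∈ orbit (stableOrthogonalGroup Q) v,
      polar Q e u ∣ polar Q e w → polar Q e w ∣ polar Q e u := by
  obtain ⟨_, ⟨w, hw, rfl⟩, hmin⟩ := (wellFounded_dvdNotUnit (α := R)).has_min
    (polar Q e '' orbit (stableOrthogonalGroup Q) v) ((nonempty_orbit v).image _)
  exact ⟨w, hw, fun u hu hdvd => by_contra fun hnot =>
    hmin _ ⟨u, hu, rfl⟩ (dvdNotUnit_of_dvd_of_not_dvd hdvd hnot)⟩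

end CommRing

section IsDomain

variable [CommRing R] [IsDomain R] [Module R M] {Q : QuadraticForm R M} {e v w : M} {m : R}

/-- The transvection along `e` with parameter `(w - v) / m` takes `v` to `w` up to a multiple of
`e`, which vanishes because the norms agree. -/
theorem mem_orbit_of_polar_eq (he : Q e = 0) (hv : polar Q e v = m) (hw : polar Q e w = m)
    (hQ : Q w = Q v) (hwv : w - v ∈ Ideal.span {m} • (⊤ : Submodule R M)) :
    w ∈ orbit (stableOrthogonalGroup Q) v := by
  obtain ⟨a, ha⟩ := mem_span_singleton_smul_top.1 hwv
  obtain rfl : w = v + m • a := eq_add_of_sub_eq' ha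
  obtain rfl | hm := eq_or_ne m 0
  · simp
  have hea : polar Q e a = 0 := by
    rw [polar_add_right, polar_smul_right, hv, smul_eq_mul, add_eq_left] at hw
    exact (mul_eq_zero.1 hw).resolve_left hm
  have hnorm : polar Q a v + Q a * m = 0 := by
    rw [QuadraticMap.map_add Q, QuadraticMap.map_smul, polar_smul_right, polar_comm Q v a] at hQ
    simp only [smul_eq_mul] at hQ
    exact (mul_eq_zero.1 (by linear_combination hQ : m * _ = 0)).resolve_left hm
  convert eichlerMap_mem_orbit he hea v using 1
  rw [eichlerMap_apply, hv, sub_sub, ← add_smul, hnorm, zero_smul, sub_zero]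

end IsDomain

section EuclideanDomain

variable [EuclideanDomain R] [Module R M] {Q : QuadraticForm R M} {e f e' f' : M}

/-- The Euclidean algorithm on the pair `(polar Q e v, polar Q e' v)`. -/
theorem exists_mem_orbit_polar_dvd (h : IsHyperbolicQuadruple Q e f e' f') (v : M) :
    ∃ w ∈ orbit (stableOrthogonalGroup Q) v,
      polar Q e w ∣ polar Q e v ∧ polar Q e w ∣ polar Q e' v := by
  obtain ⟨b, hb⟩ : ∃ b, polar Q e v = b := ⟨_, rfl⟩
  induction b using (EuclideanDomain.r_wellFounded (R := R)).induction generalizing v with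
  | _ b ih =>
    rw [hb]
    obtain hb0 | hb0 := eq_or_ne b 0
    · obtain ⟨w, hwv, hw, -⟩ := exists_mem_orbit_polar_shift h v 0
      exact ⟨w, hwv, hb0 ▸ dvd_zero _, by rw [hw, zero_mul, add_zero]⟩
    obtain ⟨w, hwv, hw, hw'⟩ := exists_mem_orbit_polar_shift h v (-(polar Q e' v / b))
    have hmod : polar Q e w = polar Q e' v % b := by
      rw [hw, hb, EuclideanDomain.mod_eq_sub_mul_div]
      ring
    obtain ⟨u, huw, hu, hu'⟩ := ih _ (hmod ▸ EuclideanDomain.mod_lt _ hb0) w rfl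
    have hub : polar Q e u ∣ b := by
      convert dvd_sub hu hu' using 1
      rw [hw, hw', hb]
      ring
    refine ⟨u, mem_orbit_trans huw hwv, hub, ?_⟩
    rw [← EuclideanDomain.mod_add_div (polar Q e' v) b, ← hmod]
    exact dvd_add hu (hub.mul_right _)

theorem exists_mem_orbit_forall_dvd_polar_of_polar_eq (h : IsHyperbolicQuadruple Q e f e' f')
    (v : M) :
    ∃ u ∈ orbit (stableOrthogonalGroup Q) v, ∀ w ∈ orbit (stableOrthogonalGroup Q) v,
      polar Q e w = polar Q e u → polar Q e u ∣ polar Q e' w ∧ polar Q e u ∣ polar Q f' w := by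
  obtain ⟨u, huv, hmin⟩ := exists_mem_orbit_polar_minimal Q e v
  have dvd_polar {e'' f'' w : M} (h : IsHyperbolicQuadruple Q e f e'' f'')
      (hw : w ∈ orbit (stableOrthogonalGroup Q) v) (heq : polar Q e w = polar Q e u) :
      polar Q e u ∣ polar Q e'' w := by
    obtain ⟨t, htw, ht, ht'⟩ := exists_mem_orbit_polar_dvd h w
    exact (hmin t (mem_orbit_trans htw hw) (heq ▸ ht)).trans ht'
  exact ⟨u, huv, fun w hw heq => ⟨dvd_polar h hw heq, dvd_polar h.swap hw heq⟩⟩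

theorem exists_mem_orbit_forall_polar_dvd (h : IsHyperbolicQuadruple Q e f e' f') (v : M) :
    ∃ w ∈ orbit (stableOrthogonalGroup Q) v, ∀ x, polar Q e w ∣ polar Q x w := by
  obtain ⟨u, huv, hu⟩ := exists_mem_orbit_forall_dvd_polar_of_polar_eq h v
  obtain ⟨t, ht⟩ := (hu u huv rfl).2
  have ha : polar Q e (-t • e') = 0 := by rw [polar_smul_right, h.polar_e_e', smul_zero]
  obtain ⟨w, hw⟩ : ∃ w, w = eichlerMap Q e (-t • e') u := ⟨_, rfl⟩
  have hwv : w ∈ orbit (stableOrthogonalGroup Q) v :=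
    hw ▸ mem_orbit_trans (eichlerMap_mem_orbit h.map_e ha u) huv
  have hew : polar Q e w = polar Q e u := by
    simp [hw, polar_eichlerMap, h.polar_e_e', h.map_e]
  have hf'w : polar Q f' w = 0 := by
    simp only [hw, polar_eichlerMap, polar_smul_right, polar_comm Q f' e', polar_comm Q f' e,
      h.polar_e_f', h.polar_e'_f', smul_eq_mul, ht]
    ring
  refine ⟨w, hwv, fun x => hew.symm ▸ ?_⟩
  have he'w : polar Q e u ∣ polar Q e' w := (hu w hwv hew).1
  obtain ⟨a, c, ha, rfl⟩ : ∃ a c, polar Q f' a = 0 ∧ x = a + c • e' := by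
    refine ⟨x - polar Q f' x • e', polar Q f' x, ?_, by abel⟩
    rw [polar_sub_right, polar_smul_right, polar_comm Q f' e', h.polar_e'_f', smul_eq_mul,
      mul_one, sub_self]
  -- The transvection along `f'` with parameter `a` fixes `polar Q e w` and subtracts `polar Q a w`
  -- from `polar Q e' w`.
  have haw : polar Q e u ∣ polar Q e' w - polar Q a w := by
    convert (hu _ (mem_orbit_trans (eichlerMap_mem_orbit h.map_f' ha w) hwv) ?_).1 using 1
    all_goals simp [polar_eichlerMap, hf'w, hew, h.polar_e_f', h.polar_e'_f']
  rw [polar_add_left, polar_smul_left]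
  exact dvd_add ((dvd_sub_right he'w).1 haw) (he'w.mul_left _)

theorem exists_mem_orbit_polar_eq (h : IsHyperbolicQuadruple Q e f e' f') {v : M} {m : R}
    (hm : divisibilityIdeal Q v = Ideal.span {m}) :
    ∃ w ∈ orbit (stableOrthogonalGroup Q) v, polar Q e w = m := by
  obtain ⟨w, hwv, hw⟩ := exists_mem_orbit_forall_polar_dvd h v
  have hdvd : polar Q e w ∣ m := by
    obtain ⟨x, hx⟩ : m ∈ divisibilityIdeal Q w := by
      rw [(invariants_of_mem_orbit hwv).2.1, hm]
      exact Ideal.mem_span_singleton_self m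
    rw [← hx, polarBilin_apply_apply, polar_comm Q w x]
    exact hw x
  obtain ⟨s, hs⟩ := hdvd
  obtain ⟨t, ht⟩ := hw e'
  obtain ⟨u, huw, hu, -⟩ := exists_mem_orbit_polar_shift h w (s - t)
  refine ⟨u, mem_orbit_trans huw hwv, ?_⟩
  rw [hu, hs, ht]
  ring

theorem mem_orbit_stableOrthogonalGroup_iff (h : IsHyperbolicQuadruple Q e f e' f') {v w : M} :
    w ∈ orbit (stableOrthogonalGroup Q) v ↔
      Q w = Q v ∧ divisibilityIdeal Q w = divisibilityIdeal Q v ∧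
        w - v ∈ divisibilityIdeal Q v • (⊤ : Submodule R M) := by
  refine ⟨invariants_of_mem_orbit, fun ⟨hQ, hdiv, hwv⟩ => ?_⟩
  obtain ⟨m, hm⟩ := (IsPrincipalIdealRing.principal (divisibilityIdeal Q v)).principal
  obtain ⟨v₁, hv₁, hev₁⟩ := exists_mem_orbit_polar_eq h hm
  obtain ⟨w₁, hw₁, hew₁⟩ := exists_mem_orbit_polar_eq h (hdiv.trans hm)
  obtain ⟨hQv, -, hv⟩ := invariants_of_mem_orbit hv₁
  obtain ⟨hQw, -, hw⟩ := invariants_of_mem_orbit hw₁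
  have hsub : w₁ - v₁ ∈ Ideal.span {m} • (⊤ : Submodule R M) := by
    rw [← Ideal.submodule_span_eq, ← hm]
    convert sub_mem (add_mem (hdiv ▸ hw) hwv) hv using 1
    abel
  have hw₁v₁ := mem_orbit_of_polar_eq h.map_e hev₁ hew₁ (by rw [hQw, hQ, hQv]) hsub
  exact mem_orbit_trans (mem_orbit_symm.1 hw₁) (mem_orbit_trans hw₁v₁ hv₁)

end EuclideanDomain

end EichlerCriterion

section Lattice

open QuadraticMap MulAction

/-- The inverse of the Gram matrix of `E8(−1)`. -/
def E8negInv : Matrix (Fin 8) (Fin 8) ℤ :=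
  -!![4, 5, 7, 10, 8, 6, 4, 2;
      5, 8, 10, 15, 12, 9, 6, 3;
      7, 10, 14, 20, 16, 12, 8, 4;
      10, 15, 20, 30, 24, 18, 12, 6;
      8, 12, 16, 24, 20, 15, 10, 5;
      6, 9, 12, 18, 15, 12, 8, 4;
      4, 6, 8, 12, 10, 8, 6, 3;
      2, 3, 4, 6, 5, 4, 3, 2]

/-- The upper triangular matrix of the quadratic form `x²/2` on `E8(−1)`. -/
def E8half : Matrix (Fin 8) (Fin 8) ℤ :=
  -!![1, 0, -1, 0, 0, 0, 0, 0;
      0, 1, 0, -1, 0, 0, 0, 0;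
      0, 0, 1, -1, 0, 0, 0, 0;
      0, 0, 0, 1, -1, 0, 0, 0;
      0, 0, 0, 0, 1, -1, 0, 0;
      0, 0, 0, 0, 0, 1, -1, 0;
      0, 0, 0, 0, 0, 0, 1, -1;
      0, 0, 0, 0, 0, 0, 0, 1]

/-- The upper triangular matrix of the quadratic form `x²/2` on `Λ`. -/
def halfL : Matrix I22 I22 ℤ :=
  fromBlocks (fromBlocks !![0, 1; 0, 0] 0 0 !![0, 1; 0, 0]) 0 0
    (fromBlocks (fromBlocks E8half 0 0 E8half) 0 0 (fromBlocks !![-1] 0 0 !![-1]))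

/-- The quadratic form `x²/2` of the even lattice `Λ`; its polar form is the bilinear form of
`Λ`. -/
def qL : QuadraticForm ℤ (I22 → ℤ) := halfL.toQuadraticForm'

theorem halfL_add_transpose : halfL + halfLᵀ = gramL := by
  have hU : (!![0, 1; 0, 0] : Matrix (Fin 2) (Fin 2) ℤ) + !![0, 1; 0, 0]ᵀ = UMat := by decide
  have hE8 : E8half + E8halfᵀ = E8neg := by decide
  have hA1 : (!![-1] : Matrix (Fin 1) (Fin 1) ℤ) + !![-1]ᵀ = !![-2] := by decide
  simp only [halfL, gramL, fromBlocks_transpose, fromBlocks_add, transpose_zero, add_zero,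
    hU, hE8, hA1]

theorem polarBilin_qL : qL.polarBilin = Matrix.toBilin' gramL := by
  refine LinearMap.ext₂ fun x y => ?_
  rw [polarBilin_apply_apply, qL, toQuadraticForm', LinearMap.BilinMap.polar_toQuadraticMap,
    toLinearMap₂'_apply', toLinearMap₂'_apply', toBilin'_apply', ← halfL_add_transpose,
    add_mulVec, dotProduct_add, mulVec_transpose, dotProduct_comm x (y ᵥ* halfL),
    dotProduct_mulVec y]

theorem polar_qL (x y : I22 → ℤ) : polar qL x y = bilL x y := by
  rw [← polarBilin_apply_apply, polarBilin_qL, Matrix.toBilin'_apply', bilL]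

theorem bilL_self (v : I22 → ℤ) : bilL v v = 2 * qL v := by
  rw [← polar_qL, polar_self, nsmul_eq_mul, Nat.cast_ofNat]

theorem polar_qL_single (v : I22 → ℤ) (i : I22) :
    polar qL v (Pi.single i 1) = (gramL *ᵥ v) i := by
  rw [polar_comm, polar_qL, bilL, single_one_dotProduct]

theorem dotProduct_mem_of_forall_mem {R ι : Type*} [CommRing R] [Fintype ι] {I : Ideal R}
    (x : ι → R) {y : ι → R} (hy : ∀ i, y i ∈ I) : x ⬝ᵥ y ∈ I :=
  sum_mem fun i _ => I.mul_mem_left _ (hy i)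

theorem divisibilityIdeal_qL_le_iff {v : I22 → ℤ} {I : Ideal ℤ} :
    divisibilityIdeal qL v ≤ I ↔ ∀ i, (gramL *ᵥ v) i ∈ I := by
  refine ⟨fun h i => polar_qL_single v i ▸ h (polar_mem_divisibilityIdeal qL v _),
    fun h => divisibilityIdeal_le_iff.2 fun x => ?_⟩
  rw [polar_comm, polar_qL]
  exact dotProduct_mem_of_forall_mem x h

/-- The inverse of the Gram matrix on the unimodular part of `Λ`, extended by zero. -/
def unimodInv : Matrix I22 I22 ℤ :=
  fromBlocks (fromBlocks UMat 0 0 UMat) 0 0 (fromBlocks (fromBlocks E8negInv 0 0 E8negInv) 0 0 0)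

theorem unimodInv_mul_gramL :
    unimodInv * gramL = fromBlocks 1 0 0 (fromBlocks 1 0 0 0) := by
  have hU : UMat * UMat = 1 := by decide
  have hE8 : E8negInv * E8neg = 1 := by decide
  simp only [unimodInv, gramL, fromBlocks_multiply, hU, hE8, Matrix.mul_zero, Matrix.zero_mul,
    add_zero, zero_add, fromBlocks_one]

theorem gramL_mulVec_inr_inr (v : I22 → ℤ) (i : Fin 1 ⊕ Fin 1) :
    (gramL *ᵥ v) (.inr (.inr i)) = -2 * v (.inr (.inr i)) := by
  obtain i | i := i <;> simp [gramL, fromBlocks_mulVec, Fin.eq_zero i, vecHead]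

theorem unimod_apply_mem_divisibilityIdeal (v : I22 → ℤ) :
    (∀ i, v (.inl i) ∈ divisibilityIdeal qL v) ∧
      ∀ i, v (.inr (.inl i)) ∈ divisibilityIdeal qL v := by
  have hmem (i : I22) : (unimodInv *ᵥ gramL *ᵥ v) i ∈ divisibilityIdeal qL v :=
    dotProduct_mem_of_forall_mem _ (divisibilityIdeal_qL_le_iff.1 le_rfl)
  rw [mulVec_mulVec, unimodInv_mul_gramL] at hmem
  exact ⟨fun i => by simpa [fromBlocks_mulVec] using hmem (.inl i),
    fun i => by simpa [fromBlocks_mulVec] using hmem (.inr (.inl i))⟩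

theorem two_mul_apply_mem_divisibilityIdeal (v : I22 → ℤ) (i : I22) :
    2 * v i ∈ divisibilityIdeal qL v := by
  obtain ⟨hinl, hinr⟩ := unimod_apply_mem_divisibilityIdeal v
  obtain i | i | i := i
  · exact Ideal.mul_mem_left _ _ (hinl i)
  · exact Ideal.mul_mem_left _ _ (hinr i)
  · have h := divisibilityIdeal_qL_le_iff.1 (le_refl (divisibilityIdeal qL v)) (.inr (.inr i))
    rwa [gramL_mulVec_inr_inr, neg_mul, neg_mem_iff] at h

theorem eq_zero_of_divisibilityIdeal_eq_bot {v : I22 → ℤ} (h : divisibilityIdeal qL v = ⊥) :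
    v = 0 := by
  ext i
  simpa [h] using two_mul_apply_mem_divisibilityIdeal v i

theorem qL_single (i : I22) : qL (Pi.single i 1) = halfL i i := by
  rw [qL, toQuadraticForm', LinearMap.BilinMap.toQuadraticMap_apply, toLinearMap₂'_apply',
    mulVec_single_one, single_one_dotProduct, col_apply]

theorem polar_qL_single_single (i j : I22) :
    polar qL (Pi.single i 1) (Pi.single j 1) = gramL j i := by
  rw [polar_qL_single, mulVec_single_one, col_apply]

theorem isHyperbolicQuadruple_single :
    IsHyperbolicQuadruple qL (Pi.single (.inl (.inl 0)) 1) (Pi.single (.inl (.inl 1)) 1)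
      (Pi.single (.inl (.inr 0)) 1) (Pi.single (.inl (.inr 1)) 1) := by
  constructor <;> simp only [qL_single, polar_qL_single_single] <;> rfl

end Lattice

section DiscriminantGroup

open QuadraticMap MulAction

/-- The vector `v / m` of `Λ ⊗ ℚ`; every vector of `Λ ⊗ ℚ` has this form with `m ≠ 0`. -/
def fracVec (v : I22 → ℤ) (m : ℤ) : I22 → ℚ := fun i => v i / m

theorem exists_eq_fracVec (x : I22 → ℚ) : ∃ v, ∃ m ≠ 0, x = fracVec v m := by
  obtain ⟨m, hm⟩ := IsLocalization.exist_integer_multiples_of_finite (nonZeroDivisors ℤ) x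
  choose v hv using hm
  refine ⟨v, m, nonZeroDivisors.coe_ne_zero m, funext fun i => ?_⟩
  have hm0 : ((m : ℤ) : ℚ) ≠ 0 := Int.cast_ne_zero.2 (nonZeroDivisors.coe_ne_zero m)
  have := hv i
  rw [fracVec, eq_div_iff hm0]
  simpa [mul_comm, eq_comm] using this

variable {v : I22 → ℤ} {m : ℤ}

theorem isIntegralVec_fracVec (hm : m ≠ 0) : IsIntegralVec (fracVec v m) ↔ ∀ i, m ∣ v i := by
  refine forall_congr' fun i => exists_congr fun n => ?_
  rw [fracVec, div_eq_iff (Int.cast_ne_zero.2 hm), mul_comm]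
  norm_cast

theorem map_mulVec_fracVec (P : Matrix I22 I22 ℤ) (v : I22 → ℤ) (m : ℤ) :
    P.map (Int.cast : ℤ → ℚ) *ᵥ fracVec v m = fracVec (P *ᵥ v) m := by
  ext i
  simp only [fracVec, mulVec, dotProduct, map_apply, Int.cast_sum, Int.cast_mul, Finset.sum_div,
    mul_div_assoc]

theorem fracVec_sub (v w : I22 → ℤ) (m : ℤ) : fracVec v m - fracVec w m = fracVec (v - w) m := by
  ext i
  simp [fracVec, sub_div]

theorem inDual_fracVec (hm : m ≠ 0) :
    InDual (fracVec v m) ↔ divisibilityIdeal qL v ≤ Ideal.span {m} := by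
  simp only [InDual, map_mulVec_fracVec, isIntegralVec_fracVec hm, divisibilityIdeal_qL_le_iff,
    Ideal.mem_span_singleton]

theorem isIsometry_toMatrix'_iff {g : (I22 → ℤ) ≃ₗ[ℤ] (I22 → ℤ)} :
    IsIsometry (LinearMap.toMatrix' g) ↔ ∀ x, qL (g x) = qL x := by
  have hdet : IsUnit (LinearMap.toMatrix' (g : (I22 → ℤ) →ₗ[ℤ] (I22 → ℤ))).det := by
    rw [LinearMap.det_toMatrix']
    exact g.isUnit_det'
  rw [IsIsometry, and_iff_right hdet, ← Matrix.toBilin'.injective.eq_iff, ← Matrix.toBilin'_comp,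
    ← polarBilin_qL, Matrix.toLin'_toMatrix']
  refine ⟨fun h x => ?_, fun h => LinearMap.ext₂ (polar_map_of_isometry h)⟩
  have hx : polar qL (g x) (g x) = polar qL x x := LinearMap.congr_fun₂ h x x
  simpa [polar_self] using hx

theorem inStableO_toMatrix'_iff {g : (I22 → ℤ) ≃ₗ[ℤ] (I22 → ℤ)} :
    InStableO (LinearMap.toMatrix' g) ↔ g ∈ stableOrthogonalGroup qL := by
  have hg {v m} (hm : m ≠ 0) : IsIntegralVec ((LinearMap.toMatrix' (g : (I22 → ℤ) →ₗ[ℤ]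
      (I22 → ℤ))).map (Int.cast : ℤ → ℚ) *ᵥ fracVec v m - fracVec v m) ↔
        g v - v ∈ Ideal.span {m} • (⊤ : Submodule ℤ (I22 → ℤ)) := by
    rw [map_mulVec_fracVec, fracVec_sub, isIntegralVec_fracVec hm, mem_span_singleton_smul_top_pi,
      LinearMap.toMatrix'_mulVec, LinearEquiv.coe_coe]
  refine and_congr isIsometry_toMatrix'_iff ⟨fun h v => ?_, fun h x hx => ?_⟩
  · obtain ⟨m, hm⟩ := (IsPrincipalIdealRing.principal (divisibilityIdeal qL v)).principal
    obtain rfl | hm0 := eq_or_ne m 0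
    · rw [eq_zero_of_divisibilityIdeal_eq_bot (v := v) (by simpa using hm)]
      simp
    rw [hm]
    exact (hg hm0).1 (h _ ((inDual_fracVec hm0).2 hm.le))
  · obtain ⟨v, m, hm, rfl⟩ := exists_eq_fracVec x
    exact (hg hm).2 (Submodule.smul_mono_left ((inDual_fracVec hm).1 hx) (h v))

theorem exists_inStableO_mulVec_eq_iff {v w : I22 → ℤ} :
    (∃ P, InStableO P ∧ P *ᵥ v = w) ↔ w ∈ orbit (stableOrthogonalGroup qL) v := by
  constructor
  · rintro ⟨P, hP, rfl⟩
    obtain ⟨g, rfl⟩ : ∃ g : (I22 → ℤ) ≃ₗ[ℤ] (I22 → ℤ), LinearMap.toMatrix' g = P :=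
      ⟨P.toLinearEquiv' (P.invertibleOfIsUnitDet hP.1.1), by simp⟩
    exact ⟨⟨g, inStableO_toMatrix'_iff.1 hP⟩, by simp⟩
  · rintro ⟨⟨g, hg⟩, rfl⟩
    exact ⟨_, inStableO_toMatrix'_iff.2 hg, LinearMap.toMatrix'_mulVec _ _⟩

end DiscriminantGroup

section Roots

open QuadraticMap MulAction

theorem IsPrimitive.mem_of_forall_mul_mem {v : I22 → ℤ} (hv : IsPrimitive v) {I : Ideal ℤ} {k : ℤ}
    (h : ∀ i, k * v i ∈ I) : k ∈ I := by
  obtain ⟨n, hn⟩ :=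
    (IsPrincipalIdealRing.principal (Submodule.comap (LinearMap.mulLeft ℤ k) I)).principal
  have hdvd (i : I22) : n ∣ v i := by
    rw [← Ideal.mem_span_singleton, ← Ideal.submodule_span_eq, ← hn]
    exact h i
  choose w hw using hdvd
  have hspan : Submodule.span ℤ {n} = ⊤ := Ideal.span_singleton_eq_top.2 (hv n w (funext hw))
  have hone : (1 : ℤ) ∈ Submodule.comap (LinearMap.mulLeft ℤ k) I :=
    hn.trans hspan ▸ Submodule.mem_top
  simpa using hone

theorem IsPrimitive.two_mem_divisibilityIdeal {v : I22 → ℤ} (hv : IsPrimitive v) :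
    2 ∈ divisibilityIdeal qL v :=
  hv.mem_of_forall_mul_mem (two_mul_apply_mem_divisibilityIdeal v)

theorem IsRoot.divisibilityIdeal_le {v : I22 → ℤ} (hv : IsRoot v) :
    divisibilityIdeal qL v ≤ Ideal.span {qL v} := by
  obtain ⟨hprim, d, -, hd, hdvd⟩ := hv
  obtain rfl : d = -qL v := by linarith [bilL_self v]
  refine divisibilityIdeal_le_iff.2 fun x => hprim.mem_of_forall_mul_mem fun i => ?_
  rw [Ideal.mem_span_singleton, ← neg_dvd, polar_comm, polar_qL]
  exact hdvd x i

theorem IsRoot.qL_eq {v : I22 → ℤ} (hv : IsRoot v) (hneg : qL v < 0) : qL v = -1 ∨ qL v = -2 := by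
  have hdvd := Ideal.mem_span_singleton.1 (hv.divisibilityIdeal_le hv.1.two_mem_divisibilityIdeal)
  have hle : -qL v ≤ 2 := Int.le_of_dvd two_pos ((neg_dvd).2 hdvd)
  omega

theorem divisibilityIdeal_le_span_two_iff {v : I22 → ℤ} :
    divisibilityIdeal qL v ≤ Ideal.span {2} ↔
      (∀ i, 2 ∣ v (.inl i)) ∧ ∀ i, 2 ∣ v (.inr (.inl i)) := by
  simp only [← Ideal.mem_span_singleton]
  refine ⟨fun h => (unimod_apply_mem_divisibilityIdeal v).imp (fun hv i => h (hv i))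
    (fun hv i => h (hv i)), fun ⟨hinl, hinr⟩ => divisibilityIdeal_qL_le_iff.2 ?_⟩
  rintro (i | i | i)
  · rw [gramL, fromBlocks_mulVec, Sum.elim_inl, zero_mulVec, add_zero]
    exact dotProduct_mem_of_forall_mem _ hinl
  · rw [gramL, fromBlocks_mulVec, Sum.elim_inr, fromBlocks_mulVec, zero_mulVec, zero_add,
      Sum.elim_inl, zero_mulVec, add_zero]
    exact dotProduct_mem_of_forall_mem _ hinr
  · rw [gramL_mulVec_inr_inr, Ideal.mem_span_singleton]
    exact (dvd_neg.2 dvd_rfl).mul_right _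

theorem e1_eq_single : e1 = Pi.single (.inr (.inr (.inl 0))) 1 := by
  decide

theorem e2_eq_single : e2 = Pi.single (.inr (.inr (.inr 0))) 1 := by
  decide

theorem e3_eq_single_sub_single :
    e3 = Pi.single (.inl (.inl 0)) 1 - Pi.single (.inl (.inl 1)) 1 := by
  decide

theorem qL_refRoot (j : Fin 4) : qL (refRoot j) = if j = 3 then -2 else -1 := by
  fin_cases j
  · simp [refRoot, e1_eq_single, qL_single, halfL]
  · simp [refRoot, e2_eq_single, qL_single, halfL]
  · simp [refRoot, e3_eq_single_sub_single, sub_eq_add_neg, QuadraticMap.map_add qL,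
      QuadraticMap.map_neg, polar_neg_right, qL_single, polar_qL_single_single, halfL, gramL, UMat]
  · simp [refRoot, e1_eq_single, e2_eq_single, QuadraticMap.map_add qL, qL_single,
      polar_qL_single_single, halfL, gramL]

theorem divisibilityIdeal_refRoot_le_span_two_iff (j : Fin 4) :
    divisibilityIdeal qL (refRoot j) ≤ Ideal.span {2} ↔ j ≠ 2 := by
  rw [divisibilityIdeal_le_span_two_iff]
  revert j
  decide

theorem refRoot_injective_mod_two {j k : Fin 4} (h : ∀ i, 2 ∣ refRoot k i - refRoot j i) :
    j = k := by
  revert j k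
  decide

theorem divisibilityIdeal_eq_span_two {v : I22 → ℤ} (h : 2 ∈ divisibilityIdeal qL v)
    (htop : divisibilityIdeal qL v ≠ ⊤) : divisibilityIdeal qL v = Ideal.span {2} :=
  have hmax : (Ideal.span {2} : Ideal ℤ).IsMaximal :=
    PrincipalIdealRing.isMaximal_of_irreducible Int.prime_two.irreducible
  (hmax.eq_of_le htop ((Ideal.span_singleton_le_iff_mem _).2 h)).symm

theorem two_mem_divisibilityIdeal_refRoot (j : Fin 4) :
    2 ∈ divisibilityIdeal qL (refRoot j) := by
  obtain ⟨i, hi⟩ : ∃ i, refRoot j i = 1 := by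
    revert j
    decide
  simpa [hi] using two_mul_apply_mem_divisibilityIdeal (refRoot j) i

theorem divisibilityIdeal_refRoot (j : Fin 4) :
    divisibilityIdeal qL (refRoot j) = if j = 2 then ⊤ else Ideal.span {2} := by
  have hle := divisibilityIdeal_refRoot_le_span_two_iff j
  have hmem := two_mem_divisibilityIdeal_refRoot j
  split_ifs with hj
  · exact by_contra fun h => hle.1 (divisibilityIdeal_eq_span_two hmem h).le hj
  · exact le_antisymm (hle.2 hj) ((Ideal.span_singleton_le_iff_mem _).2 hmem)

theorem exists_refRoot_inr_inr_eq {ε : Fin 1 ⊕ Fin 1 → ZMod 2} (hε : ε ≠ 0) :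
    ∃ j ≠ 2, ∀ i, (refRoot j (.inr (.inr i)) : ZMod 2) = ε i := by
  revert ε
  decide

theorem IsPrimitive.exists_refRoot_congr_mod_two {v : I22 → ℤ} (hv : IsPrimitive v)
    (h : divisibilityIdeal qL v ≤ Ideal.span {2}) :
    ∃ j ≠ 2, ∀ i, 2 ∣ v i - refRoot j i := by
  obtain ⟨hinl, hinr⟩ := divisibilityIdeal_le_span_two_iff.1 h
  have hodd : (fun i => (v (.inr (.inr i)) : ZMod 2)) ≠ 0 := by
    intro heven
    have hdvd (i : I22) : 2 ∣ 1 * v i := by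
      rw [one_mul]
      obtain i | i | i := i
      exacts [hinl i, hinr i, (ZMod.intCast_zmod_eq_zero_iff_dvd _ 2).1 (congrFun heven i)]
    have hone := hv.mem_of_forall_mul_mem fun i => Ideal.mem_span_singleton.2 (hdvd i)
    exact absurd (Ideal.mem_span_singleton.1 hone) (by decide)
  obtain ⟨j, hj, hcongr⟩ := exists_refRoot_inr_inr_eq hodd
  obtain ⟨hjinl, hjinr⟩ :=
    divisibilityIdeal_le_span_two_iff.1 ((divisibilityIdeal_refRoot_le_span_two_iff j).2 hj)
  refine ⟨j, hj, ?_⟩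
  rintro (i | i | i)
  exacts [dvd_sub (hinl i) (hjinl i), dvd_sub (hinr i) (hjinr i),
    (ZMod.intCast_eq_intCast_iff_dvd_sub _ _ 2).1 (hcongr i)]

theorem IsRoot.exists_refRoot_mem_orbit {v : I22 → ℤ} (hv : IsRoot v) (hneg : qL v < 0) :
    ∃ j, v ∈ orbit (stableOrthogonalGroup qL) (refRoot j) := by
  have hdiv := hv.divisibilityIdeal_le
  simp only [mem_orbit_stableOrthogonalGroup_iff isHyperbolicQuadruple_single]
  by_cases htop : divisibilityIdeal qL v = ⊤
  · have hq : qL v = -1 := by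
      have hunit := Ideal.span_singleton_eq_top.1 (top_le_iff.1 (htop ▸ hdiv))
      exact (Int.isUnit_iff.1 hunit).resolve_left (by omega)
    have hdiv₂ : divisibilityIdeal qL (refRoot 2) = ⊤ := by
      rw [divisibilityIdeal_refRoot, if_pos rfl]
    refine ⟨2, hq.trans (qL_refRoot 2).symm, htop.trans hdiv₂.symm, ?_⟩
    rw [hdiv₂, Submodule.top_smul]
    trivial
  have heq := divisibilityIdeal_eq_span_two hv.1.two_mem_divisibilityIdeal htop
  obtain ⟨j, hj, hcongr⟩ := hv.1.exists_refRoot_congr_mod_two heq.le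
  have hdivj : divisibilityIdeal qL (refRoot j) = Ideal.span {2} := by
    rw [divisibilityIdeal_refRoot, if_neg hj]
  have hsub : v - refRoot j ∈ Ideal.span {(2 : ℤ)} • (⊤ : Submodule ℤ (I22 → ℤ)) :=
    mem_span_singleton_smul_top_pi.2 hcongr
  refine ⟨j, ?_, heq.trans hdivj.symm, hdivj ▸ hsub⟩
  have h4 := sq_dvd_sub_of_congr hdivj.le hsub
  have hqv := hv.qL_eq hneg
  rw [qL_refRoot] at h4 ⊢
  split_ifs at h4 ⊢ <;> omega

theorem refRoot_eq_of_mem_orbit {j k : Fin 4}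
    (h : refRoot k ∈ orbit (stableOrthogonalGroup qL) (refRoot j)) : j = k := by
  obtain ⟨-, hdiv, hsub⟩ := invariants_of_mem_orbit h
  by_cases hj : j = 2
  · have hk := divisibilityIdeal_refRoot_le_span_two_iff k
    rw [hdiv, divisibilityIdeal_refRoot_le_span_two_iff] at hk
    exact hj.trans (not_ne_iff.1 fun h => hk.2 h hj).symm
  · rw [divisibilityIdeal_refRoot, if_neg hj, mem_span_singleton_smul_top_pi] at hsub
    exact refRoot_injective_mod_two hsub

end Roots

/-- Every root of `Λ` of negative square lies in the `Õ(Λ)`-orbit of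
exactly one of `e₁`, `e₂`, `e₃`, `e₁+e₂`. -/
theorem stmt_4 (v : I22 → ℤ) (hroot : IsRoot v) (hneg : bilL v v < 0) :
    ∃! j : Fin 4, ∃ P : Matrix I22 I22 ℤ, InStableO P ∧ P.mulVec (refRoot j) = v := by
  simp only [exists_inStableO_mulVec_eq_iff]
  obtain ⟨j, hj⟩ := hroot.exists_refRoot_mem_orbit (by linarith [bilL_self v])
  exact ⟨j, hj, fun k hk => refRoot_eq_of_mem_orbit
    (mem_orbit_trans (MulAction.mem_orbit_symm.1 hj) hk)⟩
end

section
/- Let V be a 6-dimensional complex vector space and A ⊆ ⋀³V a Lagrangian subspace. If the set Y_A[3] := {lines ℂv ⊆ V : dim_ℂ(A ∩ (v∧⋀²V)) ≥ 3} is infinite, then either Θ_A is infinite, or there exists W ∈ Θ_A with dim_ℂ(A ∩ (⋀²W∧V)) ≥ 3. -/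
/-!
Suppose `Θ_A` is finite; we look for `W ∈ Θ_A` with `dim (A ∩ (⋀²W ∧ V)) ≥ 3`.

*Tangent directions.* The lines of `Y_A[3]`, each with three independent elements `v ∧ κ i` of `A`,
are parametrized by an algebraic set. An infinite algebraic set is uncountable, so infinitely many
of its points are limits of others, and differentiating `ω = 0` on `A` along secants gives, for
infinitely many lines `ℂv`, a direction `w` with `v ∧ w ∧ κ i ∧ κ j = 0` for all `i` and `j`. The
same holds inside any subspace of `V`.

*Members of `Θ_A`.* Modulo `v` and `w` the `κ i` become isotropic, hence decomposable, bivectors of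
a four-dimensional space, whose planes pairwise meet. Either the planes share a line or they lie in
a common three-dimensional space; an eigenvector in the first case, and a zero of a binary quadratic
form in the second, yields a decomposable combination of the `v ∧ κ i`, that is, a member of `Θ_A`
containing `v`. As `Θ_A` is finite, one `W ∈ Θ_A` contains infinitely many lines of `Y_A[3]`.

*Trichotomy.* Inside this `W`, infinitely many lines `ℂv` have a tangent direction `w ∈ W`. At each
of them either `dim (A ∩ (⋀²W ∧ V)) ≥ 3`, or a second member of `Θ_A` passes through `v`, or some
`τ ∈ A ∩ (⋀²W ∧ V)` satisfies `{u ∈ W | u ∧ τ = 0} = ℂv`. The second case occurs for finitely many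
lines, since two members of `Θ_A` meeting in a plane span a pencil in `Θ_A`. If the third occurs for
two lines, the two elements `τ` and a generator of `⋀³W` are independent, so the first case holds.
-/

open Module ExteriorAlgebra

noncomputable section

variable {V : Type*} [AddCommGroup V] [Module ℂ V]

/-- The subspace `v ∧ ⋀²V` of `⋀³V`, inside the exterior algebra. -/
def vWedge2 (v : V) : Submodule ℂ (ExteriorAlgebra ℂ V) :=
  Submodule.map (LinearMap.mulLeft ℂ (ι ℂ v)) (⋀[ℂ]^2 V)

/-- The line `⋀³W` for a subspace `W ⊆ V`, inside the exterior algebra. -/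
def wedge3 (W : Submodule ℂ V) : Submodule ℂ (ExteriorAlgebra ℂ V) :=
  Submodule.span ℂ
    {z | ∃ w₁ ∈ W, ∃ w₂ ∈ W, ∃ w₃ ∈ W, z = ι ℂ w₁ * ι ℂ w₂ * ι ℂ w₃}

/-- The subspace `⋀²W ∧ V` for a subspace `W ⊆ V`, inside the exterior algebra. -/
def wedge2V (W : Submodule ℂ V) : Submodule ℂ (ExteriorAlgebra ℂ V) :=
  Submodule.span ℂ
    {z | ∃ w₁ ∈ W, ∃ w₂ ∈ W, ∃ u : V, z = ι ℂ w₁ * ι ℂ w₂ * ι ℂ u}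

end

section PolynomialSystems

variable {K : Type*} [Field K]

theorem isAlgebraic_of_rank_le_aleph0 {L : Type*} [Field L] [Algebra K L] [Uncountable K]
    (h : Module.rank K L ≤ Cardinal.aleph0) : Algebra.IsAlgebraic K L := by
  refine ⟨fun x ↦ by_contra fun hx ↦ ?_⟩
  have hcard := (Transcendental.linearIndependent_sub_inv hx).cardinal_lift_le_rank.trans
    (Cardinal.lift_le.mpr h)
  rw [Cardinal.lift_aleph0, Cardinal.lift_le_aleph0] at hcard
  exact not_countable (Cardinal.mk_le_aleph0_iff.mp hcard)

theorem exists_common_zero_of_span_ne_top [IsAlgClosed K] [Uncountable K] {σ : Type*} [Countable σ]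
    {E : Set (MvPolynomial σ K)} (hE : Ideal.span E ≠ ⊤) :
    ∃ x : σ → K, ∀ p ∈ E, MvPolynomial.eval x p = 0 := by
  obtain ⟨m, hm, hle⟩ := Ideal.exists_le_maximal _ hE
  let : Field (MvPolynomial σ K ⧸ m) := Ideal.Quotient.field m
  have hrank : Module.rank K (MvPolynomial σ K ⧸ m) ≤ Cardinal.aleph0 := by
    refine (LinearMap.rank_le_of_surjective (Ideal.Quotient.mkₐ K m).toLinearMap
      (Ideal.Quotient.mkₐ_surjective K m)).trans ?_
    rw [MvPolynomial.rank_eq_lift, Cardinal.lift_le_aleph0]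
    exact Cardinal.mk_le_aleph0
  have := isAlgebraic_of_rank_le_aleph0 hrank
  have hbij := IsAlgClosed.algebraMap_bijective_of_isIntegral (k := K)
    (K := MvPolynomial σ K ⧸ m)
  let residue := (AlgEquiv.ofBijective (Algebra.ofId K _) hbij).symm.toAlgHom.comp
    (Ideal.Quotient.mkₐ K m)
  refine ⟨fun i ↦ residue (MvPolynomial.X i), fun p hp ↦ ?_⟩
  have hzero : residue p = 0 := by
    have : Ideal.Quotient.mkₐ K m p = 0 :=
      Ideal.Quotient.eq_zero_iff_mem.mpr (hle (Ideal.subset_span hp))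
    rw [AlgHom.comp_apply, this, map_zero]
  rw [← hzero]
  conv_rhs => rw [MvPolynomial.aeval_unique residue, MvPolynomial.aeval_eq_eval]
  rfl

theorem exists_common_zero_of_forall_finset [IsAlgClosed K] [Uncountable K] {σ κ : Type*}
    [Countable σ] (p : κ → MvPolynomial σ K)
    (hp : ∀ F : Finset κ, ∃ x : σ → K, ∀ i ∈ F, MvPolynomial.eval x (p i) = 0) :
    ∃ x : σ → K, ∀ i, MvPolynomial.eval x (p i) = 0 := by
  suffices h : Ideal.span (Set.range p) ≠ ⊤ by
    simpa only [Set.forall_mem_range] using exists_common_zero_of_span_ne_top h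
  intro htop
  obtain ⟨c, hc⟩ := Finsupp.mem_ideal_span_range_iff_exists_finsupp.mp
    ((Ideal.eq_top_iff_one _).mp htop)
  obtain ⟨x, hx⟩ := hp c.support
  have hone := congrArg (MvPolynomial.eval x) hc
  rw [Finsupp.sum, map_sum, map_one, Finset.sum_eq_zero fun i hi ↦ by simp [hx i hi]] at hone
  exact zero_ne_one hone

/- If the values of `q` formed a countable set `C`, adjoining an unknown `y c` and the equation
`y c * (q - c) = 1` for each `c ∈ C` would keep the system finitely solvable, hence solvable. -/
theorem not_countable_image_eval_of_infinite [IsAlgClosed K] [Uncountable K] {σ κ : Type*}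
    [Countable σ] (p : κ → MvPolynomial σ K) (q : MvPolynomial σ K)
    (hinf : ((fun x ↦ MvPolynomial.eval x q) ''
      {x | ∀ i, MvPolynomial.eval x (p i) = 0}).Infinite) :
    ¬ ((fun x ↦ MvPolynomial.eval x q) '' {x | ∀ i, MvPolynomial.eval x (p i) = 0}).Countable := by
  set C := (fun x ↦ MvPolynomial.eval x q) '' {x | ∀ i, MvPolynomial.eval x (p i) = 0}
  intro hcount
  have : Countable C := hcount
  let avoid (c : C) : MvPolynomial (σ ⊕ C) K :=
    MvPolynomial.X (Sum.inr c) *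
      (MvPolynomial.rename Sum.inl q - MvPolynomial.C (c : K)) - 1
  let system : κ ⊕ C → MvPolynomial (σ ⊕ C) K :=
    Sum.elim (fun i ↦ MvPolynomial.rename Sum.inl (p i)) avoid
  have hfinite (F : Finset (κ ⊕ C)) : ∃ x, ∀ i ∈ F, MvPolynomial.eval x (system i) = 0 := by
    obtain ⟨_, ⟨x, hx, rfl⟩, hxF⟩ := hinf.exists_notMem_finite
      ((F.finite_toSet.preimage Sum.inr_injective.injOn).image ((↑) : C → K))
    refine ⟨Sum.elim x fun c ↦ (MvPolynomial.eval x q - c)⁻¹, ?_⟩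
    rintro (i | c) hi
    · simpa [system, MvPolynomial.eval_rename] using hx i
    · have hne : MvPolynomial.eval x q - c ≠ 0 := fun h ↦ hxF ⟨c, hi, (sub_eq_zero.mp h).symm⟩
      simp [system, avoid, MvPolynomial.eval_rename, inv_mul_cancel₀ hne]
  obtain ⟨x, hx⟩ := exists_common_zero_of_forall_finset system hfinite
  have hmem : MvPolynomial.eval (x ∘ Sum.inl) q ∈ C :=
    ⟨x ∘ Sum.inl, fun i ↦ by simpa [system, MvPolynomial.eval_rename] using hx (Sum.inl i), rfl⟩
  simpa [system, avoid, MvPolynomial.eval_rename] using hx (Sum.inr ⟨_, hmem⟩)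

end PolynomialSystems

section PolynomialFunctions

variable {K M N P X : Type*} [Field K] [AddCommGroup M] [Module K M] [AddCommGroup N] [Module K N]
  [AddCommGroup P] [Module K P] [AddCommGroup X] [Module K X]

variable (K M) in
/-- The algebra of polynomial functions on a vector space, generated by the linear functionals. -/
def polyFunctions : Subalgebra K (M → K) :=
  Algebra.adjoin K (Set.range fun φ : Dual K M ↦ (φ : M → K))

theorem dual_mem_polyFunctions (φ : Dual K M) : ⇑φ ∈ polyFunctions K M :=
  Algebra.subset_adjoin ⟨φ, rfl⟩

theorem exists_eval_repr_eq_of_mem_polyFunctions {σ : Type*} [Finite σ] (b : Basis σ K M)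
    {f : M → K} (hf : f ∈ polyFunctions K M) :
    ∃ p : MvPolynomial σ K, ∀ x, MvPolynomial.eval (b.repr x) p = f x := by
  have := Fintype.ofFinite σ
  induction hf using Algebra.adjoin_induction with
  | mem f hf =>
    obtain ⟨φ, rfl⟩ := hf
    refine ⟨∑ i, MvPolynomial.C (φ (b i)) * MvPolynomial.X i, fun x ↦ ?_⟩
    simpa [-Basis.sum_repr, mul_comm] using congrArg φ (b.sum_repr x)
  | algebraMap c => exact ⟨MvPolynomial.C c, fun x ↦ by simp⟩
  | add f g _ _ hf hg =>
    obtain ⟨⟨p, hp⟩, q, hq⟩ := hf, hg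
    exact ⟨p + q, fun x ↦ by simp [hp, hq]⟩
  | mul f g _ _ hf hg =>
    obtain ⟨⟨p, hp⟩, q, hq⟩ := hf, hg
    exact ⟨p * q, fun x ↦ by simp [hp, hq]⟩

variable (K) in
/-- A map between vector spaces is polynomial if its composite with every linear functional is a
polynomial function. -/
def IsPolynomialMap (F : M → N) : Prop :=
  ∀ φ : Dual K N, φ ∘ F ∈ polyFunctions K M

theorem isPolynomialMap_linearMap (f : M →ₗ[K] N) : IsPolynomialMap K f :=
  fun φ ↦ dual_mem_polyFunctions (φ ∘ₗ f)

theorem IsPolynomialMap.linear_comp {F : X → M} (hF : IsPolynomialMap K F) (f : M →ₗ[K] N) :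
    IsPolynomialMap K (f ∘ F) :=
  fun φ ↦ hF (φ ∘ₗ f)

theorem IsPolynomialMap.bilinear_comp [Module.Finite K N] {F : X → M} {G : X → N}
    (hF : IsPolynomialMap K F) (hG : IsPolynomialMap K G) (B : M →ₗ[K] N →ₗ[K] P) :
    IsPolynomialMap K fun x ↦ B (F x) (G x) := by
  intro φ
  let e := finBasis K N
  have hexpand : φ ∘ (fun x ↦ B (F x) (G x)) =
      ∑ i, (e.coord i ∘ G) * ((φ ∘ₗ B.flip (e i)) ∘ F) := by
    funext x
    have hrepr := congrArg (φ ∘ₗ B (F x)) (e.sum_repr (G x))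
    simpa [-Basis.sum_repr, eq_comm] using hrepr
  rw [hexpand]
  exact sum_mem fun i _ ↦ mul_mem (hG _) (hF _)

variable (K) in
/-- A subset of a vector space is algebraic if it is the common zero set of a family of polynomial
functions. -/
def IsAlgebraicSet (S : Set M) : Prop :=
  ∃ E ⊆ (polyFunctions K M : Set (M → K)), S = {x | ∀ f ∈ E, f x = 0}

theorem IsAlgebraicSet.iInter {ι : Sort*} {S : ι → Set M} (hS : ∀ i, IsAlgebraicSet K (S i)) :
    IsAlgebraicSet K (⋂ i, S i) := by
  choose E hE hSE using hS
  refine ⟨⋃ i, E i, Set.iUnion_subset hE, ?_⟩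
  ext x
  simp only [hSE, Set.mem_iInter, Set.mem_ofPred_eq, Set.mem_iUnion]
  exact ⟨fun h f ⟨i, hf⟩ ↦ h i f hf, fun h i f hf ↦ h f ⟨i, hf⟩⟩

theorem IsAlgebraicSet.inter {S T : Set M} (hS : IsAlgebraicSet K S) (hT : IsAlgebraicSet K T) :
    IsAlgebraicSet K (S ∩ T) := by
  rw [Set.inter_eq_iInter]
  exact .iInter fun i ↦ by cases i <;> assumption

theorem IsPolynomialMap.isAlgebraicSet_eq {F : M → N} (hF : IsPolynomialMap K F) (n : N) :
    IsAlgebraicSet K {x | F x = n} := by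
  refine ⟨Set.range fun φ : Dual K N ↦ φ ∘ F - algebraMap K (M → K) (φ n), ?_, ?_⟩
  · rintro _ ⟨φ, rfl⟩
    exact sub_mem (hF φ) (Subalgebra.algebraMap_mem _ _)
  · ext x
    simp only [Set.mem_ofPred_eq, Set.forall_mem_range]
    rw [← sub_eq_zero, ← Module.forall_dual_apply_eq_zero_iff K]
    simp

theorem IsPolynomialMap.isAlgebraicSet_mem {F : M → N} (hF : IsPolynomialMap K F)
    (A : Submodule K N) : IsAlgebraicSet K {x | F x ∈ A} := by
  simpa using (hF.linear_comp A.mkQ).isAlgebraicSet_eq 0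

theorem IsAlgebraicSet.not_countable_image_dual [IsAlgClosed K] [Uncountable K] [Module.Finite K M]
    {S : Set M} (hS : IsAlgebraicSet K S) (φ : Dual K M) (hinf : (φ '' S).Infinite) :
    ¬ (φ '' S).Countable := by
  obtain ⟨E, hE, rfl⟩ := hS
  let e := finBasis K M
  choose p hp using fun f : E ↦ exists_eval_repr_eq_of_mem_polyFunctions e (hE f.2)
  obtain ⟨q, hq⟩ := exists_eval_repr_eq_of_mem_polyFunctions e
    (dual_mem_polyFunctions φ)
  have himage : φ '' {x | ∀ f ∈ E, f x = 0} =
      (fun y ↦ MvPolynomial.eval y q) '' {y | ∀ f, MvPolynomial.eval y (p f) = 0} := by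
    ext t
    constructor
    · rintro ⟨x, hx, rfl⟩
      exact ⟨e.repr x, fun f ↦ (hp f x).trans (hx f f.2), hq x⟩
    · rintro ⟨y, hy, rfl⟩
      have hrepr : ⇑(e.repr (e.equivFun.symm y)) = y := e.equivFun.apply_symm_apply y
      refine ⟨e.equivFun.symm y, fun f hf ↦ ?_, ?_⟩
      · exact (hp ⟨f, hf⟩ _).symm.trans (by rw [hrepr]; exact hy _)
      · rw [← hq, hrepr]
  rw [himage] at hinf ⊢
  exact not_countable_image_eval_of_infinite p q hinf

end PolynomialFunctions

section Lines

variable {K V : Type*} [Field K] [AddCommGroup V] [Module K V]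

theorem exists_dual_image_infinite [Module.Finite K V] {S : Set V} (hS : S.Infinite) :
    ∃ φ : Dual K V, (φ '' S).Infinite := by
  by_contra! hfin
  let e := finBasis K V
  refine hS (.of_finite_image (f := e.equivFun) ?_ e.equivFun.injective.injOn)
  refine (Set.Finite.pi' fun i ↦ hfin (e.coord i)).subset ?_
  rintro _ ⟨x, hx, rfl⟩ i
  exact ⟨x, hx, rfl⟩

theorem exists_dual_infinite_apply_eq_one [Module.Finite K V] {T : Set V}
    (hsmul : ∀ v ∈ T, ∀ c : K, c ≠ 0 → c • v ∈ T) (hzero : (0 : V) ∉ T)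
    (hT : ((fun v ↦ Submodule.span K {v}) '' T).Infinite) :
    ∃ θ : Dual K V, {v ∈ T | θ v = 1}.Infinite := by
  by_contra! hfin
  let e := finBasis K V
  refine hT ((Set.finite_iUnion fun i ↦ (hfin (e.coord i)).image
    fun v ↦ Submodule.span K {v}).subset ?_)
  rintro _ ⟨v, hv, rfl⟩
  obtain ⟨i, hi⟩ : ∃ i, e.coord i v ≠ 0 := by
    by_contra! h
    exact hzero ((e.forall_coord_eq_zero_iff.mp h) ▸ hv)
  refine Set.mem_iUnion.mpr ⟨i, (e.coord i v)⁻¹ • v, ⟨hsmul v hv _ (inv_ne_zero hi), ?_⟩, ?_⟩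
  · rw [map_smul, smul_eq_mul, inv_mul_cancel₀ hi]
  · exact Submodule.span_singleton_smul_eq (inv_ne_zero hi).isUnit v

theorem exists_linearMap_apply_eq_single {ι : Type*} [DecidableEq ι]
    {a : ι → V} (ha : LinearIndependent K a) :
    ∃ r : V →ₗ[K] ι → K, ∀ i, r (a i) = Pi.single i 1 := by
  obtain ⟨r, hr⟩ := LinearMap.exists_extend
    ((Basis.span ha).constr K fun i ↦ (Pi.single i 1 : ι → K))
  refine ⟨r, fun i ↦ ?_⟩
  have hri := congrArg (fun f ↦ f (Basis.span ha i)) hr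
  rwa [Basis.constr_basis, LinearMap.comp_apply, Submodule.subtype_apply, Basis.span_apply] at hri

end Lines

section UncountableFamily

variable {K V E G : Type*} [Field K] [AddCommGroup V] [Module K V] [AddCommGroup E] [Module K E]
  [AddCommGroup G] [Module K G]

theorem finrank_inf_range_apply_smul (b : V →ₗ[K] E →ₗ[K] G) (A : Submodule K G) (v : V) {c : K}
    (hc : c ≠ 0) :
    finrank K ↥(A ⊓ (b (c • v)).range) = finrank K ↥(A ⊓ (b v).range) := by
  rw [map_smul, LinearMap.range_smul _ _ hc]

variable [Module.Finite K E] [Module.Finite K G]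

theorem isAlgebraicSet_independent_fibre (b : V →ₗ[K] E →ₗ[K] G) (A : Submodule K G)
    (P : Submodule K V) (θ : Dual K V) (n : ℕ) :
    IsAlgebraicSet K {q : V × (Fin n → E) × (G →ₗ[K] Fin n → K) | (q.1 ∈ P ∧ θ q.1 = 1) ∧
      ∀ i, b q.1 (q.2.1 i) ∈ A ∧ q.2.2 (b q.1 (q.2.1 i)) = Pi.single i 1} := by
  let family : (V × (Fin n → E) × (G →ₗ[K] Fin n → K)) →ₗ[K] Fin n → E :=
    LinearMap.fst K _ _ ∘ₗ LinearMap.snd K _ _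
  let certificate : (V × (Fin n → E) × (G →ₗ[K] Fin n → K)) →ₗ[K] G →ₗ[K] Fin n → K :=
    LinearMap.snd K _ _ ∘ₗ LinearMap.snd K _ _
  have hvec := isPolynomialMap_linearMap (LinearMap.fst K V ((Fin n → E) × (G →ₗ[K] Fin n → K)))
  have hmul (i : Fin n) := hvec.bilinear_comp
    (isPolynomialMap_linearMap (LinearMap.proj i ∘ₗ family)) b
  have hcert (i : Fin n) := (isPolynomialMap_linearMap certificate).bilinear_comp
    (hmul i) LinearMap.id
  convert ((hvec.isAlgebraicSet_mem P).inter ((hvec.linear_comp θ).isAlgebraicSet_eq 1)).inter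
    (.iInter fun i ↦ ((hmul i).isAlgebraicSet_mem A).inter
      ((hcert i).isAlgebraicSet_eq (Pi.single i 1))) using 1
  ext q
  simp [family, certificate]

/-- The linear independence of `b v ∘ y` is made algebraic by a linear map sending it to the
standard basis. -/
theorem exists_not_countable_family [IsAlgClosed K] [Uncountable K] [Module.Finite K V]
    (b : V →ₗ[K] E →ₗ[K] G) (A : Submodule K G) (P : Submodule K V) (n : ℕ)
    (hinf : ((fun v ↦ Submodule.span K {v}) ''
      {v | v ∈ P ∧ v ≠ 0 ∧ n ≤ finrank K ↥(A ⊓ (b v).range)}).Infinite) :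
    ∃ (θ : Dual K V) (S : Set (V × (Fin n → E))), ¬ S.Countable ∧ Set.InjOn Prod.fst S ∧
      ∀ q ∈ S, (q.1 ∈ P ∧ θ q.1 = 1) ∧ (∀ i, b q.1 (q.2 i) ∈ A) ∧
        LinearIndependent K fun i ↦ b q.1 (q.2 i) := by
  obtain ⟨θ, hθ⟩ := exists_dual_infinite_apply_eq_one
    (T := {v | v ∈ P ∧ v ≠ 0 ∧ n ≤ finrank K ↥(A ⊓ (b v).range)})
    (fun v hv c hc ↦ ⟨P.smul_mem c hv.1, smul_ne_zero hc hv.2.1,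
      (finrank_inf_range_apply_smul b A v hc).symm ▸ hv.2.2⟩) (fun h ↦ h.2.1 rfl) hinf
  obtain ⟨φ, hφ⟩ := exists_dual_image_infinite (K := K) hθ
  set C := {q : V × (Fin n → E) × (G →ₗ[K] Fin n → K) | (q.1 ∈ P ∧ θ q.1 = 1) ∧
      ∀ i, b q.1 (q.2.1 i) ∈ A ∧ q.2.2 (b q.1 (q.2.1 i)) = Pi.single i 1}
  have hC : ¬ ((φ ∘ₗ LinearMap.fst K V _) '' C).Countable := by
    refine (isAlgebraicSet_independent_fibre b A P θ n).not_countable_image_dual _ (hφ.mono ?_)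
    rintro _ ⟨v, ⟨⟨hvP, -, hrank⟩, hv⟩, rfl⟩
    obtain ⟨g, hg⟩ := exists_linearIndependent_of_le_finrank hrank
    choose y hy using fun i ↦ (g i).2.2
    obtain ⟨r, hr⟩ := exists_linearMap_apply_eq_single (hg.map' _ (Submodule.ker_subtype _))
    exact ⟨(v, y, r), ⟨⟨hvP, hv⟩, fun i ↦ ⟨hy i ▸ (g i).2.1, (hy i).symm ▸ hr i⟩⟩, rfl⟩
  obtain ⟨S, hSC, hbij⟩ := Set.exists_subset_bijOn C (φ ∘ₗ LinearMap.fst K V _)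
  have hfst : Set.InjOn Prod.fst S := fun p hp q hq h ↦ hbij.injOn hp hq (congrArg φ h)
  let forget : V × (Fin n → E) × (G →ₗ[K] Fin n → K) → V × (Fin n → E) := fun q ↦ (q.1, q.2.1)
  have hforget : Set.InjOn forget S := fun p hp q hq h ↦ hfst hp hq (congrArg (fun q ↦ q.1) h)
  refine ⟨θ, forget '' S, fun hcount ↦ hC ?_, ?_, ?_⟩
  · rw [← hbij.image_eq]
    exact (Set.countable_of_injective_of_countable_image hforget hcount).image _
  · rintro _ ⟨p, hp, rfl⟩ _ ⟨q, hq, rfl⟩ h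
    exact congrArg forget (hfst hp hq h)
  · rintro _ ⟨q, hq, rfl⟩
    obtain ⟨hP, hA⟩ := hSC hq
    refine ⟨hP, fun i ↦ (hA i).1, .of_comp q.2.2 ?_⟩
    convert (Pi.basisFun K (Fin n)).linearIndependent using 1
    ext1 i
    simpa using (hA i).2

end UncountableFamily

section Secants

open Filter Topology

theorem countable_of_countable_accPt {X : Type*} [TopologicalSpace X] [SecondCountableTopology X]
    {S : Set X} (hS : {x ∈ S | AccPt x (𝓟 S)}.Countable) : S.Countable := by
  have hdiscrete : DiscreteTopology ({x ∈ S | ¬ AccPt x (𝓟 S)} : Set X) :=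
    discreteTopology_of_noAccPts fun x hx hacc ↦
      hx.2 (hacc.mono (principal_mono.mpr (Set.sep_subset _ _)))
  have hisolated : {x ∈ S | ¬ AccPt x (𝓟 S)}.Countable :=
    Set.countable_coe_iff.mp (TopologicalSpace.separableSpace_iff_countable.mp inferInstance)
  refine (hS.union hisolated).mono fun x hx ↦ ?_
  simpa only [Set.mem_union, Set.mem_sep_iff, hx, true_and] using em _

variable {𝕜 : Type*} [RCLike 𝕜] {X Y : Type*} [NormedAddCommGroup X] [NormedSpace 𝕜 X]

theorem exists_tendsto_secant_of_accPt [ProperSpace X] [TopologicalSpace Y] {S : Set (X × Y)}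
    {p : X × Y} (hacc : AccPt p (𝓟 S)) (hp : p ∈ S) (hinj : Set.InjOn Prod.fst S) :
    ∃ (l : Filter (X × Y)) (z : X), l.NeBot ∧ l ≤ 𝓝[S] p ∧ z ≠ 0 ∧
      Tendsto (fun q : X × Y ↦ (‖q.1 - p.1‖⁻¹ : 𝕜) • (q.1 - p.1)) l (𝓝 z) := by
  have := accPt_principal_iff_nhdsWithin.mp hacc
  let u := Ultrafilter.of (𝓝[S \ {p}] p)
  have hu : u ≤ 𝓝[S \ {p}] p := Ultrafilter.of_le _
  have hsphere : ∀ᶠ q : X × Y in u,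
      (‖q.1 - p.1‖⁻¹ : 𝕜) • (q.1 - p.1) ∈ Metric.sphere (0 : X) 1 := by
    filter_upwards [hu self_mem_nhdsWithin] with q hq
    have hne : q.1 - p.1 ≠ 0 := sub_ne_zero.mpr fun h ↦ hq.2 (hinj hq.1 hp h)
    simpa using norm_smul_inv_norm (𝕜 := 𝕜) hne
  obtain ⟨z, hz, hlim⟩ := (isCompact_sphere (0 : X) 1).ultrafilter_le_nhds
    (u.map fun q : X × Y ↦ (‖q.1 - p.1‖⁻¹ : 𝕜) • (q.1 - p.1)) (le_principal_iff.mpr hsphere)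
  exact ⟨u, z, u.neBot, hu.trans (nhdsWithin_mono p Set.sdiff_subset),
    ne_zero_of_mem_unit_sphere ⟨z, hz⟩, hlim⟩

theorem continuous_uncurry_of_finiteDimensional [NormedAddCommGroup Y] [NormedSpace 𝕜 Y]
    [FiniteDimensional 𝕜 X] [FiniteDimensional 𝕜 Y] (F : X →ₗ[𝕜] Y →ₗ[𝕜] 𝕜) :
    Continuous fun q : X × Y ↦ F q.1 q.2 :=
  (LinearMap.toContinuousLinearMap
    (LinearMap.toContinuousLinearMap.toLinearMap ∘ₗ F)).isBoundedBilinearMap.continuous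

variable {G : Type*} [AddCommGroup G] [Module 𝕜 G] [FiniteDimensional 𝕜 X]
  [NormedAddCommGroup Y] [NormedSpace 𝕜 Y] [FiniteDimensional 𝕜 Y]

/- For `q = (x', y')` near `p = (x, y)` in `S`, both `b x' y' i` and `b x (y j)` lie in `A`, and
`b x (y' i)` is orthogonal to `b x (y j)`; so `b (x' - x) (y' i)` is orthogonal to `b x (y j)`, and
one passes to the limit along a secant. -/
theorem exists_tangent_of_accPt {n : ℕ} (b : X →ₗ[𝕜] Y →ₗ[𝕜] G)
    (ω : G →ₗ[𝕜] G →ₗ[𝕜] 𝕜)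
    (hω : ∀ x y y', ω (b x y) (b x y') = 0) {A : Submodule 𝕜 G}
    (hA : ∀ α ∈ A, ∀ β ∈ A, ω α β = 0) {P : Submodule 𝕜 X} {θ : Dual 𝕜 X}
    {S : Set (X × (Fin n → Y))}
    (hP : ∀ q ∈ S, q.1 ∈ P ∧ θ q.1 = 1) (hSA : ∀ q ∈ S, ∀ i, b q.1 (q.2 i) ∈ A)
    (hinj : Set.InjOn Prod.fst S) {p : X × (Fin n → Y)} (hp : p ∈ S) (hacc : AccPt p (𝓟 S)) :
    ∃ z ∈ P, LinearIndependent 𝕜 ![p.1, z] ∧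
      ∀ i j, ω (b z (p.2 i)) (b p.1 (p.2 j)) = 0 := by
  have := FiniteDimensional.proper_rclike 𝕜 X
  obtain ⟨l, z, hl, hlp, hz, hlim⟩ := exists_tendsto_secant_of_accPt (𝕜 := 𝕜) hacc hp hinj
  have hlS : ∀ᶠ q in l, q ∈ S := hlp self_mem_nhdsWithin
  have hzP : z ∈ P := by
    refine P.closed_of_finiteDimensional.mem_of_tendsto hlim (hlS.mono fun q hq ↦ ?_)
    exact P.smul_mem _ (P.sub_mem (hP q hq).1 (hP p hp).1)
  have hθz : θ z = 0 := by
    refine tendsto_nhds_unique ((θ.continuous_of_finiteDimensional.tendsto z).comp hlim)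
      (tendsto_const_nhds.congr' (hlS.mono fun q hq ↦ ?_))
    simp [(hP q hq).2, (hP p hp).2]
  refine ⟨z, hzP, ?_, fun i j ↦ ?_⟩
  · refine (LinearIndependent.pair_iff' fun h ↦ ?_).mpr fun c hc ↦ hz ?_
    · simpa [h] using (hP p hp).2
    · rw [← hc, map_smul, (hP p hp).2, smul_eq_mul, mul_one] at hθz
      rw [← hc, hθz, zero_smul]
  · let F : X →ₗ[𝕜] Y →ₗ[𝕜] 𝕜 := b.compr₂ (ω.flip (b p.1 (p.2 j)))
    have hy : Tendsto (fun q : X × (Fin n → Y) ↦ q.2 i) l (𝓝 (p.2 i)) :=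
      (((continuous_apply i).comp continuous_snd).tendsto p).mono_left
        (hlp.trans nhdsWithin_le_nhds)
    refine tendsto_nhds_unique (((continuous_uncurry_of_finiteDimensional F).tendsto _).comp
      (hlim.prodMk_nhds hy)) (tendsto_const_nhds.congr' (hlS.mono fun q hq ↦ ?_))
    have hmem : F q.1 (q.2 i) = 0 := hA _ (hSA q hq i) _ (hSA p hp j)
    have hfibre : F p.1 (q.2 i) = 0 := hω _ _ _
    simp [hmem, hfibre]

end Secants

section Tangents

variable {V E G : Type*} [AddCommGroup V] [Module ℂ V] [FiniteDimensional ℂ V]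
  [AddCommGroup E] [Module ℂ E] [FiniteDimensional ℂ E]
  [AddCommGroup G] [Module ℂ G] [FiniteDimensional ℂ G]

/-- The auxiliary norms on `V` and `E` only serve to pass to limits. -/
theorem infinite_setOf_tangent (b : V →ₗ[ℂ] E →ₗ[ℂ] G) (ω : G →ₗ[ℂ] G →ₗ[ℂ] ℂ)
    (hω : ∀ x y y', ω (b x y) (b x y') = 0) {A : Submodule ℂ G}
    (hA : ∀ α ∈ A, ∀ β ∈ A, ω α β = 0) (P : Submodule ℂ V) (n : ℕ)
    (hinf : ((fun v ↦ Submodule.span ℂ {v}) ''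
      {v | v ∈ P ∧ v ≠ 0 ∧ n ≤ finrank ℂ ↥(A ⊓ (b v).range)}).Infinite) :
    ((fun v ↦ Submodule.span ℂ {v}) '' {v | v ∈ P ∧ ∃ z ∈ P, LinearIndependent ℂ ![v, z] ∧
      ∃ y : Fin n → E, (∀ i, b v (y i) ∈ A) ∧ (LinearIndependent ℂ fun i ↦ b v (y i)) ∧
        ∀ i j, ω (b z (y i)) (b v (y j)) = 0}).Infinite := by
  let normV := NormedAddCommGroup.induced V _ (finBasis ℂ V).equivFun
    (finBasis ℂ V).equivFun.injective
  let := NormedSpace.induced ℂ V _ (finBasis ℂ V).equivFun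
  let normE := NormedAddCommGroup.induced E _ (finBasis ℂ E).equivFun
    (finBasis ℂ E).equivFun.injective
  let := NormedSpace.induced ℂ E _ (finBasis ℂ E).equivFun
  have : Uncountable ℂ := ⟨fun _ ↦ not_countable_complex Set.countable_univ⟩
  obtain ⟨θ, S, hS, hinj, hprop⟩ := exists_not_countable_family b A P n hinf
  have hacc : {p ∈ S | AccPt p (Filter.principal S)}.Infinite := fun hfin ↦
    hS (countable_of_countable_accPt hfin.countable)
  have hline : Set.InjOn (fun p : V × (Fin n → E) ↦ Submodule.span ℂ {p.1}) S := by
    intro p hp q hq h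
    obtain ⟨c, hc⟩ := Submodule.mem_span_singleton.mp
      ((congrArg (p.1 ∈ ·) h).mp (Submodule.mem_span_singleton_self p.1))
    have hc1 : c = 1 := by simpa [(hprop p hp).1.2, (hprop q hq).1.2] using congrArg θ hc
    exact hinj hp hq (by rw [← hc, hc1, one_smul])
  refine (hacc.image (hline.mono (Set.sep_subset _ _))).mono ?_
  rintro _ ⟨p, ⟨hp, hpacc⟩, rfl⟩
  obtain ⟨z, hzP, hLI, hz⟩ := exists_tangent_of_accPt b ω hω hA (fun q hq ↦ (hprop q hq).1)
    (fun q hq ↦ (hprop q hq).2.1) hinj hp hpacc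
  exact ⟨p.1, ⟨(hprop p hp).1.1, z, hzP, hLI, p.2, (hprop p hp).2.1, (hprop p hp).2.2, hz⟩, rfl⟩

end Tangents

section Products

variable {R M : Type*} [CommRing R] [AddCommGroup M] [Module R M]

theorem ι_mul_ι_swap (x y : M) : ι R x * ι R y = -(ι R y * ι R x) :=
  eq_neg_of_add_eq_zero_left (ι_add_mul_swap x y)

theorem ι_mul_ι_mul_swap (x y : M) (γ : ExteriorAlgebra R M) :
    ι R x * (ι R y * γ) = -(ι R y * (ι R x * γ)) := by
  rw [← mul_assoc, ι_mul_ι_swap, neg_mul, mul_assoc]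

theorem ι_mul_ι_mul_self (x : M) (γ : ExteriorAlgebra R M) : ι R x * (ι R x * γ) = 0 := by
  rw [← mul_assoc, ι_sq_zero, zero_mul]

theorem ι_mem_map {U : Submodule R M} {x : M} (hx : x ∈ U) : ι R x ∈ U.map (ι R) :=
  Submodule.mem_map_of_mem hx

theorem ι_mul_ι_mem_map_sq {U : Submodule R M} {x y : M} (hx : x ∈ U) (hy : y ∈ U) :
    ι R x * ι R y ∈ U.map (ι R) ^ 2 := by
  rw [pow_two]
  exact Submodule.mul_mem_mul (ι_mem_map hx) (ι_mem_map hy)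

theorem commute_of_mem_map_sq {U : Submodule R M} {κ : ExteriorAlgebra R M}
    (hκ : κ ∈ U.map (ι R) ^ 2) (γ : ExteriorAlgebra R M) : Commute κ γ := by
  rw [pow_two] at hκ
  induction hκ using Submodule.mul_induction_on' with
  | add _ _ _ _ h₁ h₂ => exact h₁.add_left h₂
  | mem_mul_mem _ hx _ hy =>
    obtain ⟨x, -, rfl⟩ := hx
    obtain ⟨y, -, rfl⟩ := hy
    induction γ using ExteriorAlgebra.induction with
    | algebraMap r => exact Algebra.commutes' r _ |>.symm
    | ι z =>
      rw [commute_iff_eq, mul_assoc, ι_mul_ι_swap y z, mul_neg, ← mul_assoc, ι_mul_ι_swap x z,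
        neg_mul, neg_neg, mul_assoc]
    | mul _ _ h₁ h₂ => exact h₁.mul_right h₂
    | add _ _ h₁ h₂ => exact h₁.add_right h₂

theorem span_range_map_ι_pow {m : ℕ} (e : Fin m → M) (n : ℕ) :
    (Submodule.span R (Set.range e)).map (ι R) ^ n =
      Submodule.span R (Set.range fun g : Fin n → Fin m ↦ ιMulti R n (e ∘ g)) := by
  rw [Submodule.map_span, ← Set.range_comp, Submodule.span_pow]
  congr 1
  ext z
  simp only [Set.mem_pow, Set.mem_range, ιMulti_apply]
  constructor
  · rintro ⟨f, rfl⟩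
    choose g hg using fun i ↦ (f i).2
    exact ⟨g, by simp only [← hg, Function.comp_apply]⟩
  · rintro ⟨g, rfl⟩
    exact ⟨fun i ↦ ⟨_, g i, rfl⟩, rfl⟩

theorem span_range_map_ι_pow_self_le {n : ℕ} (e : Fin n → M) :
    (Submodule.span R (Set.range e)).map (ι R) ^ n ≤ Submodule.span R {ιMulti R n e} := by
  rw [span_range_map_ι_pow, Submodule.span_le, Set.range_subset_iff]
  intro g
  by_cases hg : Function.Injective g
  · rw [SetLike.mem_coe, show e ∘ g = e ∘ Equiv.ofBijective g hg.bijective_of_finite from rfl,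
      AlternatingMap.map_perm, Units.smul_def]
    exact zsmul_mem (Submodule.mem_span_singleton_self _) _
  · rw [AlternatingMap.map_eq_zero_of_not_injective _ _ fun h ↦ hg h.of_comp]
    exact zero_mem _

theorem exists_ι_mul_add_of_mem_map_sq {e : M} {S : Submodule R M} {κ : ExteriorAlgebra R M}
    (hκ : κ ∈ (Submodule.span R {e} ⊔ S).map (ι R) ^ 2) :
    ∃ m ∈ S, ∃ γ ∈ S.map (ι R) ^ 2, κ = ι R e * ι R m + γ := by
  rw [pow_two] at hκ
  induction hκ using Submodule.mul_induction_on' with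
  | add _ _ _ _ h₁ h₂ =>
    obtain ⟨m₁, hm₁, γ₁, hγ₁, rfl⟩ := h₁
    obtain ⟨m₂, hm₂, γ₂, hγ₂, rfl⟩ := h₂
    refine ⟨m₁ + m₂, add_mem hm₁ hm₂, γ₁ + γ₂, add_mem hγ₁ hγ₂, ?_⟩
    rw [map_add, mul_add]
    abel
  | mem_mul_mem _ hx _ hy =>
    obtain ⟨x, hx, rfl⟩ := hx
    obtain ⟨y, hy, rfl⟩ := hy
    obtain ⟨_, hp, s, hs, rfl⟩ := Submodule.mem_sup.mp hx
    obtain ⟨_, hq, t, ht, rfl⟩ := Submodule.mem_sup.mp hy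
    obtain ⟨p, rfl⟩ := Submodule.mem_span_singleton.mp hp
    obtain ⟨q, rfl⟩ := Submodule.mem_span_singleton.mp hq
    refine ⟨p • t - q • s, sub_mem (S.smul_mem p ht) (S.smul_mem q hs), _,
      ι_mul_ι_mem_map_sq hs ht, ?_⟩
    simp only [map_add, map_smul, map_sub, add_mul, mul_add, mul_sub, smul_mul_assoc,
      mul_smul_comm, ι_sq_zero, smul_zero, ι_mul_ι_swap s e]
    module

end Products

section Cancellation

variable {K V : Type*} [Field K] [AddCommGroup V] [Module K V]

instance finiteDimensional_exteriorAlgebra [FiniteDimensional K V] :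
    FiniteDimensional K (ExteriorAlgebra K V) :=
  Module.Finite.of_basis (finBasis K V).ExteriorAlgebra

theorem contractLeft_eq_zero_of_mem_map_pow {d : Dual K V} {U : Submodule K V}
    (hd : U ≤ LinearMap.ker d) {n : ℕ} {γ : ExteriorAlgebra K V} (hγ : γ ∈ U.map (ι K) ^ n) :
    CliffordAlgebra.contractLeft d γ = 0 := by
  induction hγ using Submodule.pow_induction_on_left' with
  | algebraMap r => exact CliffordAlgebra.contractLeft_algebraMap _ d r
  | add _ _ _ _ _ h₁ h₂ => rw [map_add, h₁, h₂, add_zero]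
  | mem_mul m hm _ γ _ h =>
    obtain ⟨u, hu, rfl⟩ := hm
    have hdu : d u = 0 := hd hu
    exact (CliffordAlgebra.contractLeft_ι_mul d u γ).trans (by rw [hdu, h, zero_smul, mul_zero,
      sub_zero])

theorem eq_zero_of_ι_mul_eq_zero {v : V} {U : Submodule K V} (hv : v ∉ U) {n : ℕ}
    {γ : ExteriorAlgebra K V} (hγ : γ ∈ U.map (ι K) ^ n) (h : ι K v * γ = 0) : γ = 0 := by
  obtain ⟨d, hdv, hd⟩ := Submodule.exists_le_ker_of_notMem hv
  have hcontract := CliffordAlgebra.contractLeft_ι_mul (Q := 0) d v γ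
  rw [contractLeft_eq_zero_of_mem_map_pow hd hγ, mul_zero, sub_zero] at hcontract
  refine (smul_eq_zero.mp (hcontract.symm.trans ?_)).resolve_left hdv
  exact (congrArg _ h).trans (map_zero _)

theorem ιMulti_mem_map_pow {U : Submodule K V} {n : ℕ} {a : Fin n → V} (ha : ∀ i, a i ∈ U) :
    ιMulti K n a ∈ U.map (ι K) ^ n := by
  have hle : Submodule.span K (Set.range a) ≤ U :=
    Submodule.span_le.mpr (Set.range_subset_iff.mpr ha)
  refine pow_le_pow_left' (Submodule.map_mono hle) n ?_
  rw [span_range_map_ι_pow]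
  exact Submodule.subset_span ⟨id, rfl⟩

theorem eq_zero_of_ιMulti_mul_eq_zero {n : ℕ} {a : Fin n → V} (ha : LinearIndependent K a)
    {U : Submodule K V} (hU : Disjoint (Submodule.span K (Set.range a)) U) {m : ℕ}
    {γ : ExteriorAlgebra K V} (hγ : γ ∈ U.map (ι K) ^ m) (h : ιMulti K n a * γ = 0) : γ = 0 := by
  induction n with
  | zero => rwa [ιMulti_zero_apply, one_mul] at h
  | succ n ih =>
    obtain ⟨htail, hhead⟩ := linearIndependent_finSucc.mp ha
    have hle : Submodule.span K (Set.range (Fin.tail a)) ≤ Submodule.span K (Set.range a) :=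
      Submodule.span_mono (Set.range_comp_subset_range _ _)
    refine ih htail (hU.mono_left hle) ?_
    rw [ιMulti_succ_apply, mul_assoc] at h
    refine eq_zero_of_ι_mul_eq_zero (U := Submodule.span K (Set.range (Fin.tail a)) ⊔ U)
      (n := n + m) (fun hmem ↦ hhead ?_) ?_ h
    · obtain ⟨s, hs, u, hu, hsum⟩ := Submodule.mem_sup.mp hmem
      have hu0 : u = 0 := Submodule.disjoint_def.mp hU u
        (by rw [← sub_eq_of_eq_add' hsum.symm]
            exact sub_mem (Submodule.subset_span ⟨0, rfl⟩) (hle hs)) hu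
      rwa [← hsum, hu0, add_zero]
    · rw [pow_add]
      exact Submodule.mul_mem_mul
        (ιMulti_mem_map_pow fun i ↦ Submodule.mem_sup_left (Submodule.subset_span ⟨i, rfl⟩))
        (pow_le_pow_left' (Submodule.map_mono le_sup_right) m hγ)

theorem ιMulti_ne_zero_iff {n : ℕ} {a : Fin n → V} :
    ιMulti K n a ≠ 0 ↔ LinearIndependent K a := by
  refine ⟨fun h ↦ by_contra fun hdep ↦ h (AlternatingMap.map_linearDependent _ a hdep),
    fun ha h ↦ one_ne_zero (α := ExteriorAlgebra K V) ?_⟩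
  refine eq_zero_of_ιMulti_mul_eq_zero ha (disjoint_bot_right) (m := 0) ?_ (by rwa [mul_one])
  rw [pow_zero]
  exact Submodule.one_le.mp le_rfl

theorem ι_mul_ι_ne_zero_iff {x y : V} :
    ι K x * ι K y ≠ 0 ↔ LinearIndependent K ![x, y] := by
  rw [← ιMulti_ne_zero_iff, ιMulti_apply]
  simp

end Cancellation

section Decomposable

variable {K V : Type*} [Field K] [AddCommGroup V] [Module K V] {U : Submodule K V}

theorem exists_ι_mul_ι_eq {x y u : V} (hu : u ∈ Submodule.span K {x, y}) (hu₀ : u ≠ 0) :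
    ∃ p ∈ Submodule.span K {x, y}, ι K x * ι K y = ι K u * ι K p := by
  obtain ⟨r, s, rfl⟩ := Submodule.mem_span_pair.mp hu
  by_cases hr : r = 0
  · have hs : s ≠ 0 := fun hs ↦ hu₀ (by rw [hr, hs, zero_smul, zero_smul, add_zero])
    refine ⟨-s⁻¹ • x, Submodule.smul_mem _ _ (Submodule.subset_span (by simp)), ?_⟩
    simp [hr, hs, smul_smul, ι_mul_ι_swap y x]
  · refine ⟨r⁻¹ • y, Submodule.smul_mem _ _ (Submodule.subset_span (by simp)), ?_⟩
    simp [hr, smul_smul, add_mul]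

theorem exists_mem_span_pair_of_mul_eq_zero {x y x' y' : V} (hxy : ι K x * ι K y ≠ 0)
    (hxy' : ι K x' * ι K y' ≠ 0) (h : ι K x * ι K y * (ι K x' * ι K y') = 0) :
    ∃ u ∈ Submodule.span K {x, y}, u ∈ Submodule.span K {x', y'} ∧ u ≠ 0 := by
  suffices ¬ Disjoint (Submodule.span K {x, y}) (Submodule.span K {x', y'}) by
    simpa only [Submodule.disjoint_def, not_forall, exists_prop] using this
  intro hdisj
  refine hxy' (eq_zero_of_ιMulti_mul_eq_zero (ι_mul_ι_ne_zero_iff.mp hxy)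
    (U := Submodule.span K {x', y'}) (m := 2) ?_ ?_ ?_)
  · simpa only [Matrix.range_cons, Matrix.range_empty, Set.union_empty, Set.singleton_union]
  · exact ι_mul_ι_mem_map_sq (Submodule.subset_span (by simp)) (Submodule.subset_span (by simp))
  · simpa [ιMulti_apply, mul_assoc] using h

theorem exists_common_factor {x y x' y' : V} (hx : x ∈ U) (hy : y ∈ U) (hx' : x' ∈ U)
    (hy' : y' ∈ U) (h : ι K x * ι K y * (ι K x' * ι K y') = 0) :
    ∃ a ∈ U, ∃ b ∈ U, ∃ c ∈ U, ι K x * ι K y = ι K a * ι K b ∧ ι K x' * ι K y' = ι K a * ι K c := by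
  by_cases hxy : ι K x * ι K y = 0
  · exact ⟨x', hx', 0, zero_mem _, y', hy', by rw [hxy, map_zero, mul_zero], rfl⟩
  by_cases hxy' : ι K x' * ι K y' = 0
  · exact ⟨x, hx, y, hy, 0, zero_mem _, rfl, by rw [hxy', map_zero, mul_zero]⟩
  obtain ⟨a, ha, ha', ha₀⟩ := exists_mem_span_pair_of_mul_eq_zero hxy hxy' h
  obtain ⟨b, hb, hab⟩ := exists_ι_mul_ι_eq ha ha₀
  obtain ⟨c, hc, hac⟩ := exists_ι_mul_ι_eq ha' ha₀
  have hle : Submodule.span K {x, y} ≤ U := Submodule.span_le.mpr (Set.pair_subset hx hy)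
  have hle' : Submodule.span K {x', y'} ≤ U := Submodule.span_le.mpr (Set.pair_subset hx' hy')
  exact ⟨a, hle ha, b, hle hb, c, hle' hc, hab, hac⟩

theorem exists_ι_mul_ι_add_eq {x y x' y' : V} (hx : x ∈ U) (hy : y ∈ U) (hx' : x' ∈ U)
    (hy' : y' ∈ U) (h : ι K x * ι K y * (ι K x' * ι K y') = 0) :
    ∃ X ∈ U, ∃ Y ∈ U, ι K x * ι K y + ι K x' * ι K y' = ι K X * ι K Y := by
  obtain ⟨a, ha, b, hb, c, hc, hab, hac⟩ := exists_common_factor hx hy hx' hy' h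
  exact ⟨a, ha, b + c, add_mem hb hc, by rw [hab, hac, map_add, mul_add]⟩

theorem eq_zero_of_ι_mul_add_eq_zero {e : V} (he : e ∉ U) {m n : ℕ} {μ ν : ExteriorAlgebra K V}
    (hμ : μ ∈ U.map (ι K) ^ m) (hν : ν ∈ U.map (ι K) ^ n) (h : ι K e * μ + ν = 0) :
    μ = 0 ∧ ν = 0 := by
  have hν₀ : ν = 0 := by
    refine eq_zero_of_ι_mul_eq_zero he hν ?_
    rw [eq_neg_of_add_eq_zero_right h, mul_neg, ι_mul_ι_mul_self, neg_zero]
  rw [hν₀, add_zero] at h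
  exact ⟨eq_zero_of_ι_mul_eq_zero he hμ h, hν₀⟩

/- Split off a vector `e` of a generating set: `κ = e ∧ m + γ` has square `2 e ∧ m ∧ γ + γ ∧ γ`,
so `γ` is decomposable by induction and `m ∧ γ = 0` lets the two summands be merged. -/
theorem exists_eq_ι_mul_ι_of_mul_self_eq_zero [NeZero (2 : K)] (hU : U.FG)
    {κ : ExteriorAlgebra K V} (hκ : κ ∈ U.map (ι K) ^ 2) (h : κ * κ = 0) :
    ∃ x ∈ U, ∃ y ∈ U, κ = ι K x * ι K y := by
  classical
  obtain ⟨s, rfl⟩ := hU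
  induction s using Finset.induction_on generalizing κ with
  | empty =>
    refine ⟨0, zero_mem _, 0, zero_mem _, ?_⟩
    simpa using hκ
  | insert e s _ ih =>
    rw [Finset.coe_insert, Submodule.span_insert] at hκ ⊢
    by_cases he : e ∈ Submodule.span K (s : Set V)
    · rw [sup_eq_right.mpr ((Submodule.span_singleton_le_iff_mem _ _).mpr he)] at hκ ⊢
      exact ih h hκ
    obtain ⟨m, hm, γ, hγ, rfl⟩ := exists_ι_mul_add_of_mem_map_sq hκ
    have hem : ι K e * ι K m * (ι K e * ι K m) = 0 := by
      rw [mul_assoc, ι_mul_ι_mul_swap m e, mul_neg, ι_mul_ι_mul_self, neg_zero]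
    have hsq : ι K e * ((2 : K) • (ι K m * γ)) + γ * γ = 0 := by
      rw [← h, add_mul, mul_add, mul_add, hem, (commute_of_mem_map_sq hγ (ι K e * ι K m)).eq,
        zero_add, mul_smul_comm, two_smul, mul_assoc, add_assoc]
    have hγγ : γ * γ ∈ (Submodule.span K (s : Set V)).map (ι K) ^ 4 := by
      rw [show 4 = 2 + 2 from rfl, pow_add]
      exact Submodule.mul_mem_mul hγ hγ
    have hmγ : ι K m * γ ∈ (Submodule.span K (s : Set V)).map (ι K) ^ 3 := by
      rw [pow_succ']
      exact Submodule.mul_mem_mul (ι_mem_map hm) hγ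
    obtain ⟨hmγ₀, hγγ₀⟩ := eq_zero_of_ι_mul_add_eq_zero he
      (Submodule.smul_mem _ _ hmγ) hγγ hsq
    obtain ⟨x, hx, y, hy, rfl⟩ := ih hγγ₀ hγ
    refine exists_ι_mul_ι_add_eq (Submodule.mem_sup_left (Submodule.mem_span_singleton_self e))
      (Submodule.mem_sup_right hm) (Submodule.mem_sup_right hx) (Submodule.mem_sup_right hy) ?_
    rw [mul_assoc, (smul_eq_zero.mp hmγ₀).resolve_left two_ne_zero, mul_zero]

theorem linearIndependent_cons_of_ι_mul {n : ℕ} {a : V} (ha : a ≠ 0) {b : Fin n → V}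
    (h : LinearIndependent K fun i ↦ ι K a * ι K (b i)) :
    LinearIndependent K (Fin.cons a b : Fin (n + 1) → V) := by
  have hb : LinearIndependent K b :=
    LinearIndependent.of_comp (LinearMap.mulLeft K (ι K a) ∘ₗ ι K) h
  refine linearIndependent_finCons.mpr ⟨hb, fun hmem ↦ ha ?_⟩
  obtain ⟨r, hr⟩ := (Submodule.mem_span_range_iff_exists_fun K).mp hmem
  have hprod : ∑ i, r i • (ι K a * ι K (b i)) = 0 := by
    rw [← ι_sq_zero a]
    nth_rw 3 [← hr]
    simp only [map_sum, map_smul, Finset.mul_sum, mul_smul_comm]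
  rw [← hr]
  exact Finset.sum_eq_zero fun i _ ↦ by rw [Fintype.linearIndependent_iff.mp h r hprod i, zero_smul]

end Decomposable

section LinearAlgebra

variable {K E F G : Type*} [Field K] [AddCommGroup E] [Module K E] [AddCommGroup F] [Module K F]
  [AddCommGroup G] [Module K G]

theorem exists_comp_eq_of_range_le {f : E →ₗ[K] G} {g : F →ₗ[K] G} (h : f.range ≤ g.range) :
    ∃ φ : E →ₗ[K] F, g ∘ₗ φ = f := by
  obtain ⟨φ, hφ⟩ := Module.projective_lifting_property g.rangeRestrict
    (f.codRestrict g.range fun x ↦ h ⟨x, rfl⟩) g.surjective_rangeRestrict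
  exact ⟨φ, LinearMap.ext fun x ↦ congrArg Subtype.val (LinearMap.congr_fun hφ x)⟩

theorem exists_ne_zero_sub_smul_mem [IsAlgClosed K] [FiniteDimensional K E] [Nontrivial E]
    {f g : E →ₗ[K] F} {N : Submodule K F} (h : f.range ≤ g.range ⊔ N) :
    ∃ c ≠ 0, ∃ s : K, f c - s • g c ∈ N := by
  have hmod : (N.mkQ ∘ₗ f).range ≤ (N.mkQ ∘ₗ g).range := by
    rw [LinearMap.range_comp, LinearMap.range_comp]
    refine (Submodule.map_mono h).trans ?_
    rw [Submodule.map_sup, Submodule.mkQ_map_self, sup_bot_eq]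
  obtain ⟨φ, hφ⟩ := exists_comp_eq_of_range_le hmod
  obtain ⟨s, hs⟩ := Module.End.exists_eigenvalue φ
  obtain ⟨c, hc⟩ := hs.exists_hasEigenvector
  refine ⟨c, hc.2, s, ?_⟩
  have hmk : N.mkQ (g (φ c)) = N.mkQ (f c) := LinearMap.congr_fun hφ c
  rw [← N.ker_mkQ, LinearMap.mem_ker, map_sub, ← hmk, hc.apply_eq_smul, map_smul, sub_self]

theorem exists_ne_zero_apply_self_eq_zero [IsAlgClosed K] [NeZero (2 : K)] (hE : 1 < finrank K E)
    (B : E →ₗ[K] E →ₗ[K] F) {η : F} (hB : ∀ c, B c c ∈ Submodule.span K {η}) :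
    ∃ c ≠ 0, B c c = 0 := by
  have : Nontrivial E := Module.nontrivial_of_finrank_pos (zero_lt_one.trans hE)
  obtain ⟨c₁, hc₁⟩ := exists_ne (0 : E)
  obtain ⟨c₂, hind⟩ := exists_linearIndependent_pair_of_one_lt_finrank hE hc₁
  choose r hr using fun c ↦ Submodule.mem_span_singleton.mp (hB c)
  by_cases hr₁ : r c₁ = 0
  · exact ⟨c₁, hc₁, by rw [← hr, hr₁, zero_smul]⟩
  obtain ⟨t, ht⟩ := exists_quadratic_eq_zero (b := r (c₁ + c₂) - r c₁ - r c₂) (c := r c₂) hr₁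
    (IsAlgClosed.exists_eq_mul_self _)
  refine ⟨t • c₁ + c₂, fun h ↦ ?_, ?_⟩
  · exact one_ne_zero (LinearIndependent.pair_iff.mp hind t 1 (by rwa [one_smul])).2
  · have hmixed : B c₁ c₂ + B c₂ c₁ = (r (c₁ + c₂) - r c₁ - r c₂) • η := by
      rw [sub_smul, sub_smul, hr, hr, hr]
      simp only [map_add, LinearMap.add_apply]
      abel
    calc B (t • c₁ + c₂) (t • c₁ + c₂)
        = (t * t) • B c₁ c₁ + t • (B c₁ c₂ + B c₂ c₁) + B c₂ c₂ := by
          simp only [map_add, map_smul, LinearMap.add_apply, LinearMap.smul_apply]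
          module
      _ = (r c₁ * (t * t) + (r (c₁ + c₂) - r c₁ - r c₂) * t + r c₂) • η := by
          rw [hmixed, ← hr c₁, ← hr c₂]
          module
      _ = 0 := by rw [ht, zero_smul]

theorem finrank_add_finrank_le_finrank_comap_add [FiniteDimensional K E] [FiniteDimensional K F]
    {f : E →ₗ[K] F} {T U : Submodule K F} (hT : T ≤ U) (hf : f.range ≤ U) :
    finrank K E + finrank K T ≤ finrank K (T.comap f) + finrank K U := by
  set T' := T.comap U.subtype
  have hT' : finrank K T' = finrank K T := (Submodule.comapSubtypeEquivOfLe hT).finrank_eq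
  set f' := T'.mkQ ∘ₗ f.codRestrict U fun x ↦ hf ⟨x, rfl⟩
  have hker : LinearMap.ker f' = T.comap f := by
    ext x
    simp [f', T']
  have hrange := f'.range.finrank_le
  have hnullity := f'.finrank_range_add_finrank_ker
  have hquot := T'.finrank_quotient_add_finrank
  rw [hker] at hnullity
  lia

theorem le_finrank_of_linearIndependent_of_mem [FiniteDimensional K E] {S : Submodule K E} {n : ℕ}
    {e : Fin n → E} (he : LinearIndependent K e) (hmem : ∀ i, e i ∈ S) : n ≤ finrank K S := by
  have hS : LinearIndependent K fun i ↦ (⟨e i, hmem i⟩ : S) := .of_comp S.subtype he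
  simpa using hS.fintype_card_le_finrank

theorem exists_linearIndependent_pair_of_one_lt_finrank_submodule {S : Submodule K E}
    (hS : 1 < finrank K S) : ∃ x ∈ S, ∃ y ∈ S, LinearIndependent K ![x, y] := by
  have : Nontrivial S := Module.nontrivial_of_finrank_pos (zero_lt_one.trans hS)
  obtain ⟨x, hx⟩ := exists_ne (0 : S)
  obtain ⟨y, hxy⟩ := exists_linearIndependent_pair_of_one_lt_finrank hS hx
  refine ⟨x, x.2, y, y.2, LinearIndependent.pair_iff.mpr fun r s h ↦ ?_⟩
  exact LinearIndependent.pair_iff.mp hxy r s (Subtype.ext h)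

theorem subsingleton_setOf_line_le [FiniteDimensional K E] {W : Submodule K E}
    (hW : finrank K W ≤ 1) :
    {L : Submodule K E | finrank K L = 1 ∧ L ≤ W}.Subsingleton := by
  have heq {L : Submodule K E} (hL : finrank K L = 1 ∧ L ≤ W) : L = W :=
    Submodule.eq_of_le_of_finrank_le hL.2 (hL.1 ▸ hW)
  exact fun L hL M hM ↦ (heq hL).trans (heq hM).symm

end LinearAlgebra

section IsotropicBivectors

variable {K V : Type*} [Field K] [AddCommGroup V] [Module K V]

theorem span_pair_eq_of_mem {x y u w : V} (huw : LinearIndependent K ![u, w])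
    (hu : u ∈ Submodule.span K {x, y}) (hw : w ∈ Submodule.span K {x, y}) :
    Submodule.span K {u, w} = Submodule.span K {x, y} := by
  have : FiniteDimensional K (Submodule.span K {x, y}) :=
    FiniteDimensional.span_of_finite K (Set.toFinite _)
  refine Submodule.eq_of_le_of_finrank_le (Submodule.span_le.mpr (Set.pair_subset hu hw)) ?_
  have hcard := finrank_span_eq_card huw
  have hle := finrank_range_le_card (R := K) ![x, y]
  rw [Set.finrank] at hle
  rw [Matrix.range_cons_cons_empty] at hcard hle
  exact hle.trans_eq hcard.symm

theorem linearIndependent_smul_add_smul_pair {a b c : V} (h : LinearIndependent K ![a, b, c])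
    (r p : K) {s q : K} (hs : s ≠ 0) (hq : q ≠ 0) :
    LinearIndependent K ![r • a + s • b, p • a + q • c] := by
  refine LinearIndependent.pair_iff.mpr fun α β hsum ↦ ?_
  have hcoeff := Fintype.linearIndependent_iff.mp h ![α * r + β * p, α * s, β * q] (by
    rw [← hsum, Fin.sum_univ_three]
    simp only [Matrix.cons_val]
    module)
  simpa [hs, hq] using And.intro (hcoeff 1) (hcoeff 2)

theorem linearIndependent_of_ι_mul_pair {a b c : V}
    (h : LinearIndependent K ![ι K a * ι K b, ι K a * ι K c]) :
    LinearIndependent K ![a, b, c] := by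
  have ha₀ : a ≠ 0 := fun ha ↦ h.ne_zero 0 (by simp [ha])
  refine linearIndependent_cons_of_ι_mul ha₀ (b := ![b, c]) ?_
  convert h using 2 with i
  fin_cases i <;> rfl

theorem exists_eq_or_span_pair_le_of_mul_eq_zero {a b c x y : V}
    (hind : LinearIndependent K ![ι K a * ι K b, ι K a * ι K c])
    (hb : ι K a * ι K b * (ι K x * ι K y) = 0) (hc : ι K a * ι K c * (ι K x * ι K y) = 0) :
    (∃ p ∈ Submodule.span K {x, y}, ι K x * ι K y = ι K a * ι K p) ∨
      Submodule.span K {x, y} ≤ Submodule.span K (Set.range ![a, b, c]) := by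
  by_cases hxy : ι K x * ι K y = 0
  · exact .inl ⟨0, zero_mem _, by rw [hxy, map_zero, mul_zero]⟩
  have hab : ι K a * ι K b ≠ 0 := hind.ne_zero 0
  have hac : ι K a * ι K c ≠ 0 := hind.ne_zero 1
  have ha₀ : a ≠ 0 := fun h ↦ hab (by rw [h, map_zero, zero_mul])
  obtain ⟨u, hu, huxy, hu₀⟩ := exists_mem_span_pair_of_mul_eq_zero hab hxy hb
  obtain ⟨w, hw, hwxy, hw₀⟩ := exists_mem_span_pair_of_mul_eq_zero hac hxy hc
  obtain ⟨r, s, rfl⟩ := Submodule.mem_span_pair.mp hu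
  obtain ⟨p, q, rfl⟩ := Submodule.mem_span_pair.mp hw
  by_cases hs : s = 0
  · rw [hs, zero_smul, add_zero] at huxy hu₀
    exact .inl (exists_ι_mul_ι_eq
      ((Submodule.smul_mem_iff _ (left_ne_zero_of_smul hu₀)).mp huxy) ha₀)
  by_cases hq : q = 0
  · rw [hq, zero_smul, add_zero] at hwxy hw₀
    exact .inl (exists_ι_mul_ι_eq
      ((Submodule.smul_mem_iff _ (left_ne_zero_of_smul hw₀)).mp hwxy) ha₀)
  right
  have huw := linearIndependent_smul_add_smul_pair (linearIndependent_of_ι_mul_pair hind) r p hs hq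
  rw [← span_pair_eq_of_mem huw huxy hwxy, Submodule.span_le]
  have hmem : ∀ i, ![a, b, c] i ∈ Submodule.span K (Set.range ![a, b, c]) :=
    fun i ↦ Submodule.subset_span ⟨i, rfl⟩
  exact Set.pair_subset
    (add_mem (Submodule.smul_mem _ r (hmem 0)) (Submodule.smul_mem _ s (hmem 1)))
    (add_mem (Submodule.smul_mem _ p (hmem 0)) (Submodule.smul_mem _ q (hmem 2)))

theorem exists_common_factor_of_isotropic [NeZero (2 : K)] {U : Submodule K V} (hU : U.FG)
    {κ κ' : ExteriorAlgebra K V} (hκ : κ ∈ U.map (ι K) ^ 2) (hκ' : κ' ∈ U.map (ι K) ^ 2)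
    (h : κ * κ = 0) (hmul : κ * κ' = 0) (h' : κ' * κ' = 0) :
    ∃ a ∈ U, ∃ b ∈ U, ∃ c ∈ U, κ = ι K a * ι K b ∧ κ' = ι K a * ι K c := by
  obtain ⟨x, hx, y, hy, rfl⟩ := exists_eq_ι_mul_ι_of_mul_self_eq_zero hU hκ h
  obtain ⟨x', hx', y', hy', rfl⟩ := exists_eq_ι_mul_ι_of_mul_self_eq_zero hU hκ' h'
  exact exists_common_factor hx hy hx' hy' hmul

theorem exists_common_factor_or_exists_mem_span_map_sq [NeZero (2 : K)] {U : Submodule K V}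
    (hU : U.FG) {κ : Fin 3 → ExteriorAlgebra K V} (hind : LinearIndependent K κ)
    (hκ : ∀ i, κ i ∈ U.map (ι K) ^ 2) (hmul : ∀ i j, κ i * κ j = 0) :
    (∃ a ∈ U, ∀ i, κ i ∈ (U.map (ι K)).map (LinearMap.mulLeft K (ι K a))) ∨
      ∃ e : Fin 3 → V, LinearIndependent K e ∧ (∀ i, e i ∈ U) ∧
        ∀ i, κ i ∈ (Submodule.span K (Set.range e)).map (ι K) ^ 2 := by
  obtain ⟨a, ha, b, hb, c, hc, hab, hac⟩ := exists_common_factor_of_isotropic hU (hκ 0) (hκ 1)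
    (hmul 0 0) (hmul 0 1) (hmul 1 1)
  obtain ⟨x, hx, y, hy, hxy⟩ := exists_eq_ι_mul_ι_of_mul_self_eq_zero hU (hκ 2) (hmul 2 2)
  have hpair : LinearIndependent K ![ι K a * ι K b, ι K a * ι K c] := by
    rw [← hab, ← hac, LinearIndependent.pair_iff]
    intro s t hst
    have := Fintype.linearIndependent_iff.mp hind ![s, t, 0]
      (by simpa [Fin.sum_univ_three] using hst)
    exact ⟨this 0, this 1⟩
  rcases exists_eq_or_span_pair_le_of_mul_eq_zero (x := x) (y := y) hpair
    (by rw [← hab, ← hxy, hmul]) (by rw [← hac, ← hxy, hmul]) with ⟨p, hp, hap⟩ | hle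
  · have hpU : p ∈ U := Submodule.span_le.mpr (Set.pair_subset hx hy) hp
    refine .inl ⟨a, ha, Fin.forall_fin_succ.mpr ⟨⟨_, ι_mem_map hb, hab.symm⟩,
      Fin.forall_fin_two.mpr ⟨⟨_, ι_mem_map hc, hac.symm⟩, ?_⟩⟩⟩
    exact ⟨_, ι_mem_map hpU, (hxy.trans hap).symm⟩
  · refine .inr ⟨![a, b, c], linearIndependent_of_ι_mul_pair hpair,
      Fin.forall_fin_succ.mpr ⟨ha, Fin.forall_fin_two.mpr ⟨hb, hc⟩⟩, ?_⟩
    have hmem : ∀ i, ![a, b, c] i ∈ Submodule.span K (Set.range ![a, b, c]) :=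
      fun i ↦ Submodule.subset_span ⟨i, rfl⟩
    refine Fin.forall_fin_succ.mpr ⟨?_, Fin.forall_fin_two.mpr ⟨?_, ?_⟩⟩
    · exact hab ▸ ι_mul_ι_mem_map_sq (hmem 0) (hmem 1)
    · exact (congrArg (· ∈ _) hac).mpr (ι_mul_ι_mem_map_sq (hmem 0) (hmem 2))
    · exact (congrArg (· ∈ _) hxy).mpr (ι_mul_ι_mem_map_sq
        (hle (Submodule.subset_span (by simp))) (hle (Submodule.subset_span (by simp))))

theorem finrank_range_sup_span_singleton {E : Type*} [AddCommGroup E] [Module K E] [Nontrivial E]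
    [FiniteDimensional K V] {a : V} {g : E →ₗ[K] V}
    (hinj : Function.Injective (LinearMap.mulLeft K (ι K a) ∘ₗ ι K ∘ₗ g)) :
    finrank K ↥(g.range ⊔ Submodule.span K {a}) = finrank K E + 1 := by
  have hg : Function.Injective g := by
    rw [LinearMap.coe_comp, LinearMap.coe_comp] at hinj
    exact hinj.of_comp.of_comp
  have hnot : a ∉ g.range := by
    rintro ⟨c, rfl⟩
    have hc : c = 0 := hinj (by simp)
    obtain ⟨c', hc'⟩ := exists_ne (0 : E)
    exact hc' (hinj (by simp [hc]))
  rw [Submodule.finrank_sup_span_singleton hnot, LinearMap.finrank_range_of_inj hg]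

theorem exists_mul_ι_eq_zero_of_range_le_mulLeft [IsAlgClosed K] {E : Type*} [AddCommGroup E]
    [Module K E] [FiniteDimensional K E] [Nontrivial E] [FiniteDimensional K V]
    {U : Submodule K V} (hU : finrank K U ≤ finrank K E + 1) {β : E →ₗ[K] ExteriorAlgebra K V}
    (hβ : Function.Injective β) {a : V} (ha : a ∈ U)
    (hrange : β.range ≤ (U.map (ι K)).map (LinearMap.mulLeft K (ι K a)))
    {f : E →ₗ[K] V} (hf : f.range ≤ U) : ∃ c ≠ 0, β c * ι K (f c) = 0 := by
  obtain ⟨h, rfl⟩ := exists_comp_eq_of_range_le (f := β)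
    (g := LinearMap.mulLeft K (ι K a) ∘ₗ ι K ∘ₗ U.subtype)
    (by rwa [LinearMap.range_comp, LinearMap.range_comp, U.range_subtype])
  have hspan : (U.subtype ∘ₗ h).range ⊔ Submodule.span K {a} = U :=
    Submodule.eq_of_le_of_finrank_le
      (sup_le ((LinearMap.range_comp_le_range _ _).trans_eq U.range_subtype)
        ((Submodule.span_singleton_le_iff_mem _ _).mpr ha))
      (hU.trans_eq (finrank_range_sup_span_singleton hβ).symm)
  obtain ⟨c, hc, s, hs⟩ := exists_ne_zero_sub_smul_mem (hf.trans_eq hspan.symm)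
  obtain ⟨t, ht⟩ := Submodule.mem_span_singleton.mp hs
  refine ⟨c, hc, ?_⟩
  rw [eq_add_of_sub_eq ht.symm]
  simp [mul_add, mul_assoc, ι_mul_ι_swap (h c : V) a, ι_mul_ι_mul_self]

theorem exists_mul_ι_eq_zero_of_range_le_map_sq [IsAlgClosed K] [NeZero (2 : K)] {E : Type*}
    [AddCommGroup E] [Module K E] (hE : 3 ≤ finrank K E) [FiniteDimensional K V]
    {U : Submodule K V} (hU : finrank K U ≤ 4) {e : Fin 3 → V} (he : LinearIndependent K e)
    (heU : ∀ i, e i ∈ U) {β : E →ₗ[K] ExteriorAlgebra K V}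
    (hrange : β.range ≤ (Submodule.span K (Set.range e)).map (ι K) ^ 2)
    {f : E →ₗ[K] V} (hf : f.range ≤ U) : ∃ c ≠ 0, β c * ι K (f c) = 0 := by
  set T := Submodule.span K (Set.range e)
  have hT : T ≤ U := Submodule.span_le.mpr (Set.range_subset_iff.mpr heU)
  have hTrank : finrank K T = 3 := by
    rw [finrank_span_eq_card he, Fintype.card_fin]
  have : FiniteDimensional K E := FiniteDimensional.of_finrank_pos (by lia)
  have hcomap := finrank_add_finrank_le_finrank_comap_add hT hf
  rw [hTrank] at hcomap
  have hval : ∀ c : T.comap f, β c * ι K (f c) ∈ Submodule.span K {ιMulti K 3 e} := fun c ↦ by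
    refine span_range_map_ι_pow_self_le e ?_
    rw [pow_succ]
    exact Submodule.mul_mem_mul (hrange ⟨c, rfl⟩) (ι_mem_map c.2)
  obtain ⟨c, hc, h⟩ := exists_ne_zero_apply_self_eq_zero (by lia)
    ((LinearMap.mul K (ExteriorAlgebra K V)).compl₁₂ (β ∘ₗ (T.comap f).subtype)
      (ι K ∘ₗ f ∘ₗ (T.comap f).subtype)) hval
  exact ⟨c, by simpa using hc, h⟩

theorem exists_ne_zero_mul_ι_eq_zero [IsAlgClosed K] [NeZero (2 : K)] {E : Type*}
    [AddCommGroup E] [Module K E] (hE : finrank K E = 3) [FiniteDimensional K V]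
    {U : Submodule K V} (hU : finrank K U ≤ 4) {β : E →ₗ[K] ExteriorAlgebra K V}
    (hβ : ∀ c, β c ∈ U.map (ι K) ^ 2) (hiso : ∀ c c', β c * β c' = 0)
    {f : E →ₗ[K] V} (hf : f.range ≤ U) : ∃ c ≠ 0, β c * ι K (f c) = 0 := by
  by_cases hinj : Function.Injective β
  swap
  · obtain ⟨c, hc, hc₀⟩ := (Submodule.ne_bot_iff _).mp (mt LinearMap.ker_eq_bot.mp hinj)
    exact ⟨c, hc₀, by rw [LinearMap.mem_ker.mp hc, zero_mul]⟩
  have : FiniteDimensional K E := FiniteDimensional.of_finrank_pos (by lia)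
  have : Nontrivial E := Module.nontrivial_of_finrank_pos (R := K) (by lia)
  set e := finBasisOfFinrankEq K E hE
  have hrange {S : Submodule K (ExteriorAlgebra K V)} (h : ∀ i, β (e i) ∈ S) : β.range ≤ S := by
    rw [LinearMap.range_eq_map, ← e.span_eq, Submodule.map_span_le]
    rintro _ ⟨i, rfl⟩
    exact h i
  rcases exists_common_factor_or_exists_mem_span_map_sq (IsNoetherian.noetherian U)
    (e.linearIndependent.map' β (LinearMap.ker_eq_bot.mpr hinj)) (fun i ↦ hβ (e i))
    (fun i j ↦ hiso (e i) (e j)) with ⟨a, ha, h⟩ | ⟨t, ht, htU, h⟩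
  · exact exists_mul_ι_eq_zero_of_range_le_mulLeft (by lia) hinj ha (hrange h) hf
  · exact exists_mul_ι_eq_zero_of_range_le_map_sq hE.ge hU ht htU (hrange h) hf

end IsotropicBivectors

section TangentNormalForm

variable {K V : Type*} [Field K] [AddCommGroup V] [Module K V] {U : Submodule K V} {v w : V}

theorem finrank_span_pair (hvw : LinearIndependent K ![v, w]) :
    finrank K (Submodule.span K {v, w}) = 2 := by
  rw [← Matrix.range_cons_cons_empty v w ![], finrank_span_eq_card hvw, Fintype.card_fin]

theorem finrank_add_two_of_isCompl_span_pair [FiniteDimensional K V]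
    (hvw : LinearIndependent K ![v, w]) (hU : IsCompl (Submodule.span K {v, w}) U) :
    finrank K U + 2 = finrank K V := by
  rw [← finrank_span_pair hvw, add_comm, Submodule.finrank_add_eq_of_isCompl hU]

theorem eq_zero_of_ι_mul_ι_mul_eq_zero (hvw : LinearIndependent K ![v, w])
    (hU : Disjoint (Submodule.span K {v, w}) U) {n : ℕ} {γ : ExteriorAlgebra K V}
    (hγ : γ ∈ U.map (ι K) ^ n) (h : ι K v * (ι K w * γ) = 0) : γ = 0 := by
  refine eq_zero_of_ιMulti_mul_eq_zero hvw ?_ hγ ?_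
  · rwa [Matrix.range_cons_cons_empty]
  · simpa [ιMulti_apply, mul_assoc] using h

theorem eq_zero_of_ι_mul_add_ι_mul_eq_zero (hvw : LinearIndependent K ![v, w])
    (hU : Disjoint (Submodule.span K {v, w}) U) {n : ℕ} {γ : ExteriorAlgebra K V}
    (hγ : γ ∈ U.map (ι K) ^ n) (δ : ExteriorAlgebra K V)
    (h : ι K v * (γ + ι K w * δ) = 0) : γ = 0 := by
  refine eq_zero_of_ι_mul_ι_mul_eq_zero hvw hU hγ ?_
  have hmul := congrArg (ι K w * ·) h
  simpa [ι_mul_ι_mul_swap w v, mul_add, ι_mul_ι_mul_self] using hmul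

theorem ι_mul_ι_mul_ι_ne_zero_of_notMem_span {x : V}
    (hvw : LinearIndependent K ![v, w])
    (hx : x ∉ Submodule.span K {v, w}) : ι K v * (ι K w * ι K x) ≠ 0 := by
  intro h
  have hx₀ : ι K x = 0 := eq_zero_of_ι_mul_ι_mul_eq_zero (n := 1) hvw
    (Submodule.disjoint_span_singleton_of_notMem hx)
    (by rw [pow_one]; exact ι_mem_map (Submodule.mem_span_singleton_self x)) h
  exact hx (ι_eq_zero_iff _ |>.mp hx₀ ▸ zero_mem _)

theorem span_pair_sup_span_singleton_eq [FiniteDimensional K V] {W : Submodule K V}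
    (hW : finrank K W = 3) {x : V} (hvw : LinearIndependent K ![v, w])
    (hle : Submodule.span K {v, w} ≤ W) (hx : x ∈ W) (hx' : x ∉ Submodule.span K {v, w}) :
    Submodule.span K {v, w} ⊔ Submodule.span K {x} = W := by
  refine Submodule.eq_of_le_of_finrank_eq
    (sup_le hle ((Submodule.span_singleton_le_iff_mem _ _).mpr hx)) ?_
  rw [Submodule.finrank_sup_span_singleton hx', finrank_span_pair hvw, hW]

theorem exists_span_singleton_eq_inf [FiniteDimensional K V]
    (hvw : LinearIndependent K ![v, w]) {W : Submodule K V}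
    (hU : IsCompl (Submodule.span K {v, w}) U) (hW : finrank K W = 3)
    (hle : Submodule.span K {v, w} ≤ W) :
    ∃ x ≠ 0, U ⊓ W = Submodule.span K {x} ∧ Submodule.span K {v, w} ⊔ Submodule.span K {x} = W := by
  have hsup : Submodule.span K {v, w} ⊔ U ⊓ W = W := by
    rw [← sup_inf_assoc_of_le U hle, hU.sup_eq_top, top_inf_eq]
  have hadd := Submodule.finrank_sup_add_finrank_inf_eq (Submodule.span K {v, w}) (U ⊓ W)
  rw [hsup, (hU.disjoint.mono_right inf_le_left).eq_bot, finrank_bot, hW,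
    finrank_span_pair hvw] at hadd
  obtain ⟨⟨x, hx⟩, hx₀, hspan⟩ := finrank_eq_one_iff'.mp (show finrank K ↥(U ⊓ W) = 1 by lia)
  have hxspan : U ⊓ W = Submodule.span K {x} := by
    refine le_antisymm (fun y hy ↦ ?_) ((Submodule.span_singleton_le_iff_mem _ _).mpr hx)
    obtain ⟨r, hr⟩ := hspan ⟨y, hy⟩
    exact Submodule.mem_span_singleton.mpr ⟨r, congrArg Subtype.val hr⟩
  exact ⟨x, fun h ↦ hx₀ (Subtype.ext h), hxspan, hxspan ▸ hsup⟩

theorem exists_eq_ι_mul_ι_add (hU : Codisjoint (Submodule.span K {v, w}) U)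
    {κ : ExteriorAlgebra K V} (hκ : κ ∈ ⋀[K]^2 V) :
    ∃ m, ∃ γ ∈ U.map (ι K) ^ 2, ∃ f ∈ U, κ = ι K v * ι K m + (γ + ι K w * ι K f) := by
  rw [exteriorPower, ← Submodule.map_top, ← codisjoint_iff.mp hU, Submodule.span_insert,
    sup_assoc] at hκ
  obtain ⟨m, -, κ', hκ', rfl⟩ := exists_ι_mul_add_of_mem_map_sq hκ
  obtain ⟨f, hf, γ, hγ, rfl⟩ := exists_ι_mul_add_of_mem_map_sq hκ'
  exact ⟨m, γ, hγ, f, hf, by rw [add_comm γ]⟩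

theorem ι_mul_ι_mul_mul_eq {m m' f f' : V} {γ γ' : ExteriorAlgebra K V}
    (hγ : γ ∈ U.map (ι K) ^ 2) :
    ι K v * (ι K w * ((ι K v * ι K m + (γ + ι K w * ι K f)) *
      (ι K v * ι K m' + (γ' + ι K w * ι K f')))) = ι K v * (ι K w * (γ * γ')) := by
  have hcomm (δ : ExteriorAlgebra K V) : ι K v * (ι K w * (γ * δ)) = γ * (ι K v * (ι K w * δ)) := by
    rw [← mul_assoc (ι K v), ← mul_assoc, (commute_of_mem_map_sq hγ _).symm.eq, mul_assoc,
      mul_assoc]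
  simp only [add_mul, mul_add, hcomm, mul_assoc, ι_mul_ι_mul_swap w v, ι_mul_ι_mul_self, mul_neg,
    mul_zero, neg_zero, zero_add, add_zero]

theorem ι_mul_mul_ι_mul {κ : ExteriorAlgebra K V} (hκ : κ ∈ ⋀[K]^2 V) (κ' : ExteriorAlgebra K V) :
    ι K w * κ * (ι K v * κ') = ι K w * (ι K v * (κ * κ')) := by
  rw [exteriorPower, ← Submodule.map_top] at hκ
  rw [mul_assoc, ← mul_assoc κ, (commute_of_mem_map_sq hκ _).eq, mul_assoc]

end TangentNormalForm

section Tangent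

variable {V : Type*} [AddCommGroup V] [Module ℂ V]

/-- The line `ℂv` lies in the locus `dim (A ∩ (v ∧ ⋀²V)) ≥ 3`, witnessed by the elements `v ∧ κ i`
of `A`, and satisfies the first-order condition for moving in the direction `w` inside it when `A`
is isotropic. -/
def IsTangentDirection (A : Submodule ℂ (ExteriorAlgebra ℂ V)) (v w : V) : Prop :=
  LinearIndependent ℂ ![v, w] ∧ ∃ κ : Fin 3 → ExteriorAlgebra ℂ V,
    (∀ i, κ i ∈ ⋀[ℂ]^2 V) ∧ (∀ i, ι ℂ v * κ i ∈ A) ∧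
      (LinearIndependent ℂ fun i ↦ ι ℂ v * κ i) ∧
      ∀ i j, ι ℂ v * (ι ℂ w * (κ i * κ j)) = 0

/-- The normal form of tangent data at `v` in the direction `w`: the family of nonzero elements
`v ∧ (β c + w ∧ f c)` of `A`, where `β c` and `f c` live over a complement `U` of `⟨v, w⟩` and the
bivectors `β c` are isotropic. -/
structure TangentFamily (A : Submodule ℂ (ExteriorAlgebra ℂ V)) (U : Submodule ℂ V)
    (v w : V) where
  /-- The component over `U`. -/
  β : (Fin 3 → ℂ) →ₗ[ℂ] ExteriorAlgebra ℂ V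
  /-- The coefficient of `w`. -/
  f : (Fin 3 → ℂ) →ₗ[ℂ] V
  linearIndependent : LinearIndependent ℂ ![v, w]
  isCompl : IsCompl (Submodule.span ℂ {v, w}) U
  β_mem : ∀ c, β c ∈ U.map (ι ℂ) ^ 2
  f_mem : ∀ c, f c ∈ U
  β_mul_β : ∀ c c', β c * β c' = 0
  mem : ∀ c, ι ℂ v * (β c + ι ℂ w * ι ℂ (f c)) ∈ A
  ne_zero : ∀ c ≠ 0, ι ℂ v * (β c + ι ℂ w * ι ℂ (f c)) ≠ 0

theorem IsTangentDirection.nonempty_tangentFamily {A : Submodule ℂ (ExteriorAlgebra ℂ V)}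
    {U : Submodule ℂ V} {v w : V} (h : IsTangentDirection A v w)
    (hU : IsCompl (Submodule.span ℂ {v, w}) U) : Nonempty (TangentFamily A U v w) := by
  obtain ⟨hvw, κ, hκ, hA, hLI, h₀⟩ := h
  choose m γ hγ f hf hdecomp using fun i ↦ exists_eq_ι_mul_ι_add hU.codisjoint (hκ i)
  have hγγ (i j) : γ i * γ j = 0 := by
    refine eq_zero_of_ι_mul_ι_mul_eq_zero (n := 2 + 2) hvw hU.disjoint ?_ ?_
    · rw [pow_add]
      exact Submodule.mul_mem_mul (hγ i) (hγ j)
    · rw [← h₀ i j, hdecomp, hdecomp, ι_mul_ι_mul_mul_eq (hγ i)]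
  have hsum (c : Fin 3 → ℂ) : ι ℂ v * (Fintype.linearCombination ℂ γ c +
      ι ℂ w * ι ℂ (Fintype.linearCombination ℂ f c)) = ∑ i, c i • (ι ℂ v * κ i) := by
    simp only [Fintype.linearCombination_apply, hdecomp, map_sum, map_smul, mul_add,
      ι_mul_ι_mul_self, zero_add, Finset.mul_sum, mul_smul_comm, smul_add, Finset.sum_add_distrib]
  refine ⟨Fintype.linearCombination ℂ γ, Fintype.linearCombination ℂ f, hvw, hU,
    fun c ↦ ?_, fun c ↦ ?_, fun c c' ↦ ?_, fun c ↦ ?_, fun c hc hz ↦ ?_⟩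
  · exact Fintype.linearCombination_apply ℂ γ c ▸ sum_mem fun i _ ↦ Submodule.smul_mem _ _ (hγ i)
  · exact Fintype.linearCombination_apply ℂ f c ▸ sum_mem fun i _ ↦ U.smul_mem _ (hf i)
  · simp [Fintype.linearCombination_apply, Finset.sum_mul, Finset.mul_sum, hγγ]
  · exact hsum c ▸ sum_mem fun i _ ↦ A.smul_mem _ (hA i)
  · exact hc (funext (Fintype.linearIndependent_iff.mp hLI c ((hsum c).symm.trans hz)))

theorem infinite_setOf_isTangentDirection [FiniteDimensional ℂ V]
    {vol : ExteriorAlgebra ℂ V →ₗ[ℂ] ℂ} (hvol : Function.Injective fun x : ⋀[ℂ]^6 V ↦ vol x)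
    {A : Submodule ℂ (ExteriorAlgebra ℂ V)} (hA : ∀ α ∈ A, ∀ β ∈ A, vol (α * β) = 0)
    (P : Submodule ℂ V) (hinf : ((fun v ↦ Submodule.span ℂ {v}) ''
      {v | v ∈ P ∧ v ≠ 0 ∧ 3 ≤ finrank ℂ ↥(A ⊓ vWedge2 v)}).Infinite) :
    ((fun v ↦ Submodule.span ℂ {v}) ''
      {v | v ∈ P ∧ ∃ w ∈ P, IsTangentDirection A v w}).Infinite := by
  let b : V →ₗ[ℂ] ⋀[ℂ]^2 V →ₗ[ℂ] ExteriorAlgebra ℂ V :=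
    (LinearMap.mul ℂ (ExteriorAlgebra ℂ V)).compl₁₂ (ι ℂ) (Submodule.subtype _)
  let ω := (LinearMap.mul ℂ (ExteriorAlgebra ℂ V)).compr₂ vol
  have hrange : vWedge2 = fun v ↦ (b v).range := funext fun v ↦
    .symm <| (LinearMap.range_comp (⋀[ℂ]^2 V).subtype (LinearMap.mulLeft ℂ (ι ℂ v))).trans
      (by rw [Submodule.range_subtype, vWedge2])
  have hω (v : V) (κ κ' : ⋀[ℂ]^2 V) : ω (b v κ) (b v κ') = 0 := by
    change vol (ι ℂ v * κ * (ι ℂ v * κ')) = 0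
    rw [ι_mul_mul_ι_mul κ.2, ι_mul_ι_mul_self, map_zero]
  rw [hrange] at hinf
  refine (infinite_setOf_tangent b ω hω hA P 3 hinf).mono (Set.image_mono ?_)
  rintro v ⟨hv, z, hz, hvz, κ, hκA, hκ, h⟩
  refine ⟨hv, z, hz, hvz, fun i ↦ κ i, fun i ↦ (κ i).2, hκA, hκ, fun i j ↦ ?_⟩
  have hι (x : V) : ι ℂ x ∈ ⋀[ℂ]^1 V := by
    rw [exteriorPower, pow_one]
    exact ⟨x, rfl⟩
  have hdeg : ι ℂ z * (ι ℂ v * (κ i * κ j)) ∈ ⋀[ℂ]^6 V :=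
    SetLike.mul_mem_graded (i := 1) (hι z) (SetLike.mul_mem_graded (i := 1) (j := 4) (hι v)
      (SetLike.mul_mem_graded (κ i).2 (κ j).2))
  have hvol₀ : vol (ι ℂ z * (ι ℂ v * (κ i * κ j))) = 0 := by
    rw [← ι_mul_mul_ι_mul (κ i).2]
    exact h i j
  rw [ι_mul_ι_mul_swap, neg_eq_zero]
  exact congrArg Subtype.val (@hvol ⟨_, hdeg⟩ 0 (by simpa using hvol₀))

end Tangent

section Theta

variable {V : Type*} [AddCommGroup V] [Module ℂ V] {A : Submodule ℂ (ExteriorAlgebra ℂ V)}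

/-- The set `Θ_A` of three-dimensional subspaces `W` with `⋀³W ⊆ A`. -/
def theta (A : Submodule ℂ (ExteriorAlgebra ℂ V)) : Set (Submodule ℂ V) :=
  {W | finrank ℂ W = 3 ∧ wedge3 W ≤ A}

theorem wedge3_le_map_pow (W : Submodule ℂ V) : wedge3 W ≤ W.map (ι ℂ) ^ 3 := by
  refine Submodule.span_le.mpr ?_
  rintro _ ⟨x, hx, y, hy, z, hz, rfl⟩
  rw [pow_succ]
  exact Submodule.mul_mem_mul (ι_mul_ι_mem_map_sq hx hy) (ι_mem_map hz)

theorem exists_mem_theta {x y z : V} (hA : ι ℂ x * (ι ℂ y * ι ℂ z) ∈ A)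
    (h₀ : ι ℂ x * (ι ℂ y * ι ℂ z) ≠ 0) : ∃ W ∈ theta A, x ∈ W ∧ y ∈ W ∧ z ∈ W := by
  have hmulti : ιMulti ℂ 3 ![x, y, z] = ι ℂ x * (ι ℂ y * ι ℂ z) := by simp [ιMulti_apply]
  have hind : LinearIndependent ℂ ![x, y, z] := ιMulti_ne_zero_iff.mp (hmulti ▸ h₀)
  refine ⟨Submodule.span ℂ (Set.range ![x, y, z]), ⟨?_, ?_⟩, Submodule.subset_span ⟨0, rfl⟩,
    Submodule.subset_span ⟨1, rfl⟩, Submodule.subset_span ⟨2, rfl⟩⟩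
  · rw [finrank_span_eq_card hind, Fintype.card_fin]
  · refine ((wedge3_le_map_pow _).trans (span_range_map_ι_pow_self_le _)).trans ?_
    rwa [Submodule.span_singleton_le_iff_mem, hmulti]

theorem mul_mem_of_mem_theta {W : Submodule ℂ V} (hW : W ∈ theta A) {x y z : V} (hx : x ∈ W)
    (hy : y ∈ W) (hz : z ∈ W) : ι ℂ x * (ι ℂ y * ι ℂ z) ∈ A :=
  hW.2 (Submodule.subset_span ⟨x, hx, y, hy, z, hz, (mul_assoc _ _ _).symm⟩)

theorem exists_mem_theta_of_isTangentDirection [FiniteDimensional ℂ V] (hV : finrank ℂ V ≤ 6)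
    {v w : V} (h : IsTangentDirection A v w) : ∃ W ∈ theta A, v ∈ W := by
  obtain ⟨U, hU⟩ := Submodule.exists_isCompl (Submodule.span ℂ {v, w})
  obtain ⟨F⟩ := h.nonempty_tangentFamily hU
  have hU₄ : finrank ℂ U ≤ 4 := by
    have := finrank_add_two_of_isCompl_span_pair h.1 hU
    lia
  obtain ⟨c, hc, hβf⟩ := exists_ne_zero_mul_ι_eq_zero (by simp) hU₄ F.β_mem F.β_mul_β
    (f := F.f) (by rintro _ ⟨c, rfl⟩; exact F.f_mem c)
  obtain ⟨x, -, y, -, hxy⟩ := exists_eq_ι_mul_ι_of_mul_self_eq_zero (IsNoetherian.noetherian U)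
    (F.β_mem c) (F.β_mul_β c c)
  obtain ⟨X, -, Y, -, hXY⟩ := exists_ι_mul_ι_add_eq (U := ⊤) (x := x) (y := y) (x' := w)
    (y' := F.f c) trivial trivial trivial trivial (by
      rw [← hxy, ← mul_assoc, (commute_of_mem_map_sq (F.β_mem c) _).eq, mul_assoc, hβf, mul_zero])
  have hmem := F.mem c
  have hne := F.ne_zero c hc
  rw [hxy, hXY] at hmem hne
  obtain ⟨W, hW, hv, -⟩ := exists_mem_theta hmem hne
  exact ⟨W, hW, hv⟩

theorem eq_of_mem_theta_of_finite [FiniteDimensional ℂ V] (hΘ : (theta A).Finite)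
    {W W' : Submodule ℂ V} (hW : W ∈ theta A) (hW' : W' ∈ theta A) {v w : V}
    (hvw : LinearIndependent ℂ ![v, w]) (hle : Submodule.span ℂ {v, w} ≤ W)
    (hle' : Submodule.span ℂ {v, w} ≤ W') : W = W' := by
  by_contra hne
  obtain ⟨x, hx, hx'⟩ := SetLike.not_le_iff_exists.mp fun h ↦
    hne (Submodule.eq_of_le_of_finrank_eq h (hW.1.trans hW'.1.symm))
  obtain ⟨y, hy', hy⟩ := SetLike.not_le_iff_exists.mp fun h ↦
    hne (Submodule.eq_of_le_of_finrank_eq h (hW'.1.trans hW.1.symm)).symm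
  have hv : v ∈ Submodule.span ℂ {v, w} := Submodule.subset_span (by simp)
  have hw : w ∈ Submodule.span ℂ {v, w} := Submodule.subset_span (by simp)
  have hmem (t : ℂ) : ι ℂ v * (ι ℂ w * ι ℂ (x + t • y)) ∈ A := by
    rw [map_add, map_smul, mul_add, mul_add, mul_smul_comm, mul_smul_comm]
    exact add_mem (mul_mem_of_mem_theta hW (hle hv) (hle hw) hx)
      (A.smul_mem t (mul_mem_of_mem_theta hW' (hle' hv) (hle' hw) hy'))
  have hne₀ (t : ℂ) : ι ℂ v * (ι ℂ w * ι ℂ (x + t • y)) ≠ 0 :=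
    ι_mul_ι_mul_ι_ne_zero_of_notMem_span hvw fun h ↦
      hx' ((Submodule.add_mem_iff_left _ (W'.smul_mem t hy')).mp (hle' h))
  choose P hP hvP hwP hxyP using fun t ↦ exists_mem_theta (hmem t) (hne₀ t)
  refine Set.infinite_of_injective_forall_mem (f := P) (fun s t hst ↦ ?_) hP hΘ
  by_contra hst₀
  have hyP : y ∈ P s := by
    have hsub := sub_mem (hxyP s) (hst ▸ hxyP t)
    rwa [add_sub_add_left_eq_sub, ← sub_smul, Submodule.smul_mem_iff _ (sub_ne_zero.mpr hst₀)]
      at hsub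
  have hxP : x ∈ P s := (Submodule.add_mem_iff_left _ ((P s).smul_mem s hyP)).mp (hxyP s)
  have hWP : W ≤ P s := by
    rw [← span_pair_sup_span_singleton_eq hW.1 hvw hle hx fun h ↦ hx' (hle' h)]
    exact sup_le (Submodule.span_le.mpr (Set.pair_subset (hvP s) (hwP s)))
      ((Submodule.span_singleton_le_iff_mem _ _).mpr hxP)
  exact hy (Submodule.eq_of_le_of_finrank_eq hWP (hW.1.trans (hP s).1.symm) ▸ hyP)

end Theta

section ThirdType

variable {V : Type*} [AddCommGroup V] [Module ℂ V] {A : Submodule ℂ (ExteriorAlgebra ℂ V)}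
  {U W : Submodule ℂ V} {v w : V}

/-- The subspace of the vectors `u` with `u ∧ τ = 0`. -/
def annihilatingVectors (τ : ExteriorAlgebra ℂ V) : Submodule ℂ V :=
  LinearMap.ker (LinearMap.mulRight ℂ τ ∘ₗ ι ℂ)

theorem mem_annihilatingVectors {τ : ExteriorAlgebra ℂ V} {u : V} :
    u ∈ annihilatingVectors τ ↔ ι ℂ u * τ = 0 := Iff.rfl

theorem ι_mul_ι_mul_ι_mem_wedge2V {x y : V} (hx : x ∈ W) (hy : y ∈ W) (z : V) :
    ι ℂ x * (ι ℂ y * ι ℂ z) ∈ wedge2V W :=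
  Submodule.subset_span ⟨x, hx, y, hy, z, (mul_assoc _ _ _).symm⟩

theorem exists_ne_zero_le_annihilatingVectors [FiniteDimensional ℂ V] (hW : W ∈ theta A) :
    ∃ η ∈ A ⊓ wedge2V W, η ≠ 0 ∧ W ≤ annihilatingVectors η := by
  set e := finBasisOfFinrankEq ℂ W hW.1
  have he : LinearIndependent ℂ fun i ↦ (e i : V) :=
    e.linearIndependent.map' W.subtype W.ker_subtype
  have hη : ιMulti ℂ 3 (fun i ↦ (e i : V)) = ι ℂ (e 0 : V) * (ι ℂ (e 1 : V) * ι ℂ (e 2 : V)) := by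
    simp [ιMulti_apply, Matrix.vecTail]
  refine ⟨ιMulti ℂ 3 fun i ↦ (e i : V), ⟨?_, ?_⟩, ιMulti_ne_zero_iff.mpr he, fun u hu ↦ ?_⟩
  · exact hη ▸ mul_mem_of_mem_theta hW (e 0).2 (e 1).2 (e 2).2
  · exact hη ▸ ι_mul_ι_mul_ι_mem_wedge2V (e 0).2 (e 1).2 _
  · have hcons : ιMulti ℂ 4 (Fin.cons u fun i ↦ (e i : V)) =
        ι ℂ u * ιMulti ℂ 3 fun i ↦ (e i : V) := ιMulti_succ_apply _
    refine mem_annihilatingVectors.mpr (hcons ▸ not_not.mp (mt ιMulti_ne_zero_iff.mp fun h ↦ ?_))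
    have hle := le_finrank_of_linearIndependent_of_mem h (S := W)
      (Fin.forall_fin_succ.mpr ⟨hu, fun i ↦ (e i).2⟩)
    rw [hW.1] at hle
    lia

theorem subsingleton_setOf_annihilated_line [FiniteDimensional ℂ V] (hW : W ∈ theta A)
    (hlt : finrank ℂ ↥(A ⊓ wedge2V W) < 3) :
    {L : Submodule ℂ V | finrank ℂ L = 1 ∧
      ∃ τ ∈ A ⊓ wedge2V W, W ⊓ annihilatingVectors τ = L}.Subsingleton := by
  rintro L ⟨hL, τ, hτ, rfl⟩ M ⟨hM, σ, hσ, rfl⟩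
  by_contra hne
  obtain ⟨x, ⟨hxW, hxτ⟩, hxσ⟩ := SetLike.not_le_iff_exists.mp fun h ↦
    hne (Submodule.eq_of_le_of_finrank_eq h (hL.trans hM.symm))
  obtain ⟨y, ⟨hyW, hyσ⟩, hyτ⟩ := SetLike.not_le_iff_exists.mp fun h ↦
    hne (Submodule.eq_of_le_of_finrank_eq h (hM.trans hL.symm)).symm
  replace hxτ : ι ℂ x * τ = 0 := hxτ
  replace hyσ : ι ℂ y * σ = 0 := hyσ
  replace hxσ : ι ℂ x * σ ≠ 0 := fun h ↦ hxσ ⟨hxW, h⟩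
  replace hyτ : ι ℂ y * τ ≠ 0 := fun h ↦ hyτ ⟨hyW, h⟩
  obtain ⟨η, hη, hη₀, hWη⟩ := exists_ne_zero_le_annihilatingVectors hW
  have hxη : ι ℂ x * η = 0 := hWη hxW
  have hyη : ι ℂ y * η = 0 := hWη hyW
  refine hlt.not_ge (le_finrank_of_linearIndependent_of_mem (e := ![η, τ, σ]) ?_
    (by simpa [Fin.forall_fin_succ] using ⟨hη, hτ, hσ⟩))
  refine Fintype.linearIndependent_iff.mpr fun r hr ↦ ?_
  simp only [Fin.sum_univ_three, Matrix.cons_val] at hr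
  have hr₁ : r 1 = 0 := by
    simpa [mul_add, hyη, hyσ, hyτ] using congrArg (ι ℂ y * ·) hr
  have hr₂ : r 2 = 0 := by
    simpa [mul_add, hxη, hxτ, hxσ] using congrArg (ι ℂ x * ·) hr
  have hr₀ : r 0 = 0 := by simpa [hr₁, hr₂, hη₀] using hr
  simp [Fin.forall_fin_succ, hr₀, hr₁, hr₂]

theorem mem_of_ι_mul_ι_mul_ι_mem (huniq : ∀ W' ∈ theta A, v ∈ W' → W' = W) {x y : V}
    (hA : ι ℂ v * (ι ℂ x * ι ℂ y) ∈ A) (h₀ : ι ℂ v * (ι ℂ x * ι ℂ y) ≠ 0) : x ∈ W ∧ y ∈ W := by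
  obtain ⟨W', hW', hv, hx, hy⟩ := exists_mem_theta hA h₀
  rw [← huniq W' hW' hv]
  exact ⟨hx, hy⟩

namespace TangentFamily

variable (F : TangentFamily A U v w)
include F

theorem exists_linearIndependent_pair (huniq : ∀ W' ∈ theta A, v ∈ W' → W' = W)
    {x : V} (hx : U ⊓ W = Submodule.span ℂ {x}) :
    ∃ c₁ c₂, LinearIndependent ℂ ![F.β c₁, F.β c₂] := by
  have hker : finrank ℂ (LinearMap.ker F.β) ≤ 1 := by
    have hmem (c : LinearMap.ker F.β) : F.f c ∈ Submodule.span ℂ {x} := by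
      obtain ⟨c, hc : F.β c = 0⟩ := c
      by_cases hc₀ : c = 0
      · simp [hc₀]
      have hA := F.mem c
      have hne := F.ne_zero c hc₀
      rw [hc, zero_add] at hA hne
      exact hx ▸ ⟨F.f_mem c, (mem_of_ι_mul_ι_mul_ι_mem huniq hA hne).2⟩
    refine (LinearMap.finrank_le_finrank_of_injective (f := (F.f ∘ₗ (LinearMap.ker
      F.β).subtype).codRestrict _ hmem) ?_).trans ((finrank_span_le_card {x}).trans_eq (by simp))
    refine (injective_iff_map_eq_zero _).mpr fun c hc ↦ by_contra fun hc₀ ↦ ?_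
    refine F.ne_zero c (by simpa using hc₀) ?_
    rw [LinearMap.mem_ker.mp c.2, show F.f c = 0 from congrArg Subtype.val hc]
    simp
  have hrank := F.β.finrank_range_add_finrank_ker
  rw [finrank_fin_fun] at hrank
  obtain ⟨_, ⟨c₁, rfl⟩, _, ⟨c₂, rfl⟩, h⟩ :=
    exists_linearIndependent_pair_of_one_lt_finrank_submodule (S := F.β.range) (by lia)
  exact ⟨c₁, c₂, h⟩

theorem mem_of_sub_smul_mem (huniq : ∀ W' ∈ theta A, v ∈ W' → W' = W)
    (hle : Submodule.span ℂ {v, w} ≤ W) {x : V} (hx : ι ℂ v * (ι ℂ w * ι ℂ x) ∈ A) {a g : V}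
    {c : Fin 3 → ℂ} (hβ : F.β c = ι ℂ a * ι ℂ g) (hβ₀ : F.β c ≠ 0) {s : ℂ}
    (hf : F.f c - s • g ∈ Submodule.span ℂ {a, x}) : a ∈ W := by
  obtain ⟨p, q, hpq⟩ := Submodule.mem_span_pair.mp hf
  have hfc : F.f c - q • x = s • g + p • a := by
    rw [sub_eq_iff_eq_add, add_assoc, hpq, add_sub_cancel]
  have hfactor : ι ℂ v * (ι ℂ (a + s • w) * ι ℂ (g - p • w)) =
      ι ℂ v * (F.β c + ι ℂ w * ι ℂ (F.f c - q • x)) := by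
    rw [hβ, hfc]
    simp only [map_add, map_sub, map_smul, add_mul, mul_add, mul_sub, smul_mul_assoc,
      mul_smul_comm, ι_sq_zero, ι_mul_ι_swap a w, mul_neg, smul_zero, mul_zero]
    module
  have hmem : ι ℂ v * (ι ℂ (a + s • w) * ι ℂ (g - p • w)) ∈ A := by
    have hsub := sub_mem (F.mem c) (A.smul_mem q hx)
    rw [hfactor]
    simpa [mul_sub, mul_add, add_sub_assoc] using hsub
  have hne : ι ℂ v * (ι ℂ (a + s • w) * ι ℂ (g - p • w)) ≠ 0 := fun h ↦
    hβ₀ (eq_zero_of_ι_mul_add_ι_mul_eq_zero F.linearIndependent F.isCompl.disjoint (F.β_mem c) _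
      (hfactor ▸ h))
  have hw : w ∈ W := hle (Submodule.subset_span (by simp))
  exact (Submodule.add_mem_iff_left _ (W.smul_mem s hw)).mp
    (mem_of_ι_mul_ι_mul_ι_mem huniq hmem hne).1

theorem linearIndependent_triple {x : V} (hxU : x ∈ U) (hx₀ : x ≠ 0) {c c' : Fin 3 → ℂ}
    (hind : LinearIndependent ℂ ![F.β c, F.β c']) :
    LinearIndependent ℂ ![ι ℂ v * (ι ℂ w * ι ℂ x), ι ℂ v * (F.β c + ι ℂ w * ι ℂ (F.f c)),
      ι ℂ v * (F.β c' + ι ℂ w * ι ℂ (F.f c'))] := by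
  refine Fintype.linearIndependent_iff.mpr fun r hr ↦ ?_
  simp only [Fin.sum_univ_three, Matrix.cons_val] at hr
  have hβ : r 1 • F.β c + r 2 • F.β c' = 0 := by
    refine eq_zero_of_ι_mul_add_ι_mul_eq_zero F.linearIndependent F.isCompl.disjoint
      (add_mem (Submodule.smul_mem _ _ (F.β_mem c)) (Submodule.smul_mem _ _ (F.β_mem c')))
      (ι ℂ (r 0 • x + r 1 • F.f c + r 2 • F.f c')) ?_
    rw [← hr]
    simp only [map_add, map_smul, mul_add, mul_smul_comm]
    module
  obtain ⟨hr₁, hr₂⟩ := LinearIndependent.pair_iff.mp hind _ _ hβ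
  have hη : ι ℂ v * (ι ℂ w * ι ℂ x) ≠ 0 :=
    ι_mul_ι_mul_ι_ne_zero_of_notMem_span F.linearIndependent fun h ↦
      hx₀ (Submodule.disjoint_def.mp F.isCompl.disjoint x h hxU)
  have hr₀ : r 0 = 0 := by simpa [hr₁, hr₂, hη] using hr
  simp [Fin.forall_fin_succ, hr₀, hr₁, hr₂]

theorem three_le_finrank_inf_wedge2V [FiniteDimensional ℂ V]
    (hle : Submodule.span ℂ {v, w} ≤ W) {x : V} (hxU : x ∈ U) (hx₀ : x ≠ 0)
    (hx : ι ℂ v * (ι ℂ w * ι ℂ x) ∈ A) {a b b' : V} (ha : a ∈ W) {c c' : Fin 3 → ℂ}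
    (hc : F.β c = ι ℂ a * ι ℂ b) (hc' : F.β c' = ι ℂ a * ι ℂ b')
    (hind : LinearIndependent ℂ ![F.β c, F.β c']) : 3 ≤ finrank ℂ ↥(A ⊓ wedge2V W) := by
  have hv : v ∈ W := hle (Submodule.subset_span (by simp))
  have hw : w ∈ W := hle (Submodule.subset_span (by simp))
  have hwedge (y z : V) : ι ℂ v * (ι ℂ a * ι ℂ y + ι ℂ w * ι ℂ z) ∈ wedge2V W := by
    rw [mul_add]
    exact add_mem (ι_mul_ι_mul_ι_mem_wedge2V hv ha y) (ι_mul_ι_mul_ι_mem_wedge2V hv hw z)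
  refine le_finrank_of_linearIndependent_of_mem (F.linearIndependent_triple hxU hx₀ hind)
    (Fin.forall_fin_succ.mpr ⟨⟨hx, ι_mul_ι_mul_ι_mem_wedge2V hv hw x⟩,
      Fin.forall_fin_succ.mpr ⟨⟨F.mem c, ?_⟩, Fin.forall_fin_succ.mpr ⟨⟨F.mem c', ?_⟩, nofun⟩⟩⟩)
  · exact hc ▸ hwedge b (F.f c)
  · exact hc' ▸ hwedge b' (F.f c')

theorem inf_annihilatingVectors_eq {x : V} (hxU : x ∈ U)
    (hW : Submodule.span ℂ {v, w} ⊔ Submodule.span ℂ {x} = W) {a : V} (ha : a ∈ U)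
    (hax : LinearIndependent ℂ ![a, x]) {c : Fin 3 → ℂ} (hβ : F.β c = ι ℂ a * ι ℂ x)
    (hf : F.f c ∉ Submodule.span ℂ {a, x}) :
    W ⊓ annihilatingVectors (ι ℂ v * (F.β c + ι ℂ w * ι ℂ (F.f c))) = Submodule.span ℂ {v} := by
  have hv : v ∈ W := hW ▸ Submodule.mem_sup_left (Submodule.subset_span (by simp))
  refine le_antisymm ?_ ((Submodule.span_singleton_le_iff_mem _ _).mpr
    ⟨hv, mem_annihilatingVectors.mpr (ι_mul_ι_mul_self _ _)⟩)
  rintro u ⟨huW, hu⟩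
  rw [SetLike.mem_coe, mem_annihilatingVectors, hβ] at hu
  rw [← hW] at huW
  obtain ⟨_, hvw, _, hux, rfl⟩ := Submodule.mem_sup.mp huW
  obtain ⟨p, q, rfl⟩ := Submodule.mem_span_pair.mp hvw
  obtain ⟨r, rfl⟩ := Submodule.mem_span_singleton.mp hux
  have hprod : ι ℂ v * (ι ℂ w * (-q • (ι ℂ a * ι ℂ x) + r • (ι ℂ x * ι ℂ (F.f c)))) = 0 := by
    rw [← hu]
    simp only [map_add, map_smul, add_mul, mul_add, smul_mul_assoc, mul_smul_comm,
      ι_mul_ι_mul_self, ι_mul_ι_mul_swap x v, ι_mul_ι_mul_swap w v, ι_mul_ι_mul_swap x w,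
      ι_mul_ι_mul_swap x a, ι_sq_zero, mul_neg, mul_zero]
    module
  have hsum := eq_zero_of_ι_mul_ι_mul_eq_zero F.linearIndependent F.isCompl.disjoint
    (add_mem (Submodule.smul_mem _ (-q) (ι_mul_ι_mem_map_sq ha hxU))
      (Submodule.smul_mem _ r (ι_mul_ι_mem_map_sq hxU (F.f_mem c)))) hprod
  have hr : r = 0 := by
    simpa [mul_add, ι_mul_ι_mul_self, ι_mul_ι_mul_ι_ne_zero_of_notMem_span hax hf] using
      congrArg (ι ℂ a * ·) hsum
  have hq : q = 0 := by
    simpa [hr, ι_mul_ι_ne_zero_iff.mpr hax] using hsum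
  simp [hr, hq, Submodule.mem_span_singleton]

theorem exists_inf_annihilatingVectors_eq_of_β_eq (huniq : ∀ W' ∈ theta A, v ∈ W' → W' = W)
    {x : V} (hxU : x ∈ U) (hx₀ : x ≠ 0)
    (hW : Submodule.span ℂ {v, w} ⊔ Submodule.span ℂ {x} = W)
    (hx : ι ℂ v * (ι ℂ w * ι ℂ x) ∈ A) {a : V} (ha : a ∈ U) (haW : a ∉ W) {c : Fin 3 → ℂ}
    (hβ : F.β c = ι ℂ a * ι ℂ x) :
    ∃ τ ∈ A ⊓ wedge2V W, W ⊓ annihilatingVectors τ = Submodule.span ℂ {v} := by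
  have hle : Submodule.span ℂ {v, w} ≤ W := hW ▸ le_sup_left
  have hxW : x ∈ W := hW ▸ Submodule.mem_sup_right (Submodule.mem_span_singleton_self x)
  have hv : v ∈ W := hle (Submodule.subset_span (by simp))
  have hw : w ∈ W := hle (Submodule.subset_span (by simp))
  have hax : LinearIndependent ℂ ![a, x] := LinearIndependent.pair_symm_iff.mp <|
    (LinearIndependent.pair_iff' hx₀).mpr fun r h ↦ haW (h ▸ W.smul_mem r hxW)
  have hβ₀ : F.β c ≠ 0 := hβ ▸ ι_mul_ι_ne_zero_iff.mpr hax
  have hf : F.f c ∉ Submodule.span ℂ {a, x} := fun h ↦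
    haW (F.mem_of_sub_smul_mem huniq hle hx hβ hβ₀ (s := 0) (by rwa [zero_smul, sub_zero]))
  refine ⟨_, ⟨F.mem c, ?_⟩, F.inf_annihilatingVectors_eq hxU hW ha hax hβ hf⟩
  rw [hβ, ι_mul_ι_swap, ← mul_neg, ← map_neg, mul_add]
  exact add_mem (ι_mul_ι_mul_ι_mem_wedge2V hv hxW _) (ι_mul_ι_mul_ι_mem_wedge2V hv hw _)

theorem exists_inf_annihilatingVectors_eq [FiniteDimensional ℂ V] (hU : finrank ℂ U ≤ 4)
    (huniq : ∀ W' ∈ theta A, v ∈ W' → W' = W) {x : V} (hxU : x ∈ U) (hx₀ : x ≠ 0)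
    (hW : Submodule.span ℂ {v, w} ⊔ Submodule.span ℂ {x} = W)
    (hx : ι ℂ v * (ι ℂ w * ι ℂ x) ∈ A) {a b b' : V} (ha : a ∈ U) (haW : a ∉ W) (hb : b ∈ U)
    (hb' : b' ∈ U) {c c' : Fin 3 → ℂ} (hc : F.β c = ι ℂ a * ι ℂ b)
    (hc' : F.β c' = ι ℂ a * ι ℂ b') (hind : LinearIndependent ℂ ![F.β c, F.β c']) :
    ∃ τ ∈ A ⊓ wedge2V W, W ⊓ annihilatingVectors τ = Submodule.span ℂ {v} := by
  set g : (Fin 2 → ℂ) →ₗ[ℂ] V := Fintype.linearCombination ℂ ![b, b']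
  set φ : (Fin 2 → ℂ) →ₗ[ℂ] (Fin 3 → ℂ) := Fintype.linearCombination ℂ ![c, c']
  have hβ (y : Fin 2 → ℂ) : F.β (φ y) = ι ℂ a * ι ℂ (g y) := by
    simp [φ, g, Fintype.linearCombination_apply, Fin.sum_univ_two, hc, hc', mul_add]
  by_cases hmem : x ∈ g.range ⊔ Submodule.span ℂ {a}
  · obtain ⟨_, ⟨y, rfl⟩, _, ht, hsum⟩ := Submodule.mem_sup.mp hmem
    obtain ⟨t, rfl⟩ := Submodule.mem_span_singleton.mp ht
    refine F.exists_inf_annihilatingVectors_eq_of_β_eq huniq hxU hx₀ hW hx ha haW (c := φ y) ?_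
    rw [hβ, ← hsum, map_add, map_smul, mul_add, mul_smul_comm, ι_sq_zero, smul_zero, add_zero]
  have hinj : Function.Injective (F.β ∘ₗ φ) := by
    refine (injective_iff_map_eq_zero _).mpr fun y hy ↦ ?_
    have hy₀ := Fintype.linearIndependent_iff.mp hind y (by
      simpa [φ, Fintype.linearCombination_apply, Fin.sum_univ_two] using hy)
    exact funext hy₀
  have hrank : finrank ℂ ↥(g.range ⊔ Submodule.span ℂ {a}) = 3 := by
    have hcomp : F.β ∘ₗ φ = LinearMap.mulLeft ℂ (ι ℂ a) ∘ₗ ι ℂ ∘ₗ g := LinearMap.ext hβ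
    rw [finrank_range_sup_span_singleton (hcomp ▸ hinj), finrank_fin_fun]
  have hspan : g.range ⊔ Submodule.span ℂ {a, x} = U := by
    rw [Submodule.span_insert, ← sup_assoc]
    refine Submodule.eq_of_le_of_finrank_le (sup_le (sup_le ?_ ?_) ?_) ?_
    · rw [Fintype.range_linearCombination, Matrix.range_cons_cons_empty]
      exact Submodule.span_le.mpr (Set.pair_subset hb hb')
    · exact (Submodule.span_singleton_le_iff_mem _ _).mpr ha
    · exact (Submodule.span_singleton_le_iff_mem _ _).mpr hxU
    · rwa [Submodule.finrank_sup_span_singleton hmem, hrank]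
  obtain ⟨y, hy, s, hs⟩ := exists_ne_zero_sub_smul_mem (f := F.f ∘ₗ φ) (g := g)
    (N := Submodule.span ℂ {a, x}) (by rw [hspan]; rintro _ ⟨y, rfl⟩; exact F.f_mem _)
  have hle : Submodule.span ℂ {v, w} ≤ W := hW ▸ le_sup_left
  exact absurd (F.mem_of_sub_smul_mem huniq hle hx (hβ y)
    (fun h ↦ hy (hinj (h.trans (map_zero _).symm))) hs) haW

end TangentFamily

theorem IsTangentDirection.three_le_finrank_or_exists [FiniteDimensional ℂ V]
    (hV : finrank ℂ V ≤ 6) (h : IsTangentDirection A v w) (hW : W ∈ theta A) (hv : v ∈ W)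
    (hw : w ∈ W) (huniq : ∀ W' ∈ theta A, v ∈ W' → W' = W) :
    3 ≤ finrank ℂ ↥(A ⊓ wedge2V W) ∨
      ∃ τ ∈ A ⊓ wedge2V W, W ⊓ annihilatingVectors τ = Submodule.span ℂ {v} := by
  obtain ⟨U, hU⟩ := Submodule.exists_isCompl (Submodule.span ℂ {v, w})
  obtain ⟨F⟩ := h.nonempty_tangentFamily hU
  have hU₄ : finrank ℂ U ≤ 4 := by
    have := finrank_add_two_of_isCompl_span_pair h.1 hU
    lia
  have hle : Submodule.span ℂ {v, w} ≤ W := Submodule.span_le.mpr (Set.pair_subset hv hw)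
  obtain ⟨x, hx₀, hUW, hxW⟩ := exists_span_singleton_eq_inf h.1 hU hW.1 hle
  have hx : x ∈ U ⊓ W := hUW ▸ Submodule.mem_span_singleton_self x
  have hxA := mul_mem_of_mem_theta hW hv hw hx.2
  obtain ⟨c, c', hind⟩ := F.exists_linearIndependent_pair huniq hUW
  obtain ⟨a, ha, b, hb, b', hb', hc, hc'⟩ := exists_common_factor_of_isotropic
    (IsNoetherian.noetherian U) (F.β_mem c) (F.β_mem c') (F.β_mul_β c c) (F.β_mul_β c c')
    (F.β_mul_β c' c')
  by_cases haW : a ∈ W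
  · exact .inl (F.three_le_finrank_inf_wedge2V hle hx.1 hx₀ hxA haW hc hc' hind)
  · exact .inr (F.exists_inf_annihilatingVectors_eq hU₄ huniq hx.1 hx₀ hxW hxA ha haW hb hb' hc hc'
      hind)

end ThirdType

section Counting

variable {V : Type*} [AddCommGroup V] [Module ℂ V] [FiniteDimensional ℂ V]
  {A : Submodule ℂ (ExteriorAlgebra ℂ V)} {W W' : Submodule ℂ V}

theorem finrank_inf_le_one_of_finite_theta (hΘ : (theta A).Finite) (hW : W ∈ theta A)
    (hW' : W' ∈ theta A) (hne : W ≠ W') : finrank ℂ ↥(W ⊓ W') ≤ 1 := by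
  by_contra! hlt
  obtain ⟨v, ⟨hv, hv'⟩, w, ⟨hw, hw'⟩, hvw⟩ :=
    exists_linearIndependent_pair_of_one_lt_finrank_submodule hlt
  exact hne (eq_of_mem_theta_of_finite hΘ hW hW' hvw
    (Submodule.span_le.mpr (Set.pair_subset hv hw))
    (Submodule.span_le.mpr (Set.pair_subset hv' hw')))

theorem IsTangentDirection.three_le_finrank_inf_vWedge2 {v w : V} (h : IsTangentDirection A v w) :
    3 ≤ finrank ℂ ↥(A ⊓ vWedge2 v) := by
  obtain ⟨-, κ, hκ, hA, hLI, -⟩ := h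
  exact le_finrank_of_linearIndependent_of_mem hLI fun i ↦ ⟨hA i, κ i, hκ i, rfl⟩

theorem finite_setOf_isTangentDirection_of_mem_theta (hV : finrank ℂ V ≤ 6)
    (hΘ : (theta A).Finite) (hW : W ∈ theta A) (hlt : finrank ℂ ↥(A ⊓ wedge2V W) < 3) :
    ((fun v ↦ Submodule.span ℂ {v}) ''
      {v | v ∈ W ∧ ∃ w ∈ W, IsTangentDirection A v w}).Finite := by
  have hmeet : (⋃ W' ∈ theta A \ {W},
      {L : Submodule ℂ V | finrank ℂ L = 1 ∧ L ≤ W ⊓ W'}).Finite :=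
    hΘ.sdiff.biUnion fun W' hW' ↦ (subsingleton_setOf_line_le
      (finrank_inf_le_one_of_finite_theta hΘ hW hW'.1 (Ne.symm hW'.2))).finite
  refine (hmeet.union (subsingleton_setOf_annihilated_line hW hlt).finite).subset ?_
  rintro _ ⟨v, ⟨hv, w, hw, h⟩, rfl⟩
  have hline : finrank ℂ (Submodule.span ℂ {v}) = 1 := finrank_span_singleton (h.1.ne_zero 0)
  by_cases huniq : ∀ W' ∈ theta A, v ∈ W' → W' = W
  · exact .inr ⟨hline, (h.three_le_finrank_or_exists hV hW hv hw huniq).resolve_left hlt.not_ge⟩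
  · push Not at huniq
    obtain ⟨W', hW', hv', hne⟩ := huniq
    exact .inl (Set.mem_biUnion ⟨hW', hne⟩
      ⟨hline, (Submodule.span_singleton_le_iff_mem _ _).mpr ⟨hv, hv'⟩⟩)

theorem finite_setOf_line_of_mem_theta (hV : finrank ℂ V ≤ 6)
    {vol : ExteriorAlgebra ℂ V →ₗ[ℂ] ℂ} (hvol : Function.Injective fun x : ⋀[ℂ]^6 V ↦ vol x)
    (hA : ∀ α ∈ A, ∀ β ∈ A, vol (α * β) = 0) (hΘ : (theta A).Finite) (hW : W ∈ theta A)
    (hlt : finrank ℂ ↥(A ⊓ wedge2V W) < 3) :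
    ((fun v ↦ Submodule.span ℂ {v}) ''
      {v | v ∈ W ∧ v ≠ 0 ∧ 3 ≤ finrank ℂ ↥(A ⊓ vWedge2 v)}).Finite :=
  not_not.mp fun hinf ↦ infinite_setOf_isTangentDirection hvol hA W hinf
    (finite_setOf_isTangentDirection_of_mem_theta hV hΘ hW hlt)

end Counting

theorem stmt_7_general {V : Type*} [AddCommGroup V] [Module ℂ V] [FiniteDimensional ℂ V]
    (hV : finrank ℂ V ≤ 6) (vol : ExteriorAlgebra ℂ V →ₗ[ℂ] ℂ)
    (hvol : Function.Injective fun x : ⋀[ℂ]^6 V ↦ vol x)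
    (A : Submodule ℂ (ExteriorAlgebra ℂ V)) (hA : ∀ α ∈ A, ∀ β ∈ A, vol (α * β) = 0)
    (hY : {L : Submodule ℂ V | ∃ v : V, v ≠ 0 ∧ L = Submodule.span ℂ {v} ∧
      3 ≤ finrank ℂ ↥(A ⊓ vWedge2 v)}.Infinite) :
    (theta A).Infinite ∨ ∃ W ∈ theta A, 3 ≤ finrank ℂ ↥(A ⊓ wedge2V W) := by
  by_contra! ⟨hΘ, hlt⟩
  have hinf := infinite_setOf_isTangentDirection hvol hA ⊤ <| hY.mono <| by
    rintro _ ⟨v, hv, rfl, h⟩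
    exact ⟨v, ⟨trivial, hv, h⟩, rfl⟩
  refine hinf ((hΘ.biUnion fun W hW ↦
    finite_setOf_line_of_mem_theta hV hvol hA hΘ hW (hlt W hW)).subset ?_)
  rintro _ ⟨v, ⟨-, w, -, h⟩, rfl⟩
  obtain ⟨W, hW, hv⟩ := exists_mem_theta_of_isTangentDirection hV h
  exact Set.mem_biUnion hW ⟨v, ⟨hv, h.1.ne_zero 0, h.three_le_finrank_inf_vWedge2⟩, rfl⟩

/-- Let `V` be a 6-dimensional complex vector space and `A ⊆ ⋀³V` a
Lagrangian subspace (for the symplectic form `ω(α,β) = vol(α∧β)`).  If the set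
`Y_A[3]` of lines `ℂv ⊆ V` with `dim(A ∩ (v∧⋀²V)) ≥ 3` is infinite, then either `Θ_A` is
infinite, or there exists `W ∈ Θ_A` with `dim(A ∩ (⋀²W∧V)) ≥ 3`. -/
theorem stmt_7 {V : Type*} [AddCommGroup V] [Module ℂ V] [FiniteDimensional ℂ V]
    (hV : finrank ℂ V = 6)
    (vol : ExteriorAlgebra ℂ V →ₗ[ℂ] ℂ)
    (hvol : Function.Bijective fun x : ⋀[ℂ]^6 V => vol x)
    (A : Submodule ℂ (ExteriorAlgebra ℂ V))
    (hA3 : A ≤ ⋀[ℂ]^3 V) (hA10 : finrank ℂ A = 10)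
    (hLag : ∀ α ∈ A, ∀ β ∈ A, vol (α * β) = 0)
    (hY3 : {L : Submodule ℂ V | ∃ v : V, v ≠ 0 ∧ L = Submodule.span ℂ {v} ∧
      3 ≤ finrank ℂ ↥(A ⊓ vWedge2 v)}.Infinite) :
    {W : Submodule ℂ V | finrank ℂ W = 3 ∧ wedge3 W ≤ A}.Infinite ∨
      ∃ W : Submodule ℂ V, (finrank ℂ W = 3 ∧ wedge3 W ≤ A) ∧
        3 ≤ finrank ℂ ↥(A ⊓ wedge2V W) :=
  stmt_7_general hV.le vol hvol.injective A hLag hY3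
end
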